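/- Let m ≥ 2 and let Φ : ℕ → (1,∞) be any function with Φ(n) → ∞ as n → ∞; set log B = liminf_{n→∞} (log Φ(n))/n and log b = liminf_{n→∞} (log log Φ(n))/n. Let F_m(Φ) be the set of irrational x ∈ [0,1) such that Π_{k=1}^m a_{n+k−1}(x) ≥ Φ(n) for infinitely many n ∈ ℕ and Π_{k=1}^{m−1} a_{n+k−1}(x) < Φ(n) for all sufficiently large n ∈ ℕ. If 1 < B < ∞ then dim_H F_m(Φ) = inf{ s ≥ 0 : lim_{n→∞} (1/n)·log( Σ_{(a_1,…,a_n)∈ℕ^n} B^{−n·g_m(s)} · q_n(a_1,…,a_n)^{−2s} ) ≤ 0 }, where g_1(s) = s and g_m(s) = s·g_{m−1}(s)/(1 − s + g_{m−1}(s)) for m ≥ 2; and if B = ∞ then dim_H F_m(Φ) = 1/(1+b). -/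

import Mathlib

/-!
Throughout, digits are indexed from `0` (`dg x i = a_{i+1}(x)`), and the geometric input is
`tail_dist`: the map sending a point to its `k`-th Gauss iterate expands distances on a cylinder
of order `k` by a factor between `q_k ^ 2` and `4 q_k ^ 2`.

**Upper bounds.** A set whose `t`-dimensional Hausdorff content `HC t` vanishes has dimension at
most `t`, and content is countably subadditive, so a Borel-Cantelli argument (`HC_limsup`) applies.
Pulling back by the `n`-th iterate of the Gauss map costs a factor `Zs t n = Σ q_n ^ (-2 t)`
(`HC_preimage`). By induction on `m`, splitting according to the size of the first digit, the points
whose first `m` digits have product at least `R` have content `O(R ^ (-g_m(t)))` (`HC_Am`); this is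
where the recursion for `g_m` comes from. Hence, for finite `B`, the set of `x` with
`Π a_{n+k-1}(x) ≥ Φ(n)` has content about `B ^ (-n g_m(t)) Zs t n`, which is summable when `t`
exceeds a point of the set defining `presInf` (`upper_B`). If `B = ∞`, then a point of `F_m(Φ)` has
infinitely many digits exceeding `(product of the previous digits) ^ γ * K ^ n` for every `K`, for
`γ = 0` and for every `γ` with `1 + γ < b`; the set of such points has dimension at most
`1 / (2 + γ)` in the limit (`dimH_big_digit`).

**Lower bounds.** Both rest on a mass distribution principle for random digit sequences
(`mass_dist`). If `B = ∞` and `β > b`, let `N` be the largest nondecreasing minorant of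
`log Φ` growing at most by the factor `β` per step; it touches `log Φ` infinitely often
(`exists_minorant`). From it one builds a profile `T` for the logarithm of the partial products of
the digits (`exists_profile`) for which windows of length `m` reach `log Φ` infinitely often, windows
of length `m - 1` do not, and `T_{k+1} ≤ β T_k`. Independent digits, uniform on
`{n_k + 1, …, 2 n_k}` with `log n_k ≈ T_{k+1} - T_k`, then give dimension at least `s` whenever
`s (1 + β) < 1` (`lower_inf`).

If `B` is finite and `s` violates the pressure condition, there are `N` and finitely many words of
length `N`, carrying probabilities proportional to `q_N ^ (-2 s)`, such that each block of length `N`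
filled with one of them gains a factor larger than `B ^ (N g_m(s))` in the cylinder estimate
(`exists_words`). The accumulated gain is spent on rare special blocks, placed at positions `n` where
`Φ(n)` is at most about `B ^ n`, whose first `m` digits have sizes `Φ(n) ^ α_k`; the exponents
satisfy `Σ α_k = 1` and `(2 s - 1) Σ_{i < k} α_i + s α_k = g_m(s)` for every `k`
(`exists_exponents`), so that exactly `Φ(n) ^ g_m(s)` is needed at each of the `m` positions
(`exists_energy`, `block_scheme`). A window of length `m - 1` misses one of the large digits, hence
its product stays below `Φ` (`window_bound`). This yields `lower_B`.
-/

open Filter Topology MeasureTheory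
open scoped ENNReal NNReal

/-- The Gauss map `T(x) = 1/x - ⌊1/x⌋` (with `T 0 = 0`). -/
noncomputable def gaussMap (x : ℝ) : ℝ := if x = 0 then 0 else 1 / x - ⌊1 / x⌋

/-- The `n`-th partial quotient `a_n(x) = ⌊1 / T^[n-1] x⌋` of the continued fraction
expansion of `x` (for `n ≥ 1`). -/
noncomputable def cfA (n : ℕ) (x : ℝ) : ℕ := ⌊1 / gaussMap^[n - 1] x⌋₊

/-- The continuant `q_n(a_1, …, a_n)`, defined by `q_{-1} = 0`, `q_0 = 1`,
`q_k = a_k q_{k-1} + q_{k-2}`. -/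
def contQ (l : List ℕ) : ℕ := (l.foldl (fun p a => (p.2, a * p.2 + p.1)) (0, 1)).2

/-- The continuant numerator `p_n(a_1, …, a_n)`, defined by `p_{-1} = 1`, `p_0 = 0`,
`p_k = a_k p_{k-1} + p_{k-2}`. -/
def contP (l : List ℕ) : ℕ := (l.foldl (fun p a => (p.2, a * p.2 + p.1)) (1, 0)).2

/-- `q_n(x) = q_n(a_1(x), …, a_n(x))`. -/
noncomputable def cfQ (x : ℝ) (n : ℕ) : ℕ := contQ (List.ofFn fun i : Fin n => cfA (i + 1) x)

/-- `p_n(x) = p_n(a_1(x), …, a_n(x))`. -/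
noncomputable def cfP (x : ℝ) (n : ℕ) : ℕ := contP (List.ofFn fun i : Fin n => cfA (i + 1) x)

/-- The sum `Σ_{(a_1,…,a_n) ∈ ℕ^n} B^{-n c} · q_n(a_1,…,a_n)^{-2 s}` over all `n`-tuples
of positive integers, computed in `ℝ≥0∞`. -/
noncomputable def presSum (B c s : ℝ) (n : ℕ) : ℝ≥0∞ :=
  ∑' a : Fin n → ℕ+,
    ENNReal.ofReal (B ^ (-(n : ℝ) * c) *
      (contQ (List.ofFn fun i => (a i : ℕ)) : ℝ) ^ (-2 * s))

/-- `inf { s ≥ 0 : lim_{n→∞} (1/n) · log( Σ_{(a_1,…,a_n)∈ℕ^n} B^{-n·c(s)} q_n^{-2s} ) ≤ 0 }`,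
where the limit is required to exist (in `EReal`) and be `≤ 0`. -/
noncomputable def presInf (B : ℝ) (c : ℝ → ℝ) : ℝ :=
  sInf {s : ℝ | 0 ≤ s ∧ ∃ P : EReal, P ≤ 0 ∧
    Tendsto (fun n : ℕ => (((n : ℝ)⁻¹ : ℝ) : EReal) * ENNReal.log (presSum B (c s) s n))
      atTop (nhds P)}

/-- `g_1(s) = s` and `g_m(s) = s g_{m-1}(s) / (1 - s + g_{m-1}(s))` for `m ≥ 2`. -/
noncomputable def gW : ℕ → ℝ → ℝ
  | 0, s => s
  | 1, s => s
  | (m + 2), s => s * gW (m + 1) s / (1 - s + gW (m + 1) s)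

/-- The set `F_m(Φ)` of irrational `x ∈ [0,1)` with `Π_{k=1}^m a_{n+k-1}(x) ≥ Φ(n)` for
infinitely many `n` and `Π_{k=1}^{m-1} a_{n+k-1}(x) < Φ(n)` for all sufficiently large `n`. -/
def Fm (m : ℕ) (Φ : ℕ → ℝ) : Set ℝ :=
  {x | x ∈ Set.Ico (0 : ℝ) 1 ∧ Irrational x ∧
    (∃ᶠ n in atTop, Φ n ≤ ∏ k ∈ Finset.range m, (cfA (n + k) x : ℝ)) ∧
    (∀ᶠ n in atTop, ∏ k ∈ Finset.range (m - 1), (cfA (n + k) x : ℝ) < Φ n)}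

/-! ### Continuants -/

/-- The continuant `q_n` of the first `n` terms of a sequence of digits. -/
def qq (a : ℕ → ℕ) : ℕ → ℕ
  | 0 => 1
  | 1 => a 0
  | (n + 2) => a (n + 1) * qq a (n + 1) + qq a n

/-- The previous continuant `q_{n-1}`, with `q_{-1} = 0`. -/
def qp (a : ℕ → ℕ) : ℕ → ℕ
  | 0 => 0
  | (n + 1) => qq a n

lemma qp_succ (a : ℕ → ℕ) (n : ℕ) : qp a (n + 1) = qq a n := rfl

lemma qq_succ (a : ℕ → ℕ) (n : ℕ) : qq a (n + 1) = a n * qq a n + qp a n := by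
  cases n <;> simp [qq, qp]

lemma foldl_range (a : ℕ → ℕ) (n : ℕ) :
    ((List.range n).map a).foldl (fun p a => (p.2, a * p.2 + p.1)) (0, 1) = (qp a n, qq a n) := by
  induction n with
  | zero => simp [qq, qp]
  | succ n ih =>
    rw [List.range_succ, List.map_append, List.foldl_append, ih]
    simp [qq_succ, qp]

lemma contQ_range (a : ℕ → ℕ) (n : ℕ) : contQ ((List.range n).map a) = qq a n := by
  rw [contQ, foldl_range]

lemma contQ_ofFn {n : ℕ} (w : Fin n → ℕ) (a : ℕ → ℕ) (h : ∀ i : Fin n, w i = a i) :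
    contQ (List.ofFn w) = qq a n := by
  rw [← contQ_range]
  congr 1
  apply List.ext_getElem
  · simp
  · intro i h1 h2
    simp at h1
    simp [h ⟨i, h1⟩]

lemma qq_congr {a b : ℕ → ℕ} {n : ℕ} (h : ∀ i < n, a i = b i) : qq a n = qq b n := by
  rw [← contQ_range, ← contQ_range]
  congr 1
  apply List.map_congr_left
  intro i hi
  exact h i (List.mem_range.1 hi)

lemma qp_congr {a b : ℕ → ℕ} {n : ℕ} (h : ∀ i < n, a i = b i) : qp a n = qp b n := by
  cases n with
  | zero => rfl
  | succ n => exact qq_congr fun i hi => h i (by omega)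

lemma qq_pos {a : ℕ → ℕ} (h : ∀ i, 1 ≤ a i) (n : ℕ) : 1 ≤ qq a n := by
  induction n with
  | zero => simp [qq]
  | succ n ih =>
    rw [qq_succ]
    nlinarith [h n]

lemma qp_le {a : ℕ → ℕ} (h : ∀ i, 1 ≤ a i) (n : ℕ) : qp a n ≤ qq a n := by
  cases n with
  | zero => simp [qp]
  | succ n =>
    rw [qq_succ]
    simp only [qp]
    nlinarith [h n, qq_pos h n]

lemma qq_mono {a : ℕ → ℕ} (h : ∀ i, 1 ≤ a i) : Monotone (qq a) :=
  monotone_nat_of_le_succ fun n => qp_le h (n + 1)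

lemma le_qq {a : ℕ → ℕ} (h : ∀ i, 1 ≤ a i) (n : ℕ) : n ≤ qq a n := by
  induction n using Nat.strong_induction_on with
  | _ n ih =>
    match n with
    | 0 => simp
    | 1 => exact qq_pos h 1
    | (k + 2) =>
      have h1 := ih (k + 1) (by omega)
      have h2 := qq_pos h k
      simp only [qq]
      nlinarith [h (k + 1)]

lemma prod_le_qq {a : ℕ → ℕ} (n : ℕ) : ∏ i ∈ Finset.range n, a i ≤ qq a n := by
  induction n with
  | zero => simp [qq]
  | succ n ih =>
    rw [qq_succ, Finset.prod_range_succ]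
    nlinarith

lemma qq_le_prod {a : ℕ → ℕ} (h : ∀ i, 1 ≤ a i) (n : ℕ) :
    qq a n ≤ 2 ^ n * ∏ i ∈ Finset.range n, a i := by
  induction n with
  | zero => simp [qq]
  | succ n ih =>
    rw [qq_succ, Finset.prod_range_succ]
    have := qp_le h n
    calc a n * qq a n + qp a n ≤ a n * qq a n + a n * qq a n := by nlinarith [h n]
      _ = 2 * a n * qq a n := by ring
      _ ≤ 2 * a n * (2 ^ n * ∏ i ∈ Finset.range n, a i) := by gcongr
      _ = _ := by ring

/-- Continuants depend linearly on the initial state of the recursion. -/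
lemma foldl_state (l : List ℕ) (u v : ℕ) :
    (l.foldl (fun p a => (p.2, a * p.2 + p.1)) (u, v)) =
      (u * (l.foldl (fun p a => (p.2, a * p.2 + p.1)) (1, 0)).1 +
        v * (l.foldl (fun p a => (p.2, a * p.2 + p.1)) (0, 1)).1,
       u * (l.foldl (fun p a => (p.2, a * p.2 + p.1)) (1, 0)).2 +
        v * (l.foldl (fun p a => (p.2, a * p.2 + p.1)) (0, 1)).2) := by
  induction l using List.reverseRecOn with
  | nil => simp
  | append_singleton l a ih =>
    simp only [List.foldl_append, List.foldl_cons, List.foldl_nil]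
    rw [ih]
    ext <;> simp
    ring

lemma contQ_append (l₁ l₂ : List ℕ) :
    contQ (l₁ ++ l₂) = (l₁.foldl (fun p a => (p.2, a * p.2 + p.1)) (0, 1)).1 * contP l₂ +
      contQ l₁ * contQ l₂ := by
  unfold contQ contP
  rw [List.foldl_append]
  set p := List.foldl (fun (p : ℕ × ℕ) a => (p.2, a * p.2 + p.1)) (0, 1) l₁ with hp
  rw [show p = (p.1, p.2) from rfl, foldl_state]

lemma contP_le_contQ (l : List ℕ) (h : ∀ a ∈ l, 1 ≤ a) : contP l ≤ contQ l := by
  cases l with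
  | nil => simp [contP, contQ]
  | cons a l =>
    unfold contP contQ
    have key : ∀ (l : List ℕ) (p q : ℕ × ℕ), p.1 ≤ q.1 → p.2 ≤ q.2 →
        (l.foldl (fun p a => (p.2, a * p.2 + p.1)) p).2 ≤
        (l.foldl (fun p a => (p.2, a * p.2 + p.1)) q).2 := by
      intro l
      induction l with
      | nil => intro p q _ h; simpa using h
      | cons b l ih =>
        intro p q h1 h2
        simp only [List.foldl_cons]
        apply ih
        · exact h2
        · simp only
          gcongr
    simp only [List.foldl_cons]
    apply key
    · simp
    · have := h a (by simp)
      simpa using this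

lemma foldl_fst_le (l : List ℕ) (h : ∀ a ∈ l, 1 ≤ a) :
    (l.foldl (fun p a => (p.2, a * p.2 + p.1)) (0, 1)).1 ≤ contQ l := by
  unfold contQ
  cases l using List.reverseRecOn with
  | nil => simp
  | append_singleton l a =>
    have := h a (by simp)
    simp only [List.foldl_append, List.foldl_cons, List.foldl_nil]
    nlinarith

lemma contQ_mul_le (l₁ l₂ : List ℕ) : contQ l₁ * contQ l₂ ≤ contQ (l₁ ++ l₂) := by
  rw [contQ_append]; omega

lemma contQ_append_le (l₁ l₂ : List ℕ) (h₁ : ∀ a ∈ l₁, 1 ≤ a) (h₂ : ∀ a ∈ l₂, 1 ≤ a) :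
    contQ (l₁ ++ l₂) ≤ 2 * (contQ l₁ * contQ l₂) := by
  rw [contQ_append]
  have := Nat.mul_le_mul (foldl_fst_le l₁ h₁) (contP_le_contQ l₂ h₂)
  omega

lemma contQ_pos (l : List ℕ) (h : ∀ a ∈ l, 1 ≤ a) : 1 ≤ contQ l := by
  induction l using List.reverseRecOn with
  | nil => simp [contQ]
  | append_singleton l a ih =>
    have h1 := ih fun b hb => h b (by simp [hb])
    have h2 := h a (by simp)
    have h3 : contQ [a] = a := by simp [contQ]
    have := contQ_mul_le l [a]
    rw [h3] at this
    nlinarith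

lemma list_range_map_add (a : ℕ → ℕ) (n k : ℕ) :
    (List.range (n + k)).map a =
      (List.range n).map a ++ (List.range k).map (fun i => a (n + i)) := by
  rw [List.range_add, List.map_append, List.map_map]; rfl

lemma qq_mul_le (a : ℕ → ℕ) (n k : ℕ) :
    qq a n * qq (fun i => a (n + i)) k ≤ qq a (n + k) := by
  simp only [← contQ_range]
  rw [list_range_map_add]
  exact contQ_mul_le _ _

lemma qq_add_le {a : ℕ → ℕ} (h : ∀ i, 1 ≤ a i) (n k : ℕ) :
    qq a (n + k) ≤ 2 * (qq a n * qq (fun i => a (n + i)) k) := by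
  simp only [← contQ_range]
  rw [list_range_map_add]
  apply contQ_append_le
  · simp only [List.mem_map]; rintro _ ⟨i, _, rfl⟩; exact h i
  · simp only [List.mem_map]; rintro _ ⟨i, _, rfl⟩; exact h _

/-! ### Tails of continued fractions -/

/-- `t` is a sequence of complete tails of the continued fraction with digits `a`:
`t k = 1 / (a k + t (k+1))` with all `t k ∈ (0,1)`. -/
def IsTail (a : ℕ → ℕ) (t : ℕ → ℝ) : Prop :=
  ∀ k, 0 < t k ∧ t k < 1 ∧ t k * (a k + t (k + 1)) = 1

lemma IsTail.one_le {a : ℕ → ℕ} {t : ℕ → ℝ} (h : IsTail a t) (k : ℕ) : 1 ≤ a k := by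
  by_contra hk
  have h0 : a k = 0 := by omega
  have := (h k).2.2
  rw [h0] at this
  simp at this
  nlinarith [h k, h (k + 1)]

/-- The distance of two points sharing their first `k` digits, in terms of their `k`-th tails: the
Möbius map `y ↦ (p_k + p_{k-1} y) / (q_k + q_{k-1} y)` has determinant `±1`. -/
lemma tail_dist (a b : ℕ → ℕ) (t u : ℕ → ℝ) (ht : IsTail a t) (hu : IsTail b u) (k : ℕ)
    (hab : ∀ i < k, a i = b i) :
    (t 0 - u 0) * ((qq a k + qp a k * t k) * (qq a k + qp a k * u k)) =
      (-1) ^ k * (t k - u k) := by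
  induction k with
  | zero => simp [qq, qp]
  | succ k ih =>
    have ih := ih fun i hi => hab i (by omega)
    have h1 := (ht k).2.2
    have h2 := (hu k).2.2
    rw [← hab k (by omega)] at h2
    have e1 : (qq a (k + 1) + qp a (k + 1) * t (k + 1) : ℝ) =
        (qq a k + qp a k * t k) * (a k + t (k + 1)) := by
      rw [qq_succ, qp_succ]; push_cast
      linear_combination (-(qp a k : ℝ)) * h1
    have e2 : (qq a (k + 1) + qp a (k + 1) * u (k + 1) : ℝ) =
        (qq a k + qp a k * u k) * (a k + u (k + 1)) := by
      rw [qq_succ, qp_succ]; push_cast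
      linear_combination (-(qp a k : ℝ)) * h2
    rw [e1, e2]
    have : (t 0 - u 0) * ((qq a k + qp a k * t k) * (a k + t (k + 1)) *
        ((qq a k + qp a k * u k) * (a k + u (k + 1)))) =
        ((-1) ^ k * (t k - u k)) * ((a k + t (k + 1)) * (a k + u (k + 1))) := by
      rw [← ih]; ring
    rw [this, pow_succ]
    linear_combination ((-1) ^ k * (a k + u (k + 1))) * h1 - ((-1) ^ k * (a k + t (k + 1))) * h2

lemma tail_dist_le {a b : ℕ → ℕ} {t u : ℕ → ℝ} (ht : IsTail a t) (hu : IsTail b u) {k : ℕ}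
    (hab : ∀ i < k, a i = b i) :
    |t 0 - u 0| * (qq a k : ℝ) ^ 2 ≤ |t k - u k| := by
  have h := congrArg abs (tail_dist a b t u ht hu k hab)
  rw [abs_mul, abs_mul ((-1) ^ k), abs_pow, abs_neg, abs_one, one_pow, one_mul] at h
  rw [← h]
  have hq : (0 : ℝ) ≤ qq a k := by positivity
  have h1 : (0 : ℝ) ≤ qp a k * t k := by have := (ht k).1; positivity
  have h2 : (0 : ℝ) ≤ qp a k * u k := by have := (hu k).1; positivity
  rw [abs_of_nonneg (mul_nonneg (add_nonneg hq h1) (add_nonneg hq h2))]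
  refine mul_le_mul_of_nonneg_left ?_ (abs_nonneg _)
  nlinarith

lemma le_tail_dist {a b : ℕ → ℕ} {t u : ℕ → ℝ} (ht : IsTail a t) (hu : IsTail b u) {k : ℕ}
    (hab : ∀ i < k, a i = b i) :
    |t k - u k| ≤ |t 0 - u 0| * (4 * (qq a k : ℝ) ^ 2) := by
  have h := congrArg abs (tail_dist a b t u ht hu k hab)
  rw [abs_mul, abs_mul ((-1) ^ k), abs_pow, abs_neg, abs_one, one_pow, one_mul] at h
  rw [← h]
  have hq : (0 : ℝ) ≤ qq a k := by positivity
  have hqp : (qp a k : ℝ) ≤ qq a k := by exact_mod_cast qp_le ht.one_le k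
  have h1 : (0 : ℝ) ≤ qp a k * t k := by have := (ht k).1; positivity
  have h2 : (0 : ℝ) ≤ qp a k * u k := by have := (hu k).1; positivity
  have h3 : (qp a k * t k : ℝ) ≤ qq a k := by
    have := (ht k); nlinarith [(Nat.cast_nonneg (qp a k) : (0:ℝ) ≤ _)]
  have h4 : (qp a k * u k : ℝ) ≤ qq a k := by
    have := (hu k); nlinarith [(Nat.cast_nonneg (qp a k) : (0:ℝ) ≤ _)]
  rw [abs_of_nonneg (mul_nonneg (add_nonneg hq h1) (add_nonneg hq h2))]
  refine mul_le_mul_of_nonneg_left ?_ (abs_nonneg _)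
  calc (qq a k + qp a k * t k : ℝ) * (qq a k + qp a k * u k)
      ≤ (qq a k + qq a k) * (qq a k + qq a k) := by gcongr
    _ = _ := by ring

lemma IsTail.irrational {a : ℕ → ℕ} {t : ℕ → ℝ} (h : IsTail a t) : Irrational (t 0) := by
  have key : ∀ d : ℕ, ∀ k : ℕ, ∀ r : ℤ, 0 < d → t k * d = r → False := by
    intro d
    induction d using Nat.strong_induction_on with
    | _ d ih =>
      intro k r hd hr
      have hk := h k
      have hd' : (0 : ℝ) < d := by exact_mod_cast hd
      have hr0 : (0 : ℝ) < r := by rw [← hr]; exact mul_pos hk.1 hd'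
      have hr1 : (r : ℝ) < d := by rw [← hr]; nlinarith
      have hr0' : 0 < r := by exact_mod_cast hr0
      have hr1' : r < d := by exact_mod_cast hr1
      lift r to ℕ using hr0'.le
      refine ih r (by exact_mod_cast hr1') (k + 1) (d - a k * r) (by exact_mod_cast hr0') ?_
      push_cast at hr ⊢
      rw [← hr]
      linear_combination (d : ℝ) * hk.2.2
  rw [irrational_iff_ne_rational]
  intro p q hq heq
  have hq' : 0 < q.natAbs := by omega
  have : (q.natAbs : ℝ) = |(q : ℝ)| := by simp [Nat.cast_natAbs]
  rcases le_total 0 q with h0 | h0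
  · refine key q.natAbs 0 p hq' ?_
    rw [this, heq, abs_of_nonneg (by exact_mod_cast h0)]
    field_simp
  · refine key q.natAbs 0 (-p) hq' ?_
    rw [this, heq, abs_of_nonpos (by exact_mod_cast h0)]
    push_cast
    field_simp

lemma IsTail.floor {a : ℕ → ℕ} {t : ℕ → ℝ} (h : IsTail a t) (k : ℕ) : ⌊1 / t k⌋₊ = a k := by
  have hk := h k
  have : 1 / t k = a k + t (k + 1) := by
    rw [div_eq_iff hk.1.ne']; linarith [hk.2.2]
  rw [this, Nat.floor_eq_iff (by have := (h (k + 1)).1; positivity)]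
  have := h (k + 1)
  constructor <;> linarith

lemma IsTail.gauss {a : ℕ → ℕ} {t : ℕ → ℝ} (h : IsTail a t) (k : ℕ) :
    gaussMap (t k) = t (k + 1) := by
  have hk := h k
  have e : 1 / t k = a k + t (k + 1) := by
    rw [div_eq_iff hk.1.ne']; linarith [hk.2.2]
  have e2 : ⌊1 / t k⌋ = (a k : ℤ) := by
    rw [← h.floor k, Int.natCast_floor_eq_floor]
    have := hk.1; positivity
  rw [gaussMap, if_neg hk.1.ne', e2, e]
  simp

lemma IsTail.iterate {a : ℕ → ℕ} {t : ℕ → ℝ} (h : IsTail a t) (k : ℕ) :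
    gaussMap^[k] (t 0) = t k := by
  induction k with
  | zero => rfl
  | succ k ih => rw [Function.iterate_succ_apply', ih, h.gauss]

lemma IsTail.cfA {a : ℕ → ℕ} {t : ℕ → ℝ} (h : IsTail a t) (k : ℕ) : cfA (k + 1) (t 0) = a k := by
  rw [_root_.cfA, Nat.add_sub_cancel, h.iterate, h.floor]

lemma IsTail.shift {a : ℕ → ℕ} {t : ℕ → ℝ} (h : IsTail a t) (n : ℕ) :
    IsTail (fun i => a (n + i)) (fun i => t (n + i)) := fun k => h (n + k)

/-- The digits of `x`, indexed from `0`. -/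
noncomputable def dg (x : ℝ) (i : ℕ) : ℕ := cfA (i + 1) x

/-- Irrational points of the unit interval. -/
def Irr : Set ℝ := {x | 0 < x ∧ x < 1 ∧ Irrational x}

lemma gauss_mem {x : ℝ} (hx : x ∈ Irr) : gaussMap x ∈ Irr := by
  obtain ⟨h0, h1, h2⟩ := hx
  have hirr : Irrational (1 / x - ⌊1 / x⌋) := by
    rw [one_div]
    exact (irrational_inv_iff.2 h2).sub_intCast _
  rw [Irr, gaussMap, if_neg h0.ne']
  have e : 1 / x - ⌊1 / x⌋ = Int.fract (1 / x) := rfl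
  refine ⟨lt_of_le_of_ne (e ▸ Int.fract_nonneg _) ?_, e ▸ Int.fract_lt_one _, hirr⟩
  exact hirr.ne_zero.symm

lemma isTail_orbit {x : ℝ} (hx : x ∈ Irr) : IsTail (dg x) (fun k => gaussMap^[k] x) := by
  have hm : ∀ k, gaussMap^[k] x ∈ Irr := by
    intro k
    induction k with
    | zero => exact hx
    | succ k ih => rw [Function.iterate_succ_apply']; exact gauss_mem ih
  intro k
  refine ⟨(hm k).1, (hm k).2.1, ?_⟩
  simp only [dg, cfA, Nat.add_sub_cancel, Function.iterate_succ_apply']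
  have h0 := (hm k).1
  set y := gaussMap^[k] x
  rw [gaussMap, if_neg h0.ne', natCast_floor_eq_intCast_floor (by positivity)]
  field_simp
  ring

lemma IsTail.mem_Irr {a : ℕ → ℕ} {t : ℕ → ℝ} (h : IsTail a t) : t 0 ∈ Irr :=
  ⟨(h 0).1, (h 0).2.1, h.irrational⟩

lemma IsTail.dg {a : ℕ → ℕ} {t : ℕ → ℝ} (h : IsTail a t) : dg (t 0) = a := by
  funext i; exact h.cfA i

/-- The closed cylinder of order `n` determined by the first `n` digits of `a`. -/
def cyl : ℕ → (ℕ → ℕ) → Set ℝ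
  | 0, _ => Set.Icc 0 1
  | n + 1, a => (fun y => 1 / ((a 0 : ℝ) + y)) '' cyl n (fun i => a (i + 1))

lemma cyl_zero (a : ℕ → ℕ) : cyl 0 a = Set.Icc 0 1 := rfl

lemma cyl_succ (n : ℕ) (a : ℕ → ℕ) :
    cyl (n + 1) a = (fun y => 1 / ((a 0 : ℝ) + y)) '' cyl n (fun i => a (i + 1)) := rfl

/-- Every sequence of positive digits is the digit sequence of some point: the closed cylinders are
nested, compact and nonempty, and a common point generates the tails. -/
lemma exists_tail (a : ℕ → ℕ) (h : ∀ i, 1 ≤ a i) : ∃ t, IsTail a t := by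
  have hsub : ∀ n a, (∀ i, 1 ≤ a i) → cyl n a ⊆ Set.Icc 0 1 := by
    intro n
    induction n with
    | zero => intro a _; rw [cyl_zero]
    | succ n ih =>
      intro a ha
      rw [cyl_succ]
      rintro _ ⟨y, hy, rfl⟩
      have hy' := ih _ (fun i => ha (i + 1)) hy
      have h1 : (1 : ℝ) ≤ a 0 := by exact_mod_cast ha 0
      refine ⟨by have := hy'.1; positivity, ?_⟩
      simp only
      rw [div_le_one (by linarith [hy'.1])]
      linarith [hy'.1]
  have hne : ∀ n a, (cyl n a).Nonempty := by
    intro n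
    induction n with
    | zero => intro a; rw [cyl_zero]; exact ⟨0, by simp⟩
    | succ n ih => intro a; rw [cyl_succ]; exact (ih _).image _
  have hcpt : ∀ n a, (∀ i, 1 ≤ a i) → IsCompact (cyl n a) := by
    intro n
    induction n with
    | zero => intro a _; rw [cyl_zero]; exact isCompact_Icc
    | succ n ih =>
      intro a ha
      rw [cyl_succ]
      refine (ih _ fun i => ha (i + 1)).image_of_continuousOn ?_
      apply ContinuousOn.div continuousOn_const (by fun_prop)
      intro y hy
      have hy' := hsub _ _ (fun i => ha (i + 1)) hy
      have h1 : (1 : ℝ) ≤ a 0 := by exact_mod_cast ha 0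
      linarith [hy'.1]
  have hanti : ∀ n a, (∀ i, 1 ≤ a i) → cyl (n + 1) a ⊆ cyl n a := by
    intro n
    induction n with
    | zero => intro a ha; rw [cyl_zero]; exact hsub 1 a ha
    | succ n ih =>
      intro a ha
      rw [cyl_succ, cyl_succ]
      exact Set.image_mono (ih _ fun i => ha (i + 1))
  obtain ⟨x, hx⟩ := IsCompact.nonempty_iInter_of_sequence_nonempty_isCompact_isClosed
    (fun n => cyl n a) (fun n => hanti n a h) (fun n => hne n a) (hcpt 0 a h)
    (fun n => (hcpt n a h).isClosed)
  rw [Set.mem_iInter] at hx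
  let t : ℕ → ℝ := fun n => Nat.rec x (fun k y => 1 / y - a k) n
  have tS : ∀ k, t (k + 1) = 1 / t k - a k := fun k => rfl
  have ht : ∀ k, ∀ n, t k ∈ cyl n (fun i => a (k + i)) := by
    intro k
    induction k with
    | zero => intro n; simp only [zero_add]; exact hx n
    | succ k ih =>
      intro n
      have := ih (n + 1)
      rw [cyl_succ, add_zero] at this
      obtain ⟨y, hy, hyt⟩ := this
      have hy' := hsub _ _ (fun i => h _) hy
      have h1 : (1 : ℝ) ≤ a k := by exact_mod_cast h k
      have : t (k + 1) = y := by
        rw [tS, ← hyt]; simp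
      rw [this]
      convert hy using 2
      funext i; congr 1; ring
  have hI : ∀ k, t k ∈ Set.Icc (0 : ℝ) 1 := fun k => by have := ht k 0; rwa [cyl_zero] at this
  have hpos : ∀ k, 0 < t k := by
    intro k
    have := ht k 1
    rw [cyl_succ, cyl_zero, add_zero] at this
    obtain ⟨y, hy, hyt⟩ := this
    have h1 : (1 : ℝ) ≤ a k := by exact_mod_cast h k
    rw [← hyt]
    have := hy.1
    positivity
  have heq : ∀ k, t k * (a k + t (k + 1)) = 1 := by
    intro k
    have := hpos k
    rw [tS]; field_simp; ring
  refine ⟨t, fun k => ⟨hpos k, ?_, heq k⟩⟩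
  have h1 : (1 : ℝ) ≤ a k := by exact_mod_cast h k
  nlinarith [heq k, hpos k, hpos (k + 1)]

open Classical in
/-- The sequence of tails of the continued fraction with digits `a`. -/
noncomputable def tl (a : ℕ → ℕ) : ℕ → ℝ :=
  if h : ∀ i, 1 ≤ a i then (exists_tail a h).choose else 0

/-- The value of the continued fraction with digits `a`. -/
noncomputable def cfv (a : ℕ → ℕ) : ℝ := tl a 0

lemma tl_isTail {a : ℕ → ℕ} (h : ∀ i, 1 ≤ a i) : IsTail a (tl a) := by
  rw [tl, dif_pos h]; exact (exists_tail a h).choose_spec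

lemma dg_cfv {a : ℕ → ℕ} (h : ∀ i, 1 ≤ a i) : dg (cfv a) = a := (tl_isTail h).dg

lemma cfv_mem {a : ℕ → ℕ} (h : ∀ i, 1 ≤ a i) : cfv a ∈ Irr := (tl_isTail h).mem_Irr

lemma dg_one_le {x : ℝ} (hx : x ∈ Irr) (i : ℕ) : 1 ≤ dg x i := (isTail_orbit hx).one_le i

/-! ### Hausdorff content -/

/-- The `t`-dimensional Hausdorff content (no size restriction on the covers). -/
noncomputable def HC (t : ℝ) (ht : 0 < t) : OuterMeasure ℝ :=
  OuterMeasure.ofFunction (fun s => Metric.ediam s ^ t) (by simp [ht])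

lemma HC_le (t : ℝ) (ht : 0 < t) (s : Set ℝ) : HC t ht s ≤ Metric.ediam s ^ t :=
  OuterMeasure.ofFunction_le s

/-- A cover with small total content consists of small sets, so vanishing content forces vanishing
Hausdorff measure. -/
lemma dimH_le_of_HC_zero (t : ℝ) (ht : 0 < t) (A : Set ℝ) (h : HC t ht A = 0) :
    dimH A ≤ ENNReal.ofReal t := by
  have : Measure.hausdorffMeasure t A = 0 := by
    rw [Measure.hausdorffMeasure_apply]
    simp only [ENNReal.iSup_eq_zero]
    intro r hr
    rw [← nonpos_iff_eq_zero]
    refine le_of_forall_gt fun ε hε => ?_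
    set δ := min ε (r ^ t) with hδ
    have hδ0 : 0 < δ := lt_min hε (ENNReal.rpow_pos_of_nonneg hr ht.le)
    have h2 : HC t ht A < δ := by rw [h]; exact hδ0
    rw [HC, OuterMeasure.ofFunction_apply] at h2
    simp only [iInf_lt_iff] at h2
    obtain ⟨U, hU, hlt⟩ := h2
    simp only [iInf_lt_iff]
    refine ⟨U, hU, fun n => ?_, ?_⟩
    · have h3 : Metric.ediam (U n) ^ t ≤ r ^ t :=
        (ENNReal.le_tsum n).trans (hlt.le.trans (min_le_right _ _))
      exact (ENNReal.rpow_le_rpow_iff ht).1 h3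
    · refine lt_of_le_of_lt (ENNReal.tsum_le_tsum fun n => ?_) (hlt.trans_le (min_le_left _ _))
      exact iSup_le fun _ => le_rfl
  have h3 := dimH_le_of_hausdorffMeasure_ne_top (s := A) (d := t.toNNReal)
    (by rw [Real.coe_toNNReal _ ht.le, this]; simp)
  exact h3

/-- The branch of the inverse of `gaussMap^[n]` on a cylinder of order `n` contracts distances by
`q_n ^ (-2)` at least. -/
lemma HC_cyl (t : ℝ) (ht : 0 < t) (a : ℕ → ℕ) (n : ℕ) (A : Set ℝ) :
    HC t ht {x | x ∈ Irr ∧ (∀ i < n, dg x i = a i) ∧ gaussMap^[n] x ∈ A} ≤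
      ENNReal.ofReal ((qq a n : ℝ) ^ (-2 * t)) * HC t ht A := by
  rcases Set.eq_empty_or_nonempty
    {x | x ∈ Irr ∧ (∀ i < n, dg x i = a i) ∧ gaussMap^[n] x ∈ A} with he | ⟨z, hz⟩
  · rw [he]; simp
  have hq : 0 < (qq a n : ℝ) := by
    have := qq_pos (dg_one_le hz.1) n
    rw [qq_congr hz.2.1] at this
    exact_mod_cast this
  set c := ENNReal.ofReal ((qq a n : ℝ) ^ (2 * t)) with hc
  have hc' : ENNReal.ofReal ((qq a n : ℝ) ^ (-2 * t)) = c⁻¹ := by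
    rw [hc, ← ENNReal.ofReal_inv_of_pos (by positivity), ← Real.rpow_neg hq.le]
    congr 2; ring
  have hc0 : c ≠ 0 := by rw [hc]; simp; positivity
  have hct : c ≠ ⊤ := ENNReal.ofReal_ne_top
  rw [hc', mul_comm, ← div_eq_mul_inv, ENNReal.le_div_iff_mul_le (Or.inl hc0) (Or.inl hct)]
  conv_rhs => rw [HC, OuterMeasure.ofFunction_apply]
  refine le_iInf₂ fun U hU => ?_
  have hsub : {x | x ∈ Irr ∧ (∀ i < n, dg x i = a i) ∧ gaussMap^[n] x ∈ A} ⊆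
      ⋃ j, {x | x ∈ Irr ∧ (∀ i < n, dg x i = a i) ∧ gaussMap^[n] x ∈ U j} := by
    rintro x ⟨h1, h2, h3⟩
    obtain ⟨j, hj⟩ := Set.mem_iUnion.1 (hU h3)
    exact Set.mem_iUnion.2 ⟨j, h1, h2, hj⟩
  refine (mul_le_mul_left ((measure_mono hsub).trans (measure_iUnion_le _)) c).trans ?_
  rw [← ENNReal.tsum_mul_right]
  refine ENNReal.tsum_le_tsum fun j => ?_
  refine (mul_le_mul_left (HC_le t ht _) c).trans ?_
  have hce : c = (ENNReal.ofReal ((qq a n : ℝ) ^ 2)) ^ t := by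
    rw [hc, ENNReal.ofReal_rpow_of_pos (by positivity), ← Real.rpow_natCast, ← Real.rpow_mul hq.le]
    norm_num
  rw [hce, ← ENNReal.mul_rpow_of_nonneg _ _ ht.le]
  refine ENNReal.rpow_le_rpow ?_ ht.le
  have hq2 : ENNReal.ofReal ((qq a n : ℝ) ^ 2) ≠ 0 := (ENNReal.ofReal_pos.2 (by positivity)).ne'
  rw [← ENNReal.le_div_iff_mul_le (Or.inl hq2) (Or.inl ENNReal.ofReal_ne_top)]
  refine Metric.ediam_le fun x hx y hy => ?_
  rw [ENNReal.le_div_iff_mul_le (Or.inl hq2) (Or.inl ENNReal.ofReal_ne_top)]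
  refine le_trans ?_ (Metric.edist_le_ediam_of_mem hx.2.2 hy.2.2)
  rw [edist_dist, edist_dist, ← ENNReal.ofReal_mul dist_nonneg, Real.dist_eq, Real.dist_eq]
  apply ENNReal.ofReal_le_ofReal
  have := tail_dist_le (isTail_orbit hx.1) (isTail_orbit hy.1) (k := n)
    fun i hi => (hx.2.1 i hi).trans (hy.2.1 i hi).symm
  rw [qq_congr hx.2.1] at this
  simpa using this

/-- The unnormalised pressure sum `Σ q_n ^ (-2 * s)`. -/
noncomputable def Zs (s : ℝ) (n : ℕ) : ℝ≥0∞ :=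
  ∑' a : Fin n → ℕ+, ENNReal.ofReal ((contQ (List.ofFn fun i => (a i : ℕ)) : ℝ) ^ (-2 * s))

/-- A finite word extended by ones. -/
def ext1 {n : ℕ} (w : Fin n → ℕ+) (i : ℕ) : ℕ := if h : i < n then w ⟨i, h⟩ else 1

lemma ext1_pos {n : ℕ} (w : Fin n → ℕ+) (i : ℕ) : 1 ≤ ext1 w i := by
  unfold ext1; split_ifs
  · exact (w _).2
  · exact le_rfl

lemma ext1_apply {n : ℕ} (w : Fin n → ℕ+) (i : Fin n) : ext1 w i = w i := by
  simp [ext1]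

lemma contQ_ext1 {n : ℕ} (w : Fin n → ℕ+) :
    contQ (List.ofFn fun i => (w i : ℕ)) = qq (ext1 w) n :=
  contQ_ofFn _ _ fun i => (ext1_apply w i).symm

lemma Irr_cover (n : ℕ) (A : Set ℝ) : {x | x ∈ Irr ∧ gaussMap^[n] x ∈ A} ⊆
    ⋃ w : Fin n → ℕ+, {x | x ∈ Irr ∧ (∀ i < n, dg x i = ext1 w i) ∧ gaussMap^[n] x ∈ A} := by
  rintro x ⟨h1, h2⟩
  refine Set.mem_iUnion.2 ⟨fun i => ⟨dg x i, dg_one_le h1 i⟩, h1, fun i hi => ?_, h2⟩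
  simp [ext1, hi]

lemma HC_preimage (t : ℝ) (ht : 0 < t) (n : ℕ) (A : Set ℝ) :
    HC t ht {x | x ∈ Irr ∧ gaussMap^[n] x ∈ A} ≤ Zs t n * HC t ht A := by
  refine (measure_mono (Irr_cover n A)).trans ((measure_iUnion_le _).trans ?_)
  rw [Zs, ← ENNReal.tsum_mul_right]
  refine ENNReal.tsum_le_tsum fun w => ?_
  rw [contQ_ext1]
  exact HC_cyl t ht _ n A

lemma HC_Icc (t : ℝ) (ht : 0 < t) (r : ℝ) (A : Set ℝ) (hA : A ⊆ Set.Icc 0 r) :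
    HC t ht A ≤ ENNReal.ofReal r ^ t := by
  refine (HC_le t ht A).trans (ENNReal.rpow_le_rpow ?_ ht.le)
  refine (Metric.ediam_mono hA).trans ?_
  rw [Real.ediam_Icc, sub_zero]

/-- The Borel-Cantelli lemma for Hausdorff content. -/
lemma HC_limsup (t : ℝ) (ht : 0 < t) (A : ℕ → Set ℝ) (h : ∑' n, HC t ht (A n) ≠ ⊤) :
    HC t ht {x | ∃ᶠ n in atTop, x ∈ A n} = 0 :=
  measure_setOfPred_frequently_eq_zero h

/-! ### Pressure sums -/

lemma presSum_eq (B c s : ℝ) (hB : 0 < B) (n : ℕ) :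
    presSum B c s n = ENNReal.ofReal (B ^ (-(n : ℝ) * c)) * Zs s n := by
  rw [presSum, Zs, ← ENNReal.tsum_mul_left]
  refine tsum_congr fun w => ?_
  rw [ENNReal.ofReal_mul (by positivity)]

lemma contQ_ofFn_pos {n : ℕ} (w : Fin n → ℕ+) :
    (1 : ℝ) ≤ contQ (List.ofFn fun i => (w i : ℕ)) := by
  rw [contQ_ext1]; exact_mod_cast qq_pos (ext1_pos w) n

lemma contQ_bounds {n k : ℕ} (w : Fin n → ℕ+) (v : Fin k → ℕ+) :
    contQ (List.ofFn fun i => (w i : ℕ)) * contQ (List.ofFn fun i => (v i : ℕ)) ≤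
      contQ (List.ofFn fun i => ((Fin.append w v i : ℕ+) : ℕ)) ∧
    contQ (List.ofFn fun i => ((Fin.append w v i : ℕ+) : ℕ)) ≤
      2 * (contQ (List.ofFn fun i => (w i : ℕ)) * contQ (List.ofFn fun i => (v i : ℕ))) := by
  have e : (List.ofFn fun i => ((Fin.append w v i : ℕ+) : ℕ)) =
      (List.ofFn fun i => (w i : ℕ)) ++ (List.ofFn fun i => (v i : ℕ)) := by
    rw [← List.ofFn_fin_append]
    congr 1
    funext i
    refine Fin.addCases (fun i => ?_) (fun i => ?_) i <;> simp
  rw [e]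
  refine ⟨contQ_mul_le _ _, contQ_append_le _ _ ?_ ?_⟩
  · intro a ha
    obtain ⟨i, rfl⟩ := (List.mem_ofFn' _ _).1 ha
    exact (w i).2
  · intro a ha
    obtain ⟨i, rfl⟩ := (List.mem_ofFn' _ _).1 ha
    exact (v i).2

lemma Zs_add (s : ℝ) (n k : ℕ) : Zs s (n + k) = ∑' w : Fin n → ℕ+, ∑' v : Fin k → ℕ+,
    ENNReal.ofReal ((contQ (List.ofFn fun i => ((Fin.append w v i : ℕ+) : ℕ)) : ℝ) ^ (-2 * s)) := by
  rw [Zs, ← (Fin.appendEquiv n k).tsum_eq, ENNReal.tsum_prod']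
  rfl

lemma Zs_mul (s : ℝ) (n k : ℕ) : Zs s n * Zs s k = ∑' w : Fin n → ℕ+, ∑' v : Fin k → ℕ+,
    ENNReal.ofReal ((contQ (List.ofFn fun i => (w i : ℕ)) : ℝ) ^ (-2 * s)) *
    ENNReal.ofReal ((contQ (List.ofFn fun i => (v i : ℕ)) : ℝ) ^ (-2 * s)) := by
  rw [Zs, Zs, ← ENNReal.tsum_mul_right]
  refine tsum_congr fun w => ?_
  rw [← ENNReal.tsum_mul_left]

lemma Zs_add_le (s : ℝ) (hs : 0 ≤ s) (n k : ℕ) : Zs s (n + k) ≤ Zs s n * Zs s k := by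
  rw [Zs_add, Zs_mul]
  refine ENNReal.tsum_le_tsum fun w => ENNReal.tsum_le_tsum fun v => ?_
  have h1 := contQ_ofFn_pos w
  have h2 := contQ_ofFn_pos v
  rw [← ENNReal.ofReal_mul (by positivity), ← Real.mul_rpow (by positivity) (by positivity)]
  apply ENNReal.ofReal_le_ofReal
  refine Real.rpow_le_rpow_of_nonpos (by positivity) ?_ (by linarith)
  exact_mod_cast (contQ_bounds w v).1

lemma le_Zs_add (s : ℝ) (hs : 0 ≤ s) (n k : ℕ) :
    ENNReal.ofReal (2 ^ (-2 * s)) * (Zs s n * Zs s k) ≤ Zs s (n + k) := by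
  rw [Zs_add, Zs_mul, ← ENNReal.tsum_mul_left]
  refine ENNReal.tsum_le_tsum fun w => ?_
  rw [← ENNReal.tsum_mul_left]
  refine ENNReal.tsum_le_tsum fun v => ?_
  have h1 := contQ_ofFn_pos w
  have h2 := contQ_ofFn_pos v
  have h3 := contQ_ofFn_pos (Fin.append w v)
  rw [← ENNReal.ofReal_mul (by positivity), ← Real.mul_rpow (by positivity) (by positivity),
    ← ENNReal.ofReal_mul (by positivity), ← Real.mul_rpow (by positivity) (by positivity)]
  apply ENNReal.ofReal_le_ofReal
  refine Real.rpow_le_rpow_of_nonpos (by positivity) ?_ (by linarith)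
  exact_mod_cast (contQ_bounds w v).2

lemma Zs_lower (s : ℝ) (hs : 0 ≤ s) (n : ℕ) :
    ENNReal.ofReal (((2 : ℝ) ^ n) ^ (-2 * s)) ≤ Zs s n := by
  refine le_trans ?_ (ENNReal.le_tsum (fun _ => 1))
  rw [contQ_ext1]
  apply ENNReal.ofReal_le_ofReal
  have h1 := qq_pos (ext1_pos (fun _ : Fin n => 1)) n
  refine Real.rpow_le_rpow_of_nonpos (by positivity) ?_ (by linarith)
  have h2 := qq_le_prod (ext1_pos (fun _ : Fin n => 1)) n
  rw [Finset.prod_eq_one (fun i hi => by simp [ext1])] at h2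
  exact_mod_cast (by simpa using h2)

lemma Zs_ne_zero (s : ℝ) (hs : 0 ≤ s) (n : ℕ) : Zs s n ≠ 0 := by
  have := Zs_lower s hs n
  intro h
  rw [h] at this
  have h2 : (0 : ℝ) < ((2 : ℝ) ^ n) ^ (-2 * s) := by positivity
  exact absurd (ENNReal.ofReal_pos.2 h2) (not_lt.2 this)

lemma Zs_zero (s : ℝ) : Zs s 0 = 1 := by
  rw [Zs, tsum_fintype]; simp [contQ]

lemma Zs_one (s : ℝ) : Zs s 1 = ∑' k : ℕ, ENNReal.ofReal (((k : ℝ) + 1) ^ (-2 * s)) := by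
  rw [Zs, ← (Equiv.funUnique (Fin 1) ℕ+).symm.tsum_eq, ← Equiv.pnatEquivNat.symm.tsum_eq]
  refine tsum_congr fun k => ?_
  simp [contQ, Equiv.pnatEquivNat]

lemma Zs_ne_top (s : ℝ) (hs : 0 ≤ s) (h : Zs s 1 ≠ ⊤) (n : ℕ) : Zs s n ≠ ⊤ := by
  induction n with
  | zero => simp [Zs_zero]
  | succ n ih => exact ne_top_of_le_ne_top (ENNReal.mul_ne_top ih h) (Zs_add_le s hs n 1)

lemma Zs_one_ne_top (s : ℝ) (hs : 1 < 2 * s) : Zs s 1 ≠ ⊤ := by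
  rw [Zs_one, ← ENNReal.ofReal_tsum_of_nonneg]
  · exact ENNReal.ofReal_ne_top
  · intro n; positivity
  · have := (summable_nat_add_iff (f := fun k : ℕ => (k : ℝ) ^ (-2 * s)) 1).2
      (Real.summable_nat_rpow.2 (by linarith))
    simpa using this

/-- When the sums are finite, the limit defining the pressure exists, by Fekete's lemma for the
submultiplicative sequence `Zs s`; it is finite because of the reverse inequality `Zs_lower`. -/
lemma pres_limit (B c s : ℝ) (hB : 0 < B) (hs : 0 ≤ s) (h : Zs s 1 ≠ ⊤) :
    ∃ L : ℝ, Tendsto (fun n : ℕ => (((n : ℝ)⁻¹ : ℝ) : EReal) * ENNReal.log (presSum B c s n))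
      atTop (𝓝 (L : EReal)) ∧
      Tendsto (fun n : ℕ => Real.log (presSum B c s n).toReal / n) atTop (𝓝 L) := by
  have hpt : ∀ n, presSum B c s n ≠ ⊤ := fun n => by
    rw [presSum_eq _ _ _ hB]; exact ENNReal.mul_ne_top ENNReal.ofReal_ne_top (Zs_ne_top s hs h n)
  have hp0 : ∀ n, presSum B c s n ≠ 0 := fun n => by
    rw [presSum_eq _ _ _ hB]
    exact mul_ne_zero (ENNReal.ofReal_pos.2 (by positivity)).ne' (Zs_ne_zero s hs n)
  have hpos : ∀ n, 0 < (presSum B c s n).toReal := fun n => ENNReal.toReal_pos (hp0 n) (hpt n)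
  have hsub : Subadditive (fun n : ℕ => Real.log (presSum B c s n).toReal) := by
    intro n k
    rw [← Real.log_mul (hpos n).ne' (hpos k).ne', ← ENNReal.toReal_mul]
    refine Real.log_le_log (hpos _) (ENNReal.toReal_mono (ENNReal.mul_ne_top (hpt n) (hpt k)) ?_)
    simp only [presSum_eq _ _ _ hB]
    have : ENNReal.ofReal (B ^ (-((n + k : ℕ) : ℝ) * c)) =
        ENNReal.ofReal (B ^ (-(n : ℝ) * c)) * ENNReal.ofReal (B ^ (-(k : ℝ) * c)) := by
      rw [← ENNReal.ofReal_mul (by positivity), ← Real.rpow_add hB]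
      push_cast; congr 2; ring
    rw [this]
    calc _ ≤ ENNReal.ofReal (B ^ (-(n : ℝ) * c)) * ENNReal.ofReal (B ^ (-(k : ℝ) * c)) *
          (Zs s n * Zs s k) := by gcongr; exact Zs_add_le s hs n k
      _ = _ := by ring
  have hlow : ∀ n : ℕ, n * (-c * Real.log B - 2 * s * Real.log 2) ≤
      Real.log (presSum B c s n).toReal := by
    intro n
    have h1 : ENNReal.ofReal (B ^ (-(n : ℝ) * c) * ((2 : ℝ) ^ n) ^ (-2 * s)) ≤
        presSum B c s n := by
      rw [presSum_eq _ _ _ hB, ENNReal.ofReal_mul (by positivity)]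
      gcongr
      exact Zs_lower s hs n
    have h2 := (ENNReal.ofReal_le_iff_le_toReal (hpt n)).1 h1
    have h3 := Real.log_le_log (by positivity) h2
    rw [Real.log_mul (by positivity) (by positivity), Real.log_rpow hB,
      Real.log_rpow (by positivity), Real.log_pow] at h3
    linarith
  have hbdd : BddBelow (Set.range fun n : ℕ => Real.log (presSum B c s n).toReal / n) := by
    refine ⟨min 0 (-c * Real.log B - 2 * s * Real.log 2), ?_⟩
    rintro _ ⟨n, rfl⟩
    simp only
    rcases Nat.eq_zero_or_pos n with h0 | h0
    · subst h0; simp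
    · refine (min_le_right _ _).trans ?_
      rw [le_div_iff₀ (by exact_mod_cast h0)]
      linarith [hlow n]
  have hT := hsub.tendsto_lim hbdd
  refine ⟨hsub.lim, ?_, hT⟩
  have h2 := (continuous_coe_real_ereal.tendsto hsub.lim).comp hT
  refine h2.congr fun n => ?_
  simp only [Function.comp]
  rw [ENNReal.log_pos_real (hp0 n) (hpt n), ← EReal.coe_mul, div_eq_inv_mul]

/-- If the pressure limit is `≤ 0`, the pressure sums grow subexponentially. -/
lemma pres_mem {f : ℕ → ℝ≥0∞} {P : EReal} (hP : P ≤ 0)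
    (h : Tendsto (fun n : ℕ => (((n : ℝ)⁻¹ : ℝ) : EReal) * ENNReal.log (f n)) atTop (𝓝 P))
    (ε : ℝ) (hε : 0 < ε) : ∀ᶠ n : ℕ in atTop, f n ≤ ENNReal.ofReal (Real.exp (ε * n)) := by
  have h1 : ∀ᶠ n : ℕ in atTop, (((n : ℝ)⁻¹ : ℝ) : EReal) * ENNReal.log (f n) < (ε : EReal) :=
    h.eventually_lt_const (lt_of_le_of_lt hP (by exact_mod_cast hε))
  filter_upwards [h1, eventually_gt_atTop 0] with n hn hn0
  have hn0' : (0 : ℝ) < n := by exact_mod_cast hn0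
  rw [← ENNReal.log_le_log_iff, ENNReal.log_ofReal_of_pos (Real.exp_pos _), Real.log_exp]
  generalize ENNReal.log (f n) = x at hn
  induction x using EReal.rec with
  | bot => exact bot_le
  | coe x =>
    rw [← EReal.coe_mul, EReal.coe_lt_coe_iff, inv_mul_lt_iff₀ hn0'] at hn
    rw [EReal.coe_le_coe_iff]; linarith
  | top =>
    rw [EReal.coe_mul_top_of_pos (by positivity)] at hn
    exact absurd hn (by simp)

/-- The set defining `presInf`. -/
def presSet (B : ℝ) (c : ℝ → ℝ) : Set ℝ := {s : ℝ | 0 ≤ s ∧ ∃ P : EReal, P ≤ 0 ∧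
    Tendsto (fun n : ℕ => (((n : ℝ)⁻¹ : ℝ) : EReal) * ENNReal.log (presSum B (c s) s n))
      atTop (nhds P)}

/-- Outside `presSet`, the pressure sums take arbitrarily large values. -/
lemma pres_not_mem {B : ℝ} {c : ℝ → ℝ} (hB : 0 < B) {s : ℝ} (hs : 0 ≤ s) (hmem : s ∉ presSet B c)
    (K : ℝ) (N₀ : ℕ) : ∃ N ≥ N₀, ENNReal.ofReal K < presSum B (c s) s N := by
  by_cases h : Zs s 1 = ⊤
  · refine ⟨N₀ + 1, by omega, ?_⟩
    have h1 := le_Zs_add s hs N₀ 1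
    rw [h, ENNReal.mul_top (Zs_ne_zero s hs _),
      ENNReal.mul_top (ENNReal.ofReal_pos.2 (by positivity)).ne', top_le_iff] at h1
    rw [presSum_eq _ _ _ hB, h1, ENNReal.mul_top (ENNReal.ofReal_pos.2 (by positivity)).ne']
    exact ENNReal.ofReal_lt_top
  · obtain ⟨L, hL1, hL2⟩ := pres_limit B (c s) s hB hs h
    have hL : 0 < L := by
      by_contra hneg
      exact hmem ⟨hs, L, by exact_mod_cast not_lt.1 hneg, hL1⟩
    have h1 : ∀ᶠ n : ℕ in atTop, L / 2 < Real.log (presSum B (c s) s n).toReal / n :=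
      hL2.eventually_const_lt (by linarith)
    have h2 : Tendsto (fun n : ℕ => Real.exp (L / 2 * n)) atTop atTop :=
      Real.tendsto_exp_atTop.comp
        (tendsto_natCast_atTop_atTop.const_mul_atTop (by positivity))
    obtain ⟨N, hN, hN1, hN2, hN3⟩ := (((eventually_ge_atTop N₀).and (h1.and
      ((h2.eventually_gt_atTop K).and (eventually_gt_atTop 0)))).exists)
    refine ⟨N, hN, ?_⟩
    have hN3' : (0 : ℝ) < N := by exact_mod_cast hN3
    rw [lt_div_iff₀ hN3'] at hN1
    have hp : 0 < (presSum B (c s) s N).toReal := by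
      by_contra h0
      have h0' := le_antisymm (not_lt.1 h0) ENNReal.toReal_nonneg
      rw [h0', Real.log_zero] at hN1
      have : 0 < L / 2 * N := by positivity
      linarith
    have h3 := (Real.lt_log_iff_exp_lt hp).1 hN1
    have h4 : ENNReal.ofReal K < ENNReal.ofReal (presSum B (c s) s N).toReal :=
      (ENNReal.ofReal_lt_ofReal_iff hp).2 (hN2.trans h3)
    exact h4.trans_le ENNReal.ofReal_toReal_le

lemma snoc_ext {n : ℕ} (w : Fin n → ℕ+) (a : ℕ+) :
    (∀ i < n, ext1 (Fin.snoc (α := fun _ => ℕ+) w a) i = ext1 w i) ∧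
      ext1 (Fin.snoc (α := fun _ => ℕ+) w a) n = a := by
  constructor
  · intro i hi
    simp [ext1, hi, Fin.snoc, Nat.lt_succ_of_lt hi]
  · simp [ext1, Fin.snoc]

/-- The cylinders of order `n + 1` inside a cylinder of order `n` have total length at most that of
the latter; here `q = q_n` and `q' = q_{n-1}`. -/
lemma tele_tsum (q q' : ℝ) (hq : 0 < q) (hq' : 0 ≤ q') :
    ∑' a : ℕ+, ENNReal.ofReal (1 / ((a * q + q') * (a * q + q' + q))) ≤
      ENNReal.ofReal (1 / (q * (q + q'))) := by
  rw [← Equiv.pnatEquivNat.symm.tsum_eq]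
  refine ENNReal.tsum_le_of_sum_range_le fun N => ?_
  rw [← ENNReal.ofReal_sum_of_nonneg (fun i _ => by positivity)]
  apply ENNReal.ofReal_le_ofReal
  have : ∀ i ∈ Finset.range N, 1 / (((Equiv.pnatEquivNat.symm i : ℕ+) * q + q') *
      ((Equiv.pnatEquivNat.symm i : ℕ+) * q + q' + q)) =
      (fun i : ℕ => 1 / (q * ((i + 1) * q + q'))) i -
      (fun i : ℕ => 1 / (q * ((i + 1) * q + q'))) (i + 1) := by
    intro i _
    simp only [Equiv.pnatEquivNat, Equiv.coe_fn_symm_mk, Nat.succPNat_coe]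
    push_cast
    have h1 : 0 < ((i : ℝ) + 1) * q + q' := by positivity
    have h2 : 0 < ((i : ℝ) + 1 + 1) * q + q' := by positivity
    have h3 : ((i : ℝ) + 1) * q + q' + q ≠ 0 := by positivity
    field_simp
    ring
  rw [Finset.sum_congr rfl this, Finset.sum_range_sub']
  simp only [CharP.cast_eq_zero, zero_add, one_mul]
  rw [sub_le_iff_le_add, add_comm q' q |>.symm]
  have : 0 ≤ 1 / (q * (((N : ℝ) + 1) * q + q')) := by positivity
  linarith

/-- The cylinders of order `n` have length `1 / (q_n (q_n + q_{n-1})) ≥ q_n ^ (-2) / 2`, and their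
lengths sum to at most `1`. -/
lemma Zs_one_bound (n : ℕ) : Zs 1 n ≤ 2 := by
  have key : ∀ n : ℕ, ∑' w : Fin n → ℕ+, ENNReal.ofReal
      (1 / ((qq (ext1 w) n : ℝ) * (qq (ext1 w) n + qp (ext1 w) n))) ≤ 1 := by
    intro n
    induction n with
    | zero => rw [tsum_fintype]; simp [qq, qp]
    | succ n ih =>
      rw [← (Fin.snocEquiv (fun _ : Fin (n + 1) => ℕ+)).tsum_eq, ENNReal.tsum_prod',
        ENNReal.tsum_comm]
      refine le_trans (ENNReal.tsum_le_tsum fun w => ?_) ih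
      have hq := qq_pos (ext1_pos w) n
      refine le_trans (le_of_eq (tsum_congr fun a => ?_)) (tele_tsum (qq (ext1 w) n)
        (qp (ext1 w) n) (by exact_mod_cast hq) (by positivity))
      have h := snoc_ext w a
      simp only [Fin.snocEquiv, Equiv.coe_fn_mk]
      rw [qq_succ, qp_succ, qq_congr h.1, qp_congr h.1, h.2]
      push_cast
      rfl
  rw [Zs]
  calc _ ≤ ∑' w : Fin n → ℕ+, 2 * ENNReal.ofReal
          (1 / ((qq (ext1 w) n : ℝ) * (qq (ext1 w) n + qp (ext1 w) n))) := by
        refine ENNReal.tsum_le_tsum fun w => ?_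
        rw [contQ_ext1, show (2 : ℝ≥0∞) = ENNReal.ofReal 2 by simp,
          ← ENNReal.ofReal_mul (by norm_num)]
        apply ENNReal.ofReal_le_ofReal
        have hq : (1 : ℝ) ≤ qq (ext1 w) n := by exact_mod_cast qq_pos (ext1_pos w) n
        have hp : (qp (ext1 w) n : ℝ) ≤ qq (ext1 w) n := by exact_mod_cast qp_le (ext1_pos w) n
        have hp0 : (0 : ℝ) ≤ qp (ext1 w) n := by positivity
        rw [mul_one, Real.rpow_neg (by positivity), Real.rpow_two, mul_one_div,
          inv_eq_one_div, div_le_div_iff₀ (by positivity) (by positivity)]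
        nlinarith
    _ ≤ 2 * 1 := by rw [ENNReal.tsum_mul_left]; gcongr; exact key n
    _ = 2 := by norm_num

lemma one_mem_presSet {B : ℝ} (hB : 1 < B) {c : ℝ → ℝ} (hc : c 1 = 1) : 1 ∈ presSet B c := by
  have hB0 : 0 < B := by linarith
  obtain ⟨L, hL1, hL2⟩ := pres_limit B (c 1) 1 hB0 (by norm_num) (Zs_one_ne_top 1 (by norm_num))
  refine ⟨by norm_num, L, ?_, hL1⟩
  have : L ≤ 0 := by
    have h0 : Tendsto (fun n : ℕ => Real.log 2 / n) atTop (𝓝 0) :=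
      tendsto_const_div_atTop_nhds_zero_nat _
    refine le_of_tendsto_of_tendsto' hL2 h0 fun n => ?_
    refine div_le_div_of_nonneg_right ?_ (by positivity)
    have h1 : presSum B (c 1) 1 n ≤ 2 := by
      rw [presSum_eq _ _ _ hB0]
      calc _ ≤ 1 * Zs 1 n := by
            gcongr
            rw [ENNReal.ofReal_le_one]
            exact Real.rpow_le_one_of_one_le_of_nonpos hB.le (by rw [hc]; simp)
        _ ≤ _ := by rw [one_mul]; exact Zs_one_bound n
    have h2 := ENNReal.toReal_mono (by simp) h1
    rcases ENNReal.toReal_nonneg (a := presSum B (c 1) 1 n).eq_or_lt with h3 | h3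
    · rw [← h3, Real.log_zero]; positivity
    · exact Real.log_le_log h3 (by simpa using h2)
  exact_mod_cast this

lemma presInf_eq (B : ℝ) (c : ℝ → ℝ) : presInf B c = sInf (presSet B c) := rfl

lemma presSet_bdd (B : ℝ) (c : ℝ → ℝ) : BddBelow (presSet B c) := ⟨0, fun _ h => h.1⟩

/-! ### The functions `g_m` -/

lemma gW_succ (m : ℕ) (hm : 1 ≤ m) (s : ℝ) :
    gW (m + 1) s = s * gW m s / (1 - s + gW m s) := by
  obtain ⟨k, rfl⟩ := Nat.exists_eq_add_of_le' hm
  rfl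

lemma gW_pos (m : ℕ) (hm : 1 ≤ m) (s : ℝ) (h0 : 0 < s) (h1 : s ≤ 1) :
    0 < gW m s ∧ gW m s ≤ s := by
  induction m, hm using Nat.le_induction with
  | base => simp [gW, h0]
  | succ m hm ih =>
    rw [gW_succ m hm]
    have h2 : 0 < 1 - s + gW m s := by linarith [ih.1]
    refine ⟨div_pos (mul_pos h0 ih.1) h2, ?_⟩
    rw [div_le_iff₀ h2]
    nlinarith

lemma gW_zero (m : ℕ) (hm : 1 ≤ m) : gW m 0 = 0 := by
  induction m, hm using Nat.le_induction with
  | base => simp [gW]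
  | succ m hm ih => rw [gW_succ m hm]; simp

lemma gW_one (m : ℕ) (hm : 1 ≤ m) : gW m 1 = 1 := by
  induction m, hm using Nat.le_induction with
  | base => simp [gW]
  | succ m hm ih => rw [gW_succ m hm, ih]; simp

lemma gW_lower (m : ℕ) (hm : 1 ≤ m) (s : ℝ) (h0 : 0 < s) (h1 : s < 1) : 2 * s - 1 < gW m s := by
  induction m, hm using Nat.le_induction with
  | base => simp only [gW]; linarith
  | succ m hm ih =>
    rw [gW_succ m hm]
    have h2 : 0 < 1 - s + gW m s := by linarith [(gW_pos m hm s h0 h1.le).1]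
    rw [lt_div_iff₀ h2]
    nlinarith

lemma gW_strictMono (m : ℕ) (hm : 1 ≤ m) (s t : ℝ) (h0 : 0 ≤ s) (hst : s < t) (h1 : t ≤ 1) :
    gW m s < gW m t := by
  rcases h0.eq_or_lt with rfl | h0
  · rw [gW_zero m hm]; exact (gW_pos m hm t hst h1).1
  induction m, hm using Nat.le_induction with
  | base => simpa [gW] using hst
  | succ m hm ih =>
    rw [gW_succ m hm, gW_succ m hm]
    have hs := gW_pos m hm s h0 (by linarith)
    have ht := gW_pos m hm t (by linarith) h1
    rw [div_lt_div_iff₀ (by linarith) (by linarith)]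
    have e1 : s * gW m s * (1 - t) ≤ t * gW m t * (1 - s) := by
      have : s * gW m s ≤ t * gW m t := by nlinarith
      have h3 : 0 ≤ s * gW m s := by nlinarith
      nlinarith
    have e2 : s * (gW m s * gW m t) < t * (gW m s * gW m t) := by
      have := mul_pos hs.1 ht.1
      nlinarith
    nlinarith

/-- The recursion for `1 / g_m` is affine, which makes `s / g_m(s)` a geometric sum. -/
lemma gW_closed (m : ℕ) (hm : 1 ≤ m) (s : ℝ) (h0 : 0 < s) (h1 : s < 1) :
    gW m s * ∑ k ∈ Finset.range m, ((1 - s) / s) ^ k = s := by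
  induction m, hm using Nat.le_induction with
  | base => simp [gW]
  | succ m hm ih =>
    rw [gW_succ m hm, Finset.sum_range_succ']
    have hs := gW_pos m hm s h0 h1.le
    have h2 : 1 - s + gW m s ≠ 0 := by linarith
    have e : ∑ k ∈ Finset.range m, ((1 - s) / s) ^ (k + 1) =
        (1 - s) / s * ∑ k ∈ Finset.range m, ((1 - s) / s) ^ k := by
      rw [Finset.mul_sum]; exact Finset.sum_congr rfl fun k _ => by ring
    have e2 : ∑ k ∈ Finset.range m, ((1 - s) / s) ^ k = s / gW m s := by
      rw [eq_div_iff hs.1.ne']; linarith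
    rw [e, e2]
    have := hs.1.ne'
    field_simp

/-! ### Upper bound, exponential growth -/

lemma dg_iterate (x : ℝ) (n i : ℕ) : dg (gaussMap^[n] x) i = dg x (n + i) := by
  simp only [dg, cfA, Nat.add_sub_cancel]
  rw [← Function.iterate_add_apply, add_comm]

lemma iterate_mem {x : ℝ} (hx : x ∈ Irr) (n : ℕ) : gaussMap^[n] x ∈ Irr := by
  induction n with
  | zero => exact hx
  | succ k ih => rw [Function.iterate_succ_apply']; exact gauss_mem ih

/-- Points whose first `m` digits have product at least `R`. -/
def Am (m : ℕ) (R : ℝ) : Set ℝ := {y | y ∈ Irr ∧ R ≤ ∏ i ∈ Finset.range m, (dg y i : ℝ)}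

lemma le_of_dg {y : ℝ} (hy : y ∈ Irr) {R : ℝ} (hR : 0 < R) (h : R ≤ dg y 0) : y ≤ 1 / R := by
  have h1 := (isTail_orbit hy 0).2.2
  have h2 := (isTail_orbit hy 1).1
  simp only [Function.iterate_zero, id] at h1
  rw [le_div_iff₀ hR]
  nlinarith [hy.1, mul_nonneg hy.1.le h2.le]

lemma HC_first (t : ℝ) (ht : 0 < t) (R : ℝ) (hR : 0 < R) :
    HC t ht {y | y ∈ Irr ∧ R ≤ dg y 0} ≤ ENNReal.ofReal (R ^ (-t)) := by
  refine (HC_Icc t ht (1 / R) _ ?_).trans (le_of_eq ?_)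
  · rintro y ⟨hy, h⟩
    exact ⟨hy.1.le, le_of_dg hy hR h⟩
  · rw [ENNReal.ofReal_rpow_of_pos (by positivity), one_div, Real.inv_rpow hR.le,
      Real.rpow_neg hR.le]

lemma sum_rpow_le (p : ℝ) (hp : 0 < p) (hp1 : p ≤ 1) (N : ℕ) :
    ∑ a ∈ Finset.Icc 1 N, (a : ℝ) ^ (p - 1) ≤ (N : ℝ) ^ p / p := by
  induction N with
  | zero => simp; positivity
  | succ n ih =>
    rw [Finset.sum_Icc_succ_top (by omega)]
    have hn : (0 : ℝ) < ((n + 1 : ℕ) : ℝ) := by positivity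
    have hB := rpow_one_add_le_one_add_mul_self (s := -(1 / ((n + 1 : ℕ) : ℝ)))
      (by rw [neg_le_neg_iff, div_le_one hn]; push_cast; linarith [(Nat.cast_nonneg n : (0:ℝ) ≤ n)])
      hp.le hp1
    have e : 1 + -(1 / ((n + 1 : ℕ) : ℝ)) = n / ((n + 1 : ℕ) : ℝ) := by
      field_simp; push_cast; ring
    rw [e, Real.div_rpow (by positivity) hn.le, div_le_iff₀ (by positivity)] at hB
    have e2 : ((n + 1 : ℕ) : ℝ) ^ p = ((n + 1 : ℕ) : ℝ) ^ (p - 1) * ((n + 1 : ℕ) : ℝ) := by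
      rw [← Real.rpow_add_one hn.ne']; congr 1; ring
    have h2 : ((n : ℕ) : ℝ) ^ p ≤ ((n + 1 : ℕ) : ℝ) ^ p - p * ((n + 1 : ℕ) : ℝ) ^ (p - 1) := by
      calc _ ≤ _ := hB
        _ = _ := by
          rw [e2]; field_simp; ring
    rw [le_div_iff₀ hp] at ih ⊢
    linarith

/-- Either the first digit is at least `X`, or it is some `a ≤ X` and the next `m` digits have
product at least `R / a`. -/
lemma Am_succ_subset (m : ℕ) (R X : ℝ) : Am (m + 1) R ⊆
    {y | y ∈ Irr ∧ X ≤ dg y 0} ∪ ⋃ a ∈ Finset.Icc 1 ⌊X⌋₊,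
      {x | x ∈ Irr ∧ (∀ i < 1, dg x i = (fun _ => a) i) ∧ gaussMap^[1] x ∈ Am m (R / a)} := by
  rintro y ⟨hy, h⟩
  by_cases hX' : X ≤ dg y 0
  · exact Or.inl ⟨hy, hX'⟩
  · right
    have h1 : 1 ≤ dg y 0 := dg_one_le hy 0
    simp only [Set.mem_iUnion]
    refine ⟨dg y 0, Finset.mem_Icc.2 ⟨h1, Nat.le_floor (not_le.1 hX').le⟩, hy, ?_,
      iterate_mem hy 1, ?_⟩
    · intro i hi; rw [Nat.lt_one_iff.1 hi]
    · have h1' : (0 : ℝ) < dg y 0 := by exact_mod_cast h1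
      rw [div_le_iff₀ h1']
      rw [Finset.prod_range_succ'] at h
      refine h.trans (le_of_eq ?_)
      refine congrArg₂ _ (Finset.prod_congr rfl fun i _ => ?_) rfl
      rw [dg_iterate, add_comm]

/-- Induction on `m` through `Am_succ_subset`. The threshold `X = R ^ α`, `α = g / (1 - t + g)`,
balances the two parts: `X ^ (-t) = R ^ (-g) X ^ (1 + g - 2 t)` up to constants. -/
lemma HC_Am (t : ℝ) (ht : 0 < t) (ht1 : t < 1) (m : ℕ) (hm : 1 ≤ m) :
    ∃ C : ℝ, 0 ≤ C ∧ ∀ R : ℝ, 1 ≤ R → HC t ht (Am m R) ≤ ENNReal.ofReal (C * R ^ (-gW m t)) := by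
  induction m, hm using Nat.le_induction with
  | base =>
    refine ⟨1, by norm_num, fun R hR => ?_⟩
    have := HC_first t ht R (by linarith)
    simpa [Am, gW] using this
  | succ m hm ih =>
    obtain ⟨C, hC, ih⟩ := ih
    obtain ⟨hg, hg'⟩ := gW_pos m hm t ht ht1.le
    have hg2 := gW_lower m hm t ht ht1
    rw [gW_succ m hm]
    set g := gW m t with hgdef
    have hd : 0 < 1 - t + g := by linarith
    set α := g / (1 - t + g) with hα
    have hα0 : 0 < α := div_pos hg hd
    have hα1 : α ≤ 1 := by rw [hα, div_le_one hd]; linarith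
    have hαe : α * (1 - t + g) = g := by rw [hα]; field_simp
    set p := 1 + g - 2 * t with hp
    have hp0 : 0 < p := by linarith
    have hp1 : p ≤ 1 := by linarith
    refine ⟨1 + C / p, by positivity, fun R hR => ?_⟩
    have hR0 : 0 < R := by linarith
    have hX1 : 1 ≤ R ^ α := Real.one_le_rpow hR hα0.le
    have hXR : R ^ α ≤ R := by
      conv_rhs => rw [← Real.rpow_one R]
      exact Real.rpow_le_rpow_of_exponent_le hR hα1
    have hX0 : 0 < R ^ α := by linarith
    refine (measure_mono (Am_succ_subset m R (R ^ α))).trans ?_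
    refine (measure_union_le _ _).trans ?_
    have h1 : HC t ht {y | y ∈ Irr ∧ R ^ α ≤ dg y 0} ≤ ENNReal.ofReal (R ^ (-(t * g / (1 - t + g)))) := by
      refine (HC_first t ht _ hX0).trans (le_of_eq ?_)
      rw [← Real.rpow_mul hR0.le]
      congr 2
      rw [hα]; ring
    have h2 : HC t ht (⋃ a ∈ Finset.Icc 1 ⌊R ^ α⌋₊, {x | x ∈ Irr ∧
        (∀ i < 1, dg x i = (fun _ => a) i) ∧ gaussMap^[1] x ∈ Am m (R / a)}) ≤
        ENNReal.ofReal (C / p * R ^ (-(t * g / (1 - t + g)))) := by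
      refine (measure_biUnion_finset_le _ _).trans ?_
      have h3 : ∀ a ∈ Finset.Icc 1 ⌊R ^ α⌋₊, HC t ht {x | x ∈ Irr ∧
          (∀ i < 1, dg x i = (fun _ => a) i) ∧ gaussMap^[1] x ∈ Am m (R / a)} ≤
          ENNReal.ofReal (C * R ^ (-g) * (a : ℝ) ^ (p - 1)) := by
        intro a ha
        rw [Finset.mem_Icc] at ha
        have ha0 : (0 : ℝ) < a := by exact_mod_cast ha.1
        have haX : (a : ℝ) ≤ R ^ α := (Nat.le_floor_iff hX0.le).1 ha.2
        refine (HC_cyl t ht _ 1 _).trans ?_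
        have hRa : 1 ≤ R / a := by rw [le_div_iff₀ ha0]; linarith
        refine (mul_le_mul_right (ih _ hRa) _).trans ?_
        rw [← ENNReal.ofReal_mul (by positivity)]
        apply ENNReal.ofReal_le_ofReal
        apply le_of_eq
        simp only [qq]
        rw [Real.div_rpow hR0.le ha0.le, Real.rpow_neg ha0.le g, div_inv_eq_mul]
        have : (a : ℝ) ^ (p - 1) = (a : ℝ) ^ (-2 * t) * (a : ℝ) ^ g := by
          rw [← Real.rpow_add ha0]; congr 1; rw [hp]; ring
        rw [this]; ring
      refine (Finset.sum_le_sum h3).trans ?_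
      rw [← ENNReal.ofReal_sum_of_nonneg (fun i _ => by positivity), ← Finset.mul_sum]
      apply ENNReal.ofReal_le_ofReal
      have h4 : ∑ a ∈ Finset.Icc 1 ⌊R ^ α⌋₊, (a : ℝ) ^ (p - 1) ≤ (R ^ α) ^ p / p := by
        refine (sum_rpow_le p hp0 hp1 _).trans ?_
        gcongr
        exact Nat.floor_le hX0.le
      calc _ ≤ C * R ^ (-g) * ((R ^ α) ^ p / p) := by gcongr
        _ = C / p * (R ^ (-g) * R ^ (α * p)) := by rw [← Real.rpow_mul hR0.le]; ring
        _ = _ := by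
          rw [← Real.rpow_add hR0]
          congr 2
          have : t * g / (1 - t + g) = t * α := by rw [hα]; ring
          rw [this, hp]
          linear_combination hαe
    refine (add_le_add h1 h2).trans (le_of_eq ?_)
    rw [← ENNReal.ofReal_add (by positivity) (by positivity)]
    congr 1; ring

lemma Fm_mem_Irr {m : ℕ} {Φ : ℕ → ℝ} {x : ℝ} (hx : x ∈ Fm m Φ) : x ∈ Irr :=
  ⟨lt_of_le_of_ne hx.1.1 hx.2.1.ne_zero.symm, hx.1.2, hx.2.1⟩

lemma frequently_succ {p : ℕ → Prop} (h : ∃ᶠ n in atTop, p n) : ∃ᶠ n in atTop, p (n + 1) := by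
  rw [frequently_atTop] at h ⊢
  intro N
  obtain ⟨b, hb, hp⟩ := h (N + 1)
  exact ⟨b - 1, by omega, by rwa [Nat.sub_add_cancel (by omega)]⟩

lemma Fm_frequently {m : ℕ} {Φ : ℕ → ℝ} {x : ℝ} (hx : x ∈ Fm m Φ) :
    ∃ᶠ n in atTop, Φ (n + 1) ≤ ∏ k ∈ Finset.range m, (dg x (n + k) : ℝ) := by
  refine (frequently_succ hx.2.2.1).mono fun n hn => ?_
  simp only [dg]
  convert hn using 4
  omega

lemma Zs_anti {s t : ℝ} (hst : s ≤ t) (n : ℕ) : Zs t n ≤ Zs s n := by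
  refine ENNReal.tsum_le_tsum fun w => ENNReal.ofReal_le_ofReal ?_
  exact Real.rpow_le_rpow_of_exponent_le (contQ_ofFn_pos w) (by linarith)

/-- Any `t ∈ (s, 1)` bounds the dimension when `s` satisfies the pressure condition: the strict gain
`g_m(s) < g_m(t)` makes the contents of the sets in the limsup summable. -/
lemma upper_B_aux (m : ℕ) (hm : 1 ≤ m) (Φ : ℕ → ℝ) (B : ℝ) (hB : 1 < B)
    (hl : ∀ l < Real.log B, ∀ᶠ n : ℕ in atTop, Real.exp (l * n) ≤ Φ n)
    (s : ℝ) (hs : s ∈ presSet B (gW m)) (t : ℝ) (hst : s < t) (ht1 : t < 1) :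
    dimH (Fm m Φ) ≤ ENNReal.ofReal t := by
  have hB0 : 0 < B := by linarith
  obtain ⟨hs0, P, hP, hT⟩ := hs
  have ht : 0 < t := by linarith
  have hgt := (gW_pos m hm t ht ht1.le).1
  have hlB := Real.log_pos hB
  have hgs := gW_strictMono m hm s t hs0 hst ht1.le
  obtain ⟨C, hC, hCA⟩ := HC_Am t ht ht1 m hm
  set g := gW m t with hg
  set g' := gW m s with hg'
  have hg'0 : 0 ≤ g' := by
    rcases hs0.eq_or_lt with h | h
    · rw [hg', ← h, gW_zero m hm]
    · exact (gW_pos m hm s h (by linarith)).1.le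
  -- an exponential rate `l < log B` that still beats the pressure growth
  obtain ⟨l, hl1, hl2⟩ : ∃ l, g' / g * Real.log B < l ∧ l < Real.log B := by
    apply exists_between
    have : g' / g < 1 := by rw [div_lt_one hgt]; exact hgs
    nlinarith
  have hl0 : 0 ≤ l := le_trans (by positivity) hl1.le
  have hgl : g' * Real.log B < g * l := by
    rw [div_mul_eq_mul_div, div_lt_iff₀ hgt] at hl1; linarith
  set ε := (g * l - g' * Real.log B) / 2 with hε
  have hε0 : 0 < ε := by linarith
  have hpres := pres_mem hP hT ε hε0
  have hΦ := (tendsto_add_atTop_nat 1).eventually (hl l hl2)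
  obtain ⟨N, hN⟩ := eventually_atTop.1 (hpres.and hΦ)
  let A : ℕ → Set ℝ := fun n => if N ≤ n then {x | x ∈ Irr ∧ gaussMap^[n] x ∈ Am m (Φ (n + 1))}
    else ∅
  have hA : ∀ n, HC t ht (A n) ≤ ENNReal.ofReal (C * (Real.exp (-ε)) ^ n) := by
    intro n
    by_cases hn : N ≤ n
    · simp only [A, if_pos hn]
      obtain ⟨h1, h2⟩ := hN n hn
      have hn0 : (0 : ℝ) ≤ n := Nat.cast_nonneg n
      have h3 : Real.exp (l * n) ≤ Φ (n + 1) := by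
        refine le_trans (Real.exp_le_exp.2 ?_) h2
        push_cast; nlinarith
      have h4 : 1 ≤ Φ (n + 1) := le_trans (Real.one_le_exp (by positivity)) h3
      have hZ : Zs s n ≤ ENNReal.ofReal (Real.exp ((ε + g' * Real.log B) * n)) := by
        rw [presSum_eq _ _ _ hB0] at h1
        have hb : 0 < B ^ (-(n : ℝ) * g') := by positivity
        rw [mul_comm, ← ENNReal.le_div_iff_mul_le (Or.inl (ENNReal.ofReal_pos.2 hb).ne')
          (Or.inl ENNReal.ofReal_ne_top), ← ENNReal.ofReal_div_of_pos hb] at h1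
        refine h1.trans (le_of_eq ?_)
        rw [Real.rpow_def_of_pos hB0, ← Real.exp_sub]
        congr 2; ring
      refine (HC_preimage t ht n _).trans ?_
      calc _ ≤ ENNReal.ofReal (Real.exp ((ε + g' * Real.log B) * n)) *
            ENNReal.ofReal (C * Real.exp (l * n) ^ (-g)) := by
            gcongr
            · exact (Zs_anti hst.le n).trans hZ
            · refine (hCA _ h4).trans (ENNReal.ofReal_le_ofReal ?_)
              refine mul_le_mul_of_nonneg_left ?_ hC
              exact Real.rpow_le_rpow_of_nonpos (Real.exp_pos _) h3 (by linarith)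
        _ = ENNReal.ofReal (C * (Real.exp (-ε)) ^ n) := by
            rw [← ENNReal.ofReal_mul (Real.exp_pos _).le, ← Real.exp_mul, mul_left_comm,
              ← Real.exp_add, ← Real.exp_nat_mul]
            congr 3
            rw [hε]; ring
    · simp [A, if_neg hn]
  have hsum : ∑' n, HC t ht (A n) ≠ ⊤ := by
    refine ne_top_of_le_ne_top ?_ (ENNReal.tsum_le_tsum hA)
    have hlt : Real.exp (-ε) < 1 := Real.exp_lt_one_iff.2 (by linarith)
    have hsm : Summable fun n : ℕ => C * (Real.exp (-ε)) ^ n :=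
      (summable_geometric_of_lt_one (Real.exp_pos _).le hlt).mul_left C
    rw [← ENNReal.ofReal_tsum_of_nonneg (fun n => by positivity) hsm]
    exact ENNReal.ofReal_ne_top
  refine (dimH_mono ?_).trans (dimH_le_of_HC_zero t ht _ (HC_limsup t ht A hsum))
  intro x hx
  have hxI := Fm_mem_Irr hx
  refine ((Fm_frequently hx).and_eventually (eventually_ge_atTop N)).mono ?_
  rintro n ⟨h1, h2⟩
  simp only [A, if_pos h2]
  refine ⟨hxI, iterate_mem hxI n, h1.trans (le_of_eq ?_)⟩
  simp only [dg_iterate]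

lemma dimH_le_one (A : Set ℝ) : dimH A ≤ 1 := by
  refine (dimH_mono (Set.subset_univ A)).trans ?_
  rw [Real.dimH_univ]

lemma upper_B (m : ℕ) (hm : 1 ≤ m) (Φ : ℕ → ℝ) (B : ℝ) (hB : 1 < B)
    (hl : ∀ l < Real.log B, ∀ᶠ n : ℕ in atTop, Real.exp (l * n) ≤ Φ n) :
    dimH (Fm m Φ) ≤ ENNReal.ofReal (presInf B (gW m)) := by
  have hne : (presSet B (gW m)).Nonempty := ⟨1, one_mem_presSet hB (gW_one m hm)⟩
  by_contra hcon
  rw [not_le] at hcon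
  have h1 : ENNReal.ofReal (presInf B (gW m)) < ENNReal.ofReal 1 :=
    hcon.trans_le ((dimH_le_one _).trans (by simp))
  rw [ENNReal.ofReal_lt_ofReal_iff (by norm_num)] at h1
  obtain ⟨d, hd1, hd2⟩ := exists_between hcon
  have hdt : d ≠ ⊤ := (hd2.trans_le le_top).ne
  have hd1' : presInf B (gW m) < d.toReal := by
    rw [← ENNReal.ofReal_lt_iff_lt_toReal _ hdt]
    · exact hd1
    · exact le_csInf hne fun _ h => h.1
  set t := min d.toReal ((presInf B (gW m) + 1) / 2) with ht
  have ht1 : presInf B (gW m) < t := lt_min hd1' (by linarith)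
  obtain ⟨s, hs, hst⟩ := exists_lt_of_csInf_lt hne ht1
  have := upper_B_aux m hm Φ B hB hl s hs t hst ((min_le_right _ _).trans_lt (by linarith))
  have h3 : ENNReal.ofReal t ≤ d := (ENNReal.ofReal_le_ofReal (min_le_left _ _)).trans
    ENNReal.ofReal_toReal_le
  exact absurd (this.trans h3) (not_le.2 hd2)

/-! ### Upper bound, superexponential growth -/

lemma tsum_words_prod (f : ℕ → ℝ≥0∞) (n : ℕ) :
    ∑' w : Fin n → ℕ+, ∏ i ∈ Finset.range n, f (ext1 w i) = (∑' a : ℕ+, f a) ^ n := by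
  induction n with
  | zero => rw [tsum_fintype]; simp
  | succ n ih =>
    rw [← (Fin.snocEquiv (fun _ : Fin (n + 1) => ℕ+)).tsum_eq, ENNReal.tsum_prod',
      ENNReal.tsum_comm, pow_succ, ← ih, ← ENNReal.tsum_mul_right]
    refine tsum_congr fun w => ?_
    rw [← ENNReal.tsum_mul_left]
    refine tsum_congr fun a => ?_
    have h := snoc_ext w a
    simp only [Fin.snocEquiv, Equiv.coe_fn_mk]
    rw [Finset.prod_range_succ, h.2]
    congr 1
    exact Finset.prod_congr rfl fun i hi => by rw [h.1 i (Finset.mem_range.1 hi)]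

lemma pnat_tsum_ne_top (τ : ℝ) (hτ : 1 < τ) :
    ∑' a : ℕ+, ENNReal.ofReal (((a : ℕ) : ℝ) ^ (-τ)) ≠ ⊤ := by
  have h := Zs_one_ne_top (τ / 2) (by linarith)
  rw [Zs_one, show -2 * (τ / 2) = -τ by ring] at h
  rw [← Equiv.pnatEquivNat.symm.tsum_eq]
  simpa [Equiv.pnatEquivNat] using h

lemma one_le_prod_cast (s : Finset ℕ) (a : ℕ → ℕ) (h : ∀ i, 1 ≤ a i) :
    1 ≤ ∏ i ∈ s, (a i : ℝ) := by
  exact_mod_cast Nat.one_le_iff_ne_zero.2 (Finset.prod_ne_zero_iff.2 fun i _ => by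
    have := h i; omega : ∏ i ∈ s, a i ≠ 0)

/-- The points with `a_{n+1} ≥ (a_1 ⋯ a_n) ^ γ K ^ n` infinitely often. For a fixed word the
content is at most `(a_1 ⋯ a_n) ^ (-(2 + γ) t) K ^ (-n t)`, and the sum over all words is
`(ζ((2 + γ) t) K ^ (-t)) ^ n`, so that a large `K` makes it at most `2 ^ (-n)`. -/
lemma dimH_big_digit (γ t : ℝ) (ht : 0 < t) (h : 1 < (2 + γ) * t) :
    ∃ K : ℝ, 1 ≤ K ∧ dimH {x | x ∈ Irr ∧ ∃ᶠ n in atTop,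
      (∏ i ∈ Finset.range n, (dg x i : ℝ)) ^ γ * K ^ n ≤ dg x n} ≤ ENNReal.ofReal t := by
  set τ := (2 + γ) * t with hτ
  set ζ := ∑' a : ℕ+, ENNReal.ofReal (((a : ℕ) : ℝ) ^ (-τ)) with hζ
  have hζt : ζ ≠ ⊤ := pnat_tsum_ne_top τ h
  set z := ζ.toReal with hz
  have hz0 : 0 ≤ z := ENNReal.toReal_nonneg
  obtain ⟨K, hK1, hKt⟩ : ∃ K : ℝ, 1 ≤ K ∧ K ^ t = 2 * z + 1 := by
    refine ⟨(2 * z + 1) ^ (1 / t), Real.one_le_rpow (by linarith) (by positivity), ?_⟩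
    rw [← Real.rpow_mul (by positivity)]; field_simp; simp
  refine ⟨K, hK1, ?_⟩
  let A : ℕ → Set ℝ := fun n => {x | x ∈ Irr ∧
    (∏ i ∈ Finset.range n, (dg x i : ℝ)) ^ γ * K ^ n ≤ dg x n}
  have hA : ∀ n, HC t ht (A n) ≤ ENNReal.ofReal ((1 / 2) ^ n) := by
    intro n
    have hsub : A n ⊆ ⋃ w : Fin n → ℕ+, {x | x ∈ Irr ∧ (∀ i < n, dg x i = ext1 w i) ∧
        gaussMap^[n] x ∈ {y | y ∈ Irr ∧
          (∏ i ∈ Finset.range n, (ext1 w i : ℝ)) ^ γ * K ^ n ≤ dg y 0}} := by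
      rintro x ⟨hx, hx2⟩
      refine Set.mem_iUnion.2 ⟨fun i => ⟨dg x i, dg_one_le hx i⟩, hx, fun i hi => ?_,
        iterate_mem hx n, ?_⟩
      · simp [ext1, hi]
      · rw [dg_iterate, add_zero]
        refine le_trans (le_of_eq ?_) hx2
        congr 2
        refine Finset.prod_congr rfl fun i hi => ?_
        simp [ext1, Finset.mem_range.1 hi]
    refine (measure_mono hsub).trans ((measure_iUnion_le _).trans ?_)
    have hw : ∀ w : Fin n → ℕ+, HC t ht {x | x ∈ Irr ∧ (∀ i < n, dg x i = ext1 w i) ∧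
        gaussMap^[n] x ∈ {y | y ∈ Irr ∧
          (∏ i ∈ Finset.range n, (ext1 w i : ℝ)) ^ γ * K ^ n ≤ dg y 0}} ≤
        ENNReal.ofReal ((K ^ t)⁻¹ ^ n) *
          ∏ i ∈ Finset.range n, ENNReal.ofReal ((ext1 w i : ℝ) ^ (-τ)) := by
      intro w
      have hP : 1 ≤ ∏ i ∈ Finset.range n, (ext1 w i : ℝ) :=
        one_le_prod_cast _ (ext1 w) (ext1_pos w)
      have hPq : ∏ i ∈ Finset.range n, (ext1 w i : ℝ) ≤ qq (ext1 w) n := by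
        exact_mod_cast prod_le_qq (a := ext1 w) n
      rw [← ENNReal.ofReal_prod_of_nonneg (fun i _ => by positivity),
        Real.finsetProd_rpow _ _ (fun i _ => by positivity)]
      set Q := ∏ i ∈ Finset.range n, (ext1 w i : ℝ) with hQ
      have hQ0 : 0 < Q := by linarith
      refine (HC_cyl t ht _ n _).trans ?_
      refine (mul_le_mul_right (HC_first t ht _ (by positivity)) _).trans ?_
      rw [← ENNReal.ofReal_mul (by positivity), ← ENNReal.ofReal_mul (by positivity)]
      apply ENNReal.ofReal_le_ofReal
      calc (qq (ext1 w) n : ℝ) ^ (-2 * t) * (Q ^ γ * K ^ n) ^ (-t)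
          ≤ Q ^ (-2 * t) * (Q ^ γ * K ^ n) ^ (-t) := by
            refine mul_le_mul_of_nonneg_right ?_ (by positivity)
            exact Real.rpow_le_rpow_of_nonpos hQ0 hPq (by linarith)
        _ = (K ^ t)⁻¹ ^ n * Q ^ (-τ) := by
            have hK0 : 0 < K := by linarith
            have e1 : (K ^ n) ^ (-t) = (K ^ t)⁻¹ ^ n := by
              rw [Real.rpow_neg (by positivity), inv_pow, ← Real.rpow_natCast K n,
                ← Real.rpow_mul hK0.le, ← Real.rpow_natCast (K ^ t) n, ← Real.rpow_mul hK0.le,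
                mul_comm]
            have e2 : Q ^ (-2 * t) * (Q ^ γ) ^ (-t) = Q ^ (-τ) := by
              rw [← Real.rpow_mul hQ0.le, ← Real.rpow_add hQ0, hτ]
              congr 1; ring
            rw [Real.mul_rpow (by positivity) (by positivity), e1, ← mul_assoc, e2, mul_comm]
    refine (ENNReal.tsum_le_tsum hw).trans ?_
    rw [ENNReal.tsum_mul_left, tsum_words_prod (fun a => ENNReal.ofReal ((a : ℝ) ^ (-τ))) n, ← hζ,
      ← ENNReal.ofReal_toReal hζt, ← hz, ← ENNReal.ofReal_pow hz0,
      ← ENNReal.ofReal_mul (by positivity), ← mul_pow]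
    apply ENNReal.ofReal_le_ofReal
    gcongr
    rw [hKt, inv_mul_le_iff₀ (by positivity)]
    linarith
  have hsum : ∑' n, HC t ht (A n) ≠ ⊤ := by
    refine ne_top_of_le_ne_top ?_ (ENNReal.tsum_le_tsum hA)
    rw [← ENNReal.ofReal_tsum_of_nonneg (fun n => by positivity) summable_geometric_two]
    exact ENNReal.ofReal_ne_top
  refine (dimH_mono ?_).trans (dimH_le_of_HC_zero t ht _ (HC_limsup t ht A hsum))
  rintro x ⟨hx, hx2⟩
  exact hx2.mono fun n hn => ⟨hx, hn⟩

lemma prod_dg_pos {x : ℝ} (hx : x ∈ Irr) (s : Finset ℕ) (f : ℕ → ℕ) :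
    0 < ∏ i ∈ s, (dg x (f i) : ℝ) :=
  Finset.prod_pos fun i _ => by exact_mod_cast dg_one_le hx _

/-- If all digits were eventually below `K ^ n`, products of `m` of them would be at most
exponential in `n` and could not reach `Φ n`. -/
lemma upper_inf_one (m : ℕ) (Φ : ℕ → ℝ)
    (hl : ∀ l : ℝ, ∀ᶠ n : ℕ in atTop, Real.exp (l * n) ≤ Φ n) (t : ℝ) (ht : 1 / 2 < t) :
    dimH (Fm m Φ) ≤ ENNReal.ofReal t := by
  obtain ⟨K, hK, hd⟩ := dimH_big_digit 0 t (by linarith) (by linarith)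
  refine (dimH_mono ?_).trans hd
  intro x hx
  have hxI := Fm_mem_Irr hx
  refine ⟨hxI, ?_⟩
  by_contra hcon
  rw [not_frequently] at hcon
  obtain ⟨N, hN⟩ := eventually_atTop.1 hcon
  have hlK := Real.log_nonneg hK
  set l := m * (m + 1) * Real.log K + 1 with hl'
  have h1 := (tendsto_add_atTop_nat 1).eventually (hl l)
  obtain ⟨n, hn, hn2, hn3⟩ := ((Fm_frequently hx).and_eventually
    (h1.and (eventually_ge_atTop N))).exists
  have h2 : ∏ k ∈ Finset.range m, (dg x (n + k) : ℝ) ≤ ∏ k ∈ Finset.range m, K ^ (n + m) := by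
    refine Finset.prod_le_prod (fun i _ => by positivity) fun k hk => ?_
    have h3 := not_le.1 (hN (n + k) (by omega))
    rw [Real.rpow_zero, one_mul] at h3
    refine h3.le.trans (pow_le_pow_right₀ hK ?_)
    have := Finset.mem_range.1 hk
    omega
  rw [Finset.prod_const, Finset.card_range] at h2
  have h4 := hn2.trans (hn.trans h2)
  have h5 := (Real.le_log_iff_exp_le (by positivity)).2 h4
  rw [Real.log_pow, Real.log_pow] at h5
  push_cast at h5
  have hn0 : (0 : ℝ) ≤ n := Nat.cast_nonneg n
  have hm0 : (0 : ℝ) ≤ m := Nat.cast_nonneg m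
  have e1 : (m : ℝ) * ((n + m) * Real.log K) ≤ m * (m + 1) * Real.log K * (n + 1) := by
    have : ((n : ℝ) + m) ≤ (m + 1) * (n + 1) := by nlinarith
    have h6 : 0 ≤ (m : ℝ) * Real.log K := by positivity
    nlinarith
  rw [hl'] at h5
  nlinarith

/-- If eventually `a_{n+1} < (a_1 ⋯ a_n) ^ γ K ^ n`, the logarithm of `a_1 ⋯ a_n` grows at most
like `β' ^ n` with `1 + γ < β' < β`, hence the digits cannot reach `Φ n ≥ exp (β ^ n)`. -/
lemma upper_inf_two (m : ℕ) (Φ : ℕ → ℝ) (γ β : ℝ) (hγ : 0 ≤ γ) (hβ : 1 + γ < β)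
    (hl : ∀ᶠ n : ℕ in atTop, Real.exp (β ^ n) ≤ Φ n) (t : ℝ) (ht : 1 / (2 + γ) < t) :
    dimH (Fm m Φ) ≤ ENNReal.ofReal t := by
  have ht0 : 0 < t := lt_trans (by positivity) ht
  rw [div_lt_iff₀ (by linarith)] at ht
  obtain ⟨K, hK, hd⟩ := dimH_big_digit γ t ht0 (by linarith)
  refine (dimH_mono ?_).trans hd
  intro x hx
  have hxI := Fm_mem_Irr hx
  refine ⟨hxI, ?_⟩
  by_contra hcon
  rw [not_frequently] at hcon
  obtain ⟨N, hN⟩ := eventually_atTop.1 hcon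
  have hlK := Real.log_nonneg hK
  obtain ⟨β', hβ1, hβ2⟩ := exists_between hβ
  have hb0 : 0 < β' := by linarith
  have hb1 : 0 < β' - 1 := by linarith
  have hb2 : 0 < β' - 1 - γ := by linarith
  set ℓ : ℕ → ℝ := fun n => Real.log (∏ i ∈ Finset.range n, (dg x i : ℝ)) with hℓ
  have hPpos : ∀ n, 0 < ∏ i ∈ Finset.range n, (dg x i : ℝ) :=
    fun n => prod_dg_pos hxI (Finset.range n) id
  have hstep : ∀ n ≥ N, ℓ (n + 1) ≤ (1 + γ) * ℓ n + n * Real.log K := by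
    intro n hn
    have h3 := not_le.1 (hN n hn)
    have hdn : (0 : ℝ) < dg x n := by exact_mod_cast dg_one_le hxI n
    have hp := Real.rpow_pos_of_pos (hPpos n) γ
    have h4 := Real.log_le_log hdn h3.le
    rw [Real.log_mul hp.ne' (by positivity), Real.log_rpow (hPpos n), Real.log_pow] at h4
    simp only [hℓ]
    rw [Finset.prod_range_succ, Real.log_mul (hPpos n).ne' hdn.ne']
    linarith
  set C := max (ℓ N / β' ^ N) (Real.log K / ((β' - 1) * (β' - 1 - γ))) with hC
  have hC0 : 0 ≤ C := le_trans (by positivity) (le_max_right _ _)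
  have hbound : ∀ n ≥ N, ℓ n ≤ C * β' ^ n := by
    intro n hn
    induction n, hn using Nat.le_induction with
    | base => rw [← div_le_iff₀ (by positivity)]; exact le_max_left _ _
    | succ n hn ih =>
      refine (hstep n hn).trans ?_
      have hber : 1 + n * (β' - 1) ≤ β' ^ n := by
        have := one_add_mul_le_pow (a := β' - 1) (by linarith) n
        simpa using this
      have hC2 : Real.log K ≤ C * ((β' - 1) * (β' - 1 - γ)) := by
        rw [← div_le_iff₀ (by positivity)]; exact le_max_right _ _
      have hn0 : (0 : ℝ) ≤ n := Nat.cast_nonneg n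
      have e1 : n * Real.log K ≤ C * (β' - 1 - γ) * β' ^ n := by
        calc n * Real.log K ≤ n * (C * ((β' - 1) * (β' - 1 - γ))) := by gcongr
          _ = C * (β' - 1 - γ) * (n * (β' - 1)) := by ring
          _ ≤ _ := by gcongr; linarith
      have e2 : (1 + γ) * ℓ n ≤ (1 + γ) * (C * β' ^ n) := by gcongr
      rw [pow_succ]
      linarith
  have h1 := (tendsto_add_atTop_nat 1).eventually hl
  have hgrow : ∀ᶠ n : ℕ in atTop, C * β' ^ m < (β / β') ^ n :=
    (tendsto_pow_atTop_atTop_of_one_lt (by rw [one_lt_div hb0]; exact hβ2)).eventually_gt_atTop _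
  obtain ⟨n, hn, hn2, hn3, hn4⟩ := ((Fm_frequently hx).and_eventually
    (h1.and ((eventually_ge_atTop N).and hgrow))).exists
  have hpm := prod_dg_pos hxI (Finset.range m) (fun k => n + k)
  have h5 := (Real.le_log_iff_exp_le hpm).2 (hn2.trans hn)
  have h6 : Real.log (∏ k ∈ Finset.range m, (dg x (n + k) : ℝ)) ≤ ℓ (n + m) := by
    simp only [hℓ]
    refine Real.log_le_log hpm ?_
    rw [Finset.prod_range_add]
    refine le_mul_of_one_le_left hpm.le ?_
    exact one_le_prod_cast _ (dg x) (dg_one_le hxI)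
  have h7 := h5.trans (h6.trans (hbound (n + m) (by omega)))
  rw [div_pow, lt_div_iff₀ (by positivity)] at hn4
  have h8 : β ^ n ≤ β ^ (n + 1) := pow_le_pow_right₀ (by linarith) (by omega)
  have h9 : C * β' ^ (n + m) = C * β' ^ m * β' ^ n := by ring
  linarith

/-! ### A mass distribution principle for continued fractions -/

/-- Two continued fractions that first differ at digit `k` are separated in terms of the
difference of these digits, provided `a` has no tail extremely close to `[1, ∞]`. -/
lemma cfv_sep {a b : ℕ → ℕ} (ha : ∀ i, 1 ≤ a i) (hb : ∀ i, 1 ≤ b i) (M : ℕ) (hM1 : 1 ≤ M)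
    (hM : ∀ k, a k = 1 → a (k + 1) ≤ M) {k : ℕ} (hab : ∀ i < k, a i = b i) (hlt : a k < b k)
    (A : ℝ) (hA : 1 ≤ A) (hbk : b k ≤ M * A) :
    ((b k : ℝ) - a k) ≤ |cfv a - cfv b| * (16 * M ^ 2 * (M + 2) * ((qq a k : ℝ) ^ 2 * A ^ 2)) := by
  have ht := tl_isTail ha
  have hu := tl_isTail hb
  have hd := le_tail_dist ht hu hab
  obtain ⟨t0, t1, t2⟩ := ht k
  obtain ⟨z0, z1, z2⟩ := ht (k + 1)
  obtain ⟨y0, y1, y2⟩ := ht (k + 2)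
  obtain ⟨x0, x1, x2⟩ := ht (k + 2 + 1)
  obtain ⟨u0, u1, u2⟩ := hu k
  obtain ⟨v0, v1, v2⟩ := hu (k + 1)
  have hMr : (1 : ℝ) ≤ M := by exact_mod_cast hM1
  have hMA : 1 ≤ M * A := by nlinarith
  have hz : tl a (k + 1) * (M + 2) ≤ M + 1 := by
    rcases Nat.lt_or_ge (a (k + 1)) 2 with h | h
    · have h1 : a (k + 1) = 1 := by have := ha (k + 1); omega
      have h2 : (a (k + 2) : ℝ) ≤ M := by exact_mod_cast hM _ h1
      rw [h1, Nat.cast_one] at z2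
      have h3 : 1 ≤ tl a (k + 2) * (M + 1) := by
        conv_lhs => rw [← y2]
        gcongr
      have h4 : tl a (k + 1) * (M + 2) ≤ tl a (k + 1) * ((M + 1) * (1 + tl a (k + 1 + 1))) := by
        gcongr
        have e : k + 1 + 1 = k + 2 := rfl
        rw [e]; nlinarith
      calc _ ≤ _ := h4
        _ = (M + 1) * (tl a (k + 1) * (1 + tl a (k + 1 + 1))) := by ring
        _ = M + 1 := by rw [z2, mul_one]
    · have h1 : (2 : ℝ) ≤ a (k + 1) := by exact_mod_cast h
      have h2 : tl a (k + 1) * 2 ≤ 1 := by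
        conv_rhs => rw [← z2]
        gcongr; linarith
      nlinarith
  have hba : (1 : ℝ) ≤ b k - a k := by
    have : (a k : ℝ) + 1 ≤ b k := by exact_mod_cast hlt
    linarith
  set E := (b k : ℝ) + tl b (k + 1) - (a k + tl a (k + 1)) with hE
  have h1 : (b k : ℝ) - a k ≤ (M + 2) * E := by rw [hE]; nlinarith
  have hE0 : 0 ≤ E := by
    by_contra hh
    nlinarith
  have htu : tl a k - tl b k = tl a k * tl b k * E := by
    rw [hE]; linear_combination tl b k * t2 - tl a k * u2
  have ha2 : 1 ≤ tl a k * (2 * (M * A)) := by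
    conv_lhs => rw [← t2]
    gcongr
    have : (a k : ℝ) ≤ b k := by linarith
    linarith
  have hb2 : 1 ≤ tl b k * (2 * (M * A)) := by
    conv_lhs => rw [← u2]
    gcongr
    linarith
  have h2 : 1 ≤ tl a k * (2 * (M * A)) * (tl b k * (2 * (M * A))) := one_le_mul_of_one_le_of_one_le ha2 hb2
  have hc : |cfv a - cfv b| = |tl a 0 - tl b 0| := rfl
  rw [hc]
  have hq : (0 : ℝ) ≤ (M + 2) * (4 * (M * A) ^ 2) := by positivity
  calc (b k : ℝ) - a k ≤ (M + 2) * E := h1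
    _ ≤ (M + 2) * E * (tl a k * (2 * (M * A)) * (tl b k * (2 * (M * A)))) :=
        le_mul_of_one_le_right (by positivity) h2
    _ = (M + 2) * (4 * (M * A) ^ 2) * (tl a k - tl b k) := by rw [htu]; ring
    _ ≤ (M + 2) * (4 * (M * A) ^ 2) * (|tl a 0 - tl b 0| * (4 * (qq a k : ℝ) ^ 2)) :=
        mul_le_mul_of_nonneg_left ((le_abs_self _).trans hd) hq
    _ = _ := by ring

lemma cfv_measurable {Ω : Type*} [MeasurableSpace Ω] (D : ℕ → Ω → ℕ)
    (hDm : ∀ k, Measurable (D k)) (hD1 : ∀ k ω, 1 ≤ D k ω) :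
    Measurable (fun ω => cfv fun k => D k ω) := by
  let F : ∀ k : ℕ, (Fin k → ℕ) → ℝ := fun k w => cfv fun i => if h : i < k then w ⟨i, h⟩ else 1
  refine measurable_of_tendsto_metrizable (f := fun k ω => F k fun i => D i ω) (fun k => ?_) ?_
  · exact (measurable_of_countable (F k)).comp (measurable_pi_lambda _ fun i => hDm i)
  · rw [tendsto_pi_nhds]
    intro ω
    rw [tendsto_iff_dist_tendsto_zero]
    refine squeeze_zero' (g := fun k : ℕ => (k : ℝ)⁻¹) (Eventually.of_forall fun k => dist_nonneg) ?_
      tendsto_inv_atTop_nhds_zero_nat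
    filter_upwards [eventually_ge_atTop 1] with k hk
    have ha : ∀ i, 1 ≤ (fun i => if h : i < k then D i ω else 1) i := by
      intro i; dsimp only; split_ifs; exacts [hD1 _ _, le_rfl]
    have ht := tl_isTail ha
    have hu := tl_isTail (a := fun k => D k ω) (fun k => hD1 k ω)
    have h := tail_dist_le ht hu (k := k) (fun i hi => by simp [hi])
    have hq : (k : ℝ) ≤ qq (fun i => if h : i < k then D i ω else 1) k := by
      exact_mod_cast le_qq ha k
    have hk1 : (1 : ℝ) ≤ k := by exact_mod_cast hk
    have h3 := ht k
    have h4 := hu k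
    have h2 : |tl (fun i => if h : i < k then D i ω else 1) k - tl (fun k => D k ω) k| ≤ 1 := by
      rw [abs_le]; constructor <;> linarith [h3.1, h3.2.1, h4.1, h4.2.1]
    rw [Real.dist_eq, ← one_div, le_div_iff₀ (by positivity)]
    change |tl _ 0 - tl _ 0| * (k : ℝ) ≤ 1
    refine le_trans (mul_le_mul_of_nonneg_left ?_ (abs_nonneg _)) (h.trans h2)
    nlinarith

/-- The Frostman-type estimate behind `mass_dist`: the mass of a set of parameters whose images lie
within distance `d` of each other is at most a constant times `d ^ s`. -/
lemma mass_le {Ω : Type*} [MeasurableSpace Ω] (P : Measure Ω) (D : ℕ → Ω → ℕ)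
    (hD1 : ∀ k ω, 1 ≤ D k ω) (M : ℕ) (hM1 : 1 ≤ M)
    (hM : ∀ k ω, D k ω = 1 → D (k + 1) ω ≤ M)
    (A : ℕ → ℝ) (hA1 : ∀ k, 1 ≤ A k) (hDA : ∀ k ω, (D k ω : ℝ) ≤ M * A k)
    (s : ℝ) (hs0 : 0 < s) (hs1 : s ≤ 1) (C : ℝ) (hC : 0 < C)
    (h1 : ∀ k ω, P {ω' | ∀ i < k, D i ω' = D i ω} ≤
      ENNReal.ofReal (C * ((qq (fun i => D i ω) k : ℝ) ^ 2 * A k) ^ (-s)))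
    (h2 : ∀ k ω, P {ω' | ∀ i < k + 1, D i ω' = D i ω} ≤
      ENNReal.ofReal (C * ((qq (fun i => D i ω) k : ℝ) ^ 2 * A k) ^ (-s) / A k))
    (V : Set Ω) (d : ℝ) (hd : 0 ≤ d)
    (hV : ∀ ω ∈ V, ∀ ω' ∈ V, |cfv (fun k => D k ω) - cfv (fun k => D k ω')| ≤ d) :
    P V ≤ ENNReal.ofReal (C * (2 * (16 * M ^ 2 * (M + 2))) ^ s * d ^ s) := by
  rcases V.eq_empty_or_nonempty with rfl | ⟨ω₀, hω₀⟩
  · simp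
  have hq1 : ∀ k, (1 : ℝ) ≤ qq (fun i => D i ω₀) k := fun k => by
    exact_mod_cast qq_pos (fun i => hD1 i ω₀) k
  by_cases hall : ∀ k, ∀ ω ∈ V, D k ω = D k ω₀
  · have h0 : P V ≤ 0 := by
      have hlim : Tendsto (fun k : ℕ => ENNReal.ofReal (C * (k : ℝ) ^ (-s))) atTop (𝓝 0) := by
        rw [← ENNReal.ofReal_zero]
        refine ENNReal.tendsto_ofReal ?_
        rw [← mul_zero C]
        exact ((tendsto_rpow_neg_atTop hs0).comp tendsto_natCast_atTop_atTop).const_mul C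
      refine ge_of_tendsto hlim ?_
      filter_upwards [eventually_ge_atTop 1] with k hk
      refine (measure_mono fun ω hω => ?_).trans ((h1 k ω₀).trans ?_)
      · exact fun i _ => hall i ω hω
      · apply ENNReal.ofReal_le_ofReal
        refine mul_le_mul_of_nonneg_left ?_ hC.le
        have hk1 : (1 : ℝ) ≤ k := by exact_mod_cast hk
        refine Real.rpow_le_rpow_of_nonpos (by linarith) ?_ (by linarith)
        have hq : (k : ℝ) ≤ qq (fun i => D i ω₀) k := by exact_mod_cast le_qq (fun i => hD1 i ω₀) k
        have := hA1 k
        nlinarith [hq1 k]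
    exact h0.trans zero_le
  push Not at hall
  classical
  let k := Nat.find hall
  obtain ⟨ω₁, hω₁, hne⟩ := Nat.find_spec hall
  have hagree : ∀ i < k, ∀ ω ∈ V, D i ω = D i ω₀ := by
    intro i hi ω hω
    have := Nat.find_min hall hi
    push Not at this
    exact this ω hω
  -- smallest and largest digit occurring at position `k`
  set S : Set ℕ := (fun ω => D k ω) '' V with hS
  have hSne : S.Nonempty := ⟨_, ω₀, hω₀, rfl⟩
  have hSb : BddAbove S := by
    refine ⟨⌊M * A k⌋₊, ?_⟩
    rintro _ ⟨ω, _, rfl⟩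
    exact Nat.le_floor (hDA k ω)
  obtain ⟨α, hα, hαe⟩ := Nat.sInf_mem hSne
  obtain ⟨β, hβ, hβe⟩ := Nat.sSup_mem hSne hSb
  have hmin : ∀ ω ∈ V, D k α ≤ D k ω := fun ω hω => by
    have : sInf S ≤ D k ω := Nat.sInf_le ⟨ω, hω, rfl⟩
    rw [← hαe] at this; exact this
  have hmax : ∀ ω ∈ V, D k ω ≤ D k β := fun ω hω => by
    have : D k ω ≤ sSup S := le_csSup hSb ⟨ω, hω, rfl⟩
    rw [← hβe] at this; exact this
  have hlt : D k α < D k β := by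
    by_contra hh
    have e1 := hmin ω₀ hω₀
    have e2 := hmin ω₁ hω₁
    have e3 := hmax ω₀ hω₀
    have e4 := hmax ω₁ hω₁
    have : D k ω₁ ≠ D k ω₀ := hne
    omega
  have hsep := cfv_sep (a := fun i => D i α) (b := fun i => D i β) (fun i => hD1 i α)
    (fun i => hD1 i β) M hM1 (fun i => hM i α) (k := k)
    (fun i hi => by rw [hagree i hi α hα, hagree i hi β hβ]) hlt (A k) (hA1 k) (hDA k β)
  have hqα : qq (fun i => D i α) k = qq (fun i => D i ω₀) k :=
    qq_congr fun i hi => hagree i hi α hα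
  rw [hqα] at hsep
  set q : ℝ := ((qq (fun i => D i ω₀) k : ℕ) : ℝ) with hq
  set j : ℝ := (D k β : ℝ) - D k α with hj
  have hj1 : 1 ≤ j := by
    have : (D k α : ℝ) + 1 ≤ D k β := by exact_mod_cast hlt
    rw [hj]; linarith
  have hq1 := hq1 k
  have hAk := hA1 k
  set W := C * (q ^ 2 * A k) ^ (-s) with hW
  have hW0 : 0 ≤ W := by positivity
  have m1 : P V ≤ ENNReal.ofReal W :=
    (measure_mono fun ω hω => fun i hi => hagree i hi ω hω).trans (h1 k ω₀)
  have m2 : P V ≤ ENNReal.ofReal (2 * j * (W / A k)) := by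
    have hcov : V ⊆ ⋃ n ∈ Finset.Icc (D k α) (D k β), {ω | ω ∈ V ∧ D k ω = n} := by
      intro ω hω
      simp only [Set.mem_iUnion]
      exact ⟨D k ω, Finset.mem_Icc.2 ⟨hmin ω hω, hmax ω hω⟩, hω, rfl⟩
    have hpc : ∀ n ∈ Finset.Icc (D k α) (D k β),
        P {ω | ω ∈ V ∧ D k ω = n} ≤ ENNReal.ofReal (W / A k) := by
      intro n _
      rcases Set.eq_empty_or_nonempty {ω | ω ∈ V ∧ D k ω = n} with h | ⟨ω₂, h, h'⟩
      · rw [h]; simp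
      · refine (measure_mono ?_).trans ((h2 k ω₂).trans (le_of_eq ?_))
        · rintro ω ⟨hω, hω'⟩ i hi
          rcases Nat.lt_succ_iff_lt_or_eq.1 hi with hi | rfl
          · rw [hagree i hi ω hω, hagree i hi ω₂ h]
          · rw [hω', h']
        · rw [hW, hq, qq_congr (a := fun i => D i ω₂) (b := fun i => D i ω₀)
            fun i hi => hagree i hi ω₂ h]
    refine (measure_mono hcov).trans ((measure_biUnion_finset_le _ _).trans
      ((Finset.sum_le_sum hpc).trans ?_))
    rw [Finset.sum_const, Nat.card_Icc, nsmul_eq_mul, ← ENNReal.ofReal_natCast,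
      ← ENNReal.ofReal_mul (by positivity)]
    apply ENNReal.ofReal_le_ofReal
    refine mul_le_mul_of_nonneg_right ?_ (by positivity)
    rw [Nat.cast_sub (by omega)]
    push_cast
    linarith
  have hmin1 : P V ≤ ENNReal.ofReal (W * (2 * j / A k) ^ s) := by
    rcases le_total (2 * j / A k) 1 with h | h
    · refine m2.trans (ENNReal.ofReal_le_ofReal ?_)
      calc 2 * j * (W / A k) = W * (2 * j / A k) := by ring
        _ ≤ _ := by
          refine mul_le_mul_of_nonneg_left ?_ hW0
          conv_lhs => rw [← Real.rpow_one (2 * j / A k)]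
          exact Real.rpow_le_rpow_of_exponent_ge (by positivity) h hs1
    · refine m1.trans (ENNReal.ofReal_le_ofReal ?_)
      exact le_mul_of_one_le_right hW0 (Real.one_le_rpow h hs0.le)
  refine hmin1.trans (ENNReal.ofReal_le_ofReal ?_)
  have hjd : j ≤ d * (16 * M ^ 2 * (M + 2) * (q ^ 2 * A k ^ 2)) :=
    hsep.trans (mul_le_mul_of_nonneg_right (hV α hα β hβ) (by positivity))
  rw [hW, Real.rpow_neg (by positivity), ← Real.inv_rpow (by positivity), mul_assoc, mul_assoc,
    ← Real.mul_rpow (by positivity) (by positivity), ← Real.mul_rpow (by positivity) hd]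
  refine mul_le_mul_of_nonneg_left (Real.rpow_le_rpow (by positivity) ?_ hs0.le) hC.le
  rw [inv_mul_le_iff₀ (by positivity), div_le_iff₀ (by positivity)]
  nlinarith

/-- Mass distribution principle: a probability measure on digit sequences, whose cylinders have
mass `≲ (q_k² A_k)^{-s}` and whose digit at position `k` is spread over `≳ A_k` values of size
`≲ A_k`, lives on a set of dimension at least `s`. -/
lemma mass_dist {Ω : Type*} [MeasurableSpace Ω] (P : Measure Ω) [IsProbabilityMeasure P]
    (D : ℕ → Ω → ℕ) (hDm : ∀ k, Measurable (D k))
    (hD1 : ∀ k ω, 1 ≤ D k ω) (M : ℕ) (hM1 : 1 ≤ M)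
    (hM : ∀ k ω, D k ω = 1 → D (k + 1) ω ≤ M)
    (A : ℕ → ℝ) (hA1 : ∀ k, 1 ≤ A k) (hDA : ∀ k ω, (D k ω : ℝ) ≤ M * A k)
    (s : ℝ) (hs0 : 0 < s) (hs1 : s ≤ 1) (C : ℝ) (hC : 0 < C)
    (h1 : ∀ k ω, P {ω' | ∀ i < k, D i ω' = D i ω} ≤
      ENNReal.ofReal (C * ((qq (fun i => D i ω) k : ℝ) ^ 2 * A k) ^ (-s)))
    (h2 : ∀ k ω, P {ω' | ∀ i < k + 1, D i ω' = D i ω} ≤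
      ENNReal.ofReal (C * ((qq (fun i => D i ω) k : ℝ) ^ 2 * A k) ^ (-s) / A k)) :
    ENNReal.ofReal s ≤ dimH (Set.range fun ω => cfv fun k => D k ω) := by
  have hXm := cfv_measurable D hDm hD1
  set X : Ω → ℝ := fun ω => cfv fun k => D k ω with hX
  set E : ℝ := C * (2 * (16 * M ^ 2 * (M + 2))) ^ s with hE
  have hE0 : 0 < E := by
    have : (1 : ℝ) ≤ M := by exact_mod_cast hM1
    positivity
  have hle : (ENNReal.ofReal E)⁻¹ • P.map X ≤ μH[(s.toNNReal : ℝ)] := by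
    refine Measure.le_hausdorffMeasure _ _ 1 one_pos fun U hU => ?_
    have hUt : Metric.ediam U ≠ ⊤ := ne_top_of_le_ne_top ENNReal.one_ne_top hU
    rw [Measure.smul_apply, smul_eq_mul, ENNReal.inv_mul_le_iff (by simpa using hE0)
      ENNReal.ofReal_ne_top]
    refine (measure_mono subset_closure).trans ?_
    rw [Measure.map_apply hXm isClosed_closure.measurableSet]
    refine (mass_le P D hD1 M hM1 hM A hA1 hDA s hs0 hs1 C hC h1 h2 _ (Metric.ediam U).toReal
      ENNReal.toReal_nonneg ?_).trans (le_of_eq ?_)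
    · intro ω hω ω' hω'
      have := Metric.edist_le_ediam_of_mem (Set.mem_preimage.1 hω) (Set.mem_preimage.1 hω')
      rw [Metric.ediam_closure, edist_dist, Real.dist_eq] at this
      exact (ENNReal.ofReal_le_iff_le_toReal hUt).1 this
    · rw [← hE, ENNReal.ofReal_mul hE0.le, ← ENNReal.ofReal_rpow_of_nonneg ENNReal.toReal_nonneg
        hs0.le, ENNReal.ofReal_toReal hUt, Real.coe_toNNReal _ hs0.le]
  refine le_dimH_of_hausdorffMeasure_ne_zero (d := s.toNNReal) fun h0 => ?_
  have h3 := Measure.le_iff'.1 hle (Set.range X)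
  rw [h0, Measure.smul_apply, smul_eq_mul, nonpos_iff_eq_zero, mul_eq_zero] at h3
  rcases h3 with h3 | h3
  · simp at h3
  · have := Measure.le_map_apply (μ := P) hXm.aemeasurable (Set.range X)
    rw [h3, Set.preimage_range, measure_univ] at this
    simp at this

/-! ### Independent digits -/

/-- Independent choices `ω k ∈ {0, …, W k - 1}` with prescribed distributions `π k`. -/
lemma exists_indep (W : ℕ → ℕ) (π : ℕ → ℕ → ℝ) (hπ0 : ∀ k j, 0 ≤ π k j)
    (hπ : ∀ k, ∑ j ∈ Finset.range (W k), π k j = 1) :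
    ∃ P : Measure (∀ k, Fin (W k)), IsProbabilityMeasure P ∧
      ∀ (s : Finset ℕ) (ω : ∀ k, Fin (W k)),
        P {ω' | ∀ i ∈ s, ω' i = ω i} = ENNReal.ofReal (∏ i ∈ s, π i (ω i)) := by
  have h1 : ∀ k, ∑ j : Fin (W k), ENNReal.ofReal (π k j) = 1 := by
    intro k
    rw [← ENNReal.ofReal_sum_of_nonneg (fun (j : Fin (W k)) _ => hπ0 k j),
      Fin.sum_univ_eq_sum_range (fun j => π k j), hπ, ENNReal.ofReal_one]
  let p : ∀ k, Measure (Fin (W k)) := fun k => (PMF.ofFintype _ (h1 k)).toMeasure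
  refine ⟨Measure.infinitePi p, inferInstance, fun s ω => ?_⟩
  have h2 : {ω' : ∀ k, Fin (W k) | ∀ i ∈ s, ω' i = ω i} = (s : Set ℕ).pi fun i => {ω i} := by
    ext ω'; simp [Set.mem_pi]
  rw [h2, Measure.infinitePi_pi _ (fun i _ => measurableSet_singleton _),
    ENNReal.ofReal_prod_of_nonneg (fun i _ => hπ0 _ _)]
  refine Finset.prod_congr rfl fun i _ => ?_
  rw [PMF.toMeasure_apply_singleton _ _ (measurableSet_singleton _), PMF.ofFintype_apply]

/-! ### Lower bound, superexponential growth -/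

/-- The largest minorant of `L` which is nondecreasing and grows at most by a factor `β` at each
step. As `L` is infinitely often small against `β ^ k`, the minorant touches `L` infinitely
often. -/
lemma exists_minorant (L : ℕ → ℝ) (hL0 : ∀ k, 0 < L k)
    (hlin : ∀ K : ℝ, ∀ᶠ k : ℕ in atTop, K * k ≤ L k) (β : ℝ) (hβ : 1 < β)
    (hfreq : ∀ ε > 0, ∃ᶠ k : ℕ in atTop, L k < ε * β ^ k) :
    ∃ N : ℕ → ℝ, Monotone N ∧ (∀ k, 0 < N k) ∧ (∀ k, N (k + 1) ≤ β * N k) ∧ (∀ k, N k ≤ L k) ∧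
      (∀ K : ℝ, ∀ᶠ k : ℕ in atTop, K * k ≤ N k) ∧ ∃ᶠ k in atTop, N k = L k := by
  have hβ0 : 0 < β := by linarith
  have hLt : Tendsto L atTop atTop :=
    tendsto_atTop_mono' _ ((hlin 1).mono fun k hk => by simpa using hk) tendsto_natCast_atTop_atTop
  have hat : ∀ k : ℕ, ∃ i, ∀ j, L i * β ^ (k - i) ≤ L j * β ^ (k - j) := by
    intro k
    have : Tendsto (fun i => L i * β ^ (k - i)) cofinite atTop := by
      rw [Nat.cofinite_eq_atTop]
      refine tendsto_atTop_mono (fun i => ?_) hLt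
      exact le_mul_of_one_le_right (hL0 i).le (one_le_pow₀ hβ.le)
    exact this.exists_forall_le
  choose ι hι using hat
  obtain ⟨N, hNdef⟩ : ∃ N : ℕ → ℝ, ∀ k, N k = L (ι k) * β ^ (k - ι k) := ⟨_, fun _ => rfl⟩
  have hNle : ∀ k j, N k ≤ L j * β ^ (k - j) := fun k => by rw [hNdef]; exact hι k
  have hpos : ∀ k, 0 < N k := fun k => by rw [hNdef]; exact mul_pos (hL0 _) (by positivity)
  have hmono : Monotone N := by
    intro k k' hk
    rw [hNdef k']
    refine (hNle k (ι k')).trans ?_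
    exact mul_le_mul_of_nonneg_left (pow_le_pow_right₀ hβ.le (by omega)) (hL0 _).le
  have hNL : ∀ k, N k ≤ L k := fun k => by simpa using hNle k k
  have hstep : ∀ k, N (k + 1) ≤ β * N k := by
    intro k
    refine (hNle (k + 1) (ι k)).trans ?_
    calc L (ι k) * β ^ (k + 1 - ι k) ≤ L (ι k) * β ^ (k - ι k + 1) :=
          mul_le_mul_of_nonneg_left (pow_le_pow_right₀ hβ.le (by omega)) (hL0 _).le
      _ = β * N k := by rw [hNdef]; ring
  have hsteps : ∀ k d, N (k + d) ≤ β ^ d * N k := by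
    intro k d
    induction d with
    | zero => simp
    | succ d ih =>
      calc N (k + (d + 1)) ≤ β * N (k + d) := hstep _
        _ ≤ β * (β ^ d * N k) := by gcongr
        _ = _ := by ring
  refine ⟨N, hmono, hpos, hstep, hNL, ?_, ?_⟩
  · intro K
    obtain ⟨i₀, hi₀⟩ := eventually_atTop.1 ((hlin K).and
      (hLt.eventually_ge_atTop (K / (β - 1))))
    have hexp : ∀ᶠ k : ℕ in atTop, K * k ≤ N 0 * β ^ (k - i₀) := by
      have h1 : Tendsto (fun k : ℕ => K * ((k : ℝ) ^ 1 / β ^ k)) atTop (𝓝 (K * 0)) :=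
        (tendsto_pow_const_div_const_pow_of_one_lt 1 hβ).const_mul K
      rw [mul_zero] at h1
      have h2 := h1.eventually (gt_mem_nhds (show 0 < N 0 / β ^ i₀ from
        div_pos (hpos 0) (by positivity)))
      filter_upwards [h2, eventually_ge_atTop i₀] with k hk hk'
      rw [pow_one, ← mul_div_assoc, div_lt_div_iff₀ (by positivity) (by positivity)] at hk
      rw [show k = (k - i₀) + i₀ by omega, pow_add, ← mul_assoc, ← show k = (k - i₀) + i₀ by omega]
        at hk
      exact (lt_of_mul_lt_mul_right hk (by positivity)).le
    filter_upwards [hexp, eventually_ge_atTop i₀] with k hk hk'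
    rw [hNdef]
    set i := ι k
    rcases lt_or_ge i i₀ with hi | hi
    · refine hk.trans ?_
      have h1 : N 0 ≤ L i := by simpa using hNle 0 i
      have h2 : β ^ (k - i₀) ≤ β ^ (k - i) := pow_le_pow_right₀ hβ.le (by omega)
      have := hL0 i
      gcongr
    · obtain ⟨h1, h2⟩ := hi₀ i hi
      rw [div_le_iff₀ (by linarith)] at h2
      rcases le_total k i with hki | hki
      · obtain ⟨h3, -⟩ := hi₀ i hi
        rw [Nat.sub_eq_zero_of_le hki, pow_zero, mul_one]
        rcases le_total 0 K with hK | hK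
        · refine le_trans ?_ h3
          have : (k : ℝ) ≤ i := by exact_mod_cast hki
          gcongr
        · exact le_trans (mul_nonpos_of_nonpos_of_nonneg hK (by positivity)) (hL0 i).le
      · have hber : 1 + ((k - i : ℕ) : ℝ) * (β - 1) ≤ β ^ (k - i) := by
          have := one_add_mul_le_pow (a := β - 1) (by linarith) (k - i)
          simpa using this
        have hc : (k : ℝ) = ((k - i : ℕ) : ℝ) + i := by
          rw [← Nat.cast_add]; congr 1; omega
        calc K * k = K * i + ((k - i : ℕ) : ℝ) * K := by rw [hc]; ring
          _ ≤ L i + ((k - i : ℕ) : ℝ) * (L i * (β - 1)) := by gcongr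
          _ = L i * (1 + ((k - i : ℕ) : ℝ) * (β - 1)) := by ring
          _ ≤ _ := mul_le_mul_of_nonneg_left hber (hL0 i).le
  · rw [frequently_atTop]
    intro K
    -- this `i₁` is so small that indices below `K` cannot be minimisers
    obtain ⟨i₁, hi₁, hlt⟩ := frequently_atTop.1 (hfreq (N 0 / β ^ K) (by
      have := hpos 0; positivity)) K
    have hN1 : N i₁ = L (ι i₁) * β ^ (i₁ - ι i₁) := hNdef _
    refine ⟨ι i₁, ?_, ?_⟩
    · by_contra hcon
      push Not at hcon
      have h1 : N 0 ≤ L (ι i₁) := by simpa using hNle 0 (ι i₁)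
      have h2 : N 0 / β ^ K * β ^ i₁ ≤ N i₁ := by
        rw [hN1, div_mul_eq_mul_div, div_le_iff₀ (by positivity), mul_assoc, ← pow_add]
        have := hL0 (ι i₁)
        have h3 : β ^ i₁ ≤ β ^ (i₁ - ι i₁ + K) := pow_le_pow_right₀ hβ.le (by omega)
        exact mul_le_mul h1 h3 (by positivity) this.le
      linarith [hNL i₁]
    · refine le_antisymm (hNL _) ?_
      rcases le_total (ι i₁) i₁ with h | h
      · have h1 := hsteps (ι i₁) (i₁ - ι i₁)
        rw [show ι i₁ + (i₁ - ι i₁) = i₁ by omega, hN1, mul_comm] at h1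
        exact le_of_mul_le_mul_left h1 (by positivity)
      · have h1 := hmono h
        rw [hN1, Nat.sub_eq_zero_of_le h, pow_zero, mul_one] at h1
        exact h1

/-- The logarithms of the partial products of the digits used in the superexponential case:
windows of length `m` reach `L` infinitely often, windows of length `m - 1` stay strictly below
`N ≤ L`, and each step multiplies `T` by at most `β`. -/
lemma exists_profile (m : ℕ) (hm : 1 ≤ m) (L N : ℕ → ℝ) (β : ℝ) (hβ : 1 < β)
    (hmono : Monotone N) (hpos : ∀ k, 0 < N k) (hstep : ∀ k, N (k + 1) ≤ β * N k)
    (htop : Tendsto N atTop atTop) (hNL : ∃ᶠ k in atTop, N k = L k) :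
    ∃ T : ℕ → ℝ, Monotone T ∧ (∀ k, T (k + 1) ≤ β * T k) ∧ (∀ k, N k / (β ^ m - 1) ≤ T k) ∧
      (∀ k, T (k + (m - 1)) - T k ≤ (β ^ m - β) / (β ^ m - 1) * N k) ∧
      ∃ᶠ k in atTop, L k ≤ T (k + m) - T k := by
  have hβ0 : 0 < β := by linarith
  have hβm : 1 < β ^ m := one_lt_pow₀ hβ (by omega)
  have hβm' : 0 < β ^ m - 1 := by linarith
  have hsteps : ∀ k d, N (k + d) ≤ β ^ d * N k := by
    intro k d
    induction d with
    | zero => simp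
    | succ d ih =>
      calc N (k + (d + 1)) ≤ β * N (k + d) := hstep _
        _ ≤ β * (β ^ d * N k) := by gcongr
        _ = _ := by ring
  obtain ⟨φ, hφ1, hφ2⟩ := exists_seq_of_forall_finset_exists (fun k => N k = L k)
    (fun i j => i < j ∧ β ^ m * N i ≤ N j) (fun S _ => by
      obtain ⟨y, hy, hy2⟩ := (hNL.and_eventually ((eventually_all_finset S).2 fun x _ =>
        (eventually_gt_atTop x).and (htop.eventually_ge_atTop (β ^ m * N x)))).exists
      exact ⟨y, hy, hy2⟩)
  classical
  let I : Set ℕ := Set.range φ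
  have hI : ∀ i ∈ I, ∀ j ∈ I, i < j → β ^ m * N i ≤ N j := by
    rintro _ ⟨a, rfl⟩ _ ⟨b, rfl⟩ hab
    rcases lt_trichotomy a b with h | h | h
    · exact (hφ2 a b h).2
    · subst h; omega
    · have := (hφ2 b a h).1; omega
  let w : ℕ → ℕ → ℝ := fun k i => if i ∈ I ∨ i = k then β ^ (min (k - i) m) * N i else 0
  let U : ℕ → ℝ := fun k => (Finset.range (k + 1)).sup' ⟨0, by simp⟩ (w k)
  have hUge : ∀ k i, i ≤ k → (i ∈ I ∨ i = k) → β ^ (min (k - i) m) * N i ≤ U k := by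
    intro k i hi hI
    have := Finset.le_sup' (w k) (Finset.mem_range.2 (Nat.lt_succ_of_le hi))
    simp only [w, if_pos hI] at this
    exact this
  have hUN : ∀ k, N k ≤ U k := fun k => by simpa using hUge k k le_rfl (Or.inr rfl)
  have hUle : ∀ k (c : ℝ), (∀ i ≤ k, (i ∈ I ∨ i = k) → β ^ (min (k - i) m) * N i ≤ c) → U k ≤ c := by
    intro k c h
    have hk0 : 0 ≤ c := by
      have := h k le_rfl (Or.inr rfl)
      refine le_trans ?_ this
      have := hpos k
      positivity
    refine Finset.sup'_le _ _ fun i hi => ?_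
    simp only [w]
    split_ifs with h'
    · exact h i (Nat.lt_succ_iff.1 (Finset.mem_range.1 hi)) h'
    · exact hk0
  have hUmono : ∀ k, U k ≤ U (k + 1) := by
    intro k
    refine hUle k _ fun i hi h' => ?_
    rcases h' with h' | rfl
    · refine le_trans ?_ (hUge (k + 1) i (by omega) (Or.inl h'))
      have := hpos i
      have h2 : β ^ (min (k - i) m) ≤ β ^ (min (k + 1 - i) m) :=
        pow_le_pow_right₀ hβ.le (by omega)
      gcongr
    · refine le_trans ?_ (hUN _)
      simpa using hmono (Nat.le_succ i)
  have hUstep : ∀ k, U (k + 1) ≤ β * U k := by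
    intro k
    refine hUle _ _ fun i hi h' => ?_
    rcases Nat.lt_or_ge k i with h | h
    · have : i = k + 1 := by omega
      subst this
      simp only [Nat.sub_self, Nat.zero_min, pow_zero, one_mul]
      exact (hstep k).trans (mul_le_mul_of_nonneg_left (hUN k) hβ0.le)
    · rcases h' with h' | h'
      · have h1 := hUge k i h (Or.inl h')
        have h2 : β ^ (min (k + 1 - i) m) ≤ β ^ (min (k - i) m + 1) :=
          pow_le_pow_right₀ hβ.le (by omega)
        calc β ^ (min (k + 1 - i) m) * N i ≤ β ^ (min (k - i) m + 1) * N i :=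
              mul_le_mul_of_nonneg_right h2 (hpos i).le
          _ = β * (β ^ (min (k - i) m) * N i) := by ring
          _ ≤ _ := mul_le_mul_of_nonneg_left h1 hβ0.le
      · omega
  refine ⟨fun k => U k / (β ^ m - 1), ?_, ?_, ?_, ?_, ?_⟩
  · exact monotone_nat_of_le_succ fun k => div_le_div_of_nonneg_right (hUmono k) hβm'.le
  · intro k
    rw [← mul_div_assoc]
    exact div_le_div_of_nonneg_right (hUstep k) hβm'.le
  · exact fun k => div_le_div_of_nonneg_right (hUN k) hβm'.le
  · intro k
    rw [← sub_div, div_mul_eq_mul_div]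
    refine div_le_div_of_nonneg_right ?_ hβm'.le
    have hbm : β ^ m = β * β ^ (m - 1) := by rw [← pow_succ']; congr 1; omega
    have hbm1 : 1 ≤ β ^ (m - 1) := one_le_pow₀ hβ.le
    have key : ∀ i, k ≤ i → i ≤ k + (m - 1) → β ^ (min (k + (m - 1) - i) m) * N i ≤
        U k + (β ^ m - β) * N k := by
      intro i hi hi2
      have h1 := hsteps k (i - k)
      rw [show k + (i - k) = i by omega] at h1
      have h2 : β ^ (m - 1) * N k ≤ U k + (β ^ m - β) * N k := by
        have h3 := hUN k
        have h4 : (β ^ (m - 1) - 1) * N k ≤ (β ^ m - β) * N k := by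
          refine mul_le_mul_of_nonneg_right ?_ (hpos k).le
          rw [hbm]; nlinarith
        linarith
      refine le_trans ?_ h2
      calc β ^ (min (k + (m - 1) - i) m) * N i
          ≤ β ^ (k + (m - 1) - i) * (β ^ (i - k) * N k) := by
            have := hpos i
            have h3 : β ^ (min (k + (m - 1) - i) m) ≤ β ^ (k + (m - 1) - i) :=
              pow_le_pow_right₀ hβ.le (by omega)
            gcongr
        _ = β ^ (m - 1) * N k := by
            rw [← mul_assoc, ← pow_add]; congr 2; omega
    rw [sub_le_iff_le_add']
    refine hUle _ _ fun i hi h' => ?_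
    rcases Nat.lt_or_ge i k with h | h
    · rcases h' with h' | h'
      · have h1 := hUge k i h.le (Or.inl h')
        have h2 : β * N i ≤ U k := by
          refine le_trans (mul_le_mul_of_nonneg_right ?_ (hpos i).le) h1
          calc β = β ^ 1 := (pow_one β).symm
            _ ≤ _ := pow_le_pow_right₀ hβ.le (by omega)
        have h3 : β ^ (min (k + (m - 1) - i) m) * N i ≤ β ^ m * N i :=
          mul_le_mul_of_nonneg_right (pow_le_pow_right₀ hβ.le (by omega)) (hpos i).le
        have h4 : (β ^ m - β) * N i ≤ (β ^ m - β) * N k := by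
          refine mul_le_mul_of_nonneg_left (hmono h.le) ?_
          rw [hbm]; nlinarith
        linarith
      · omega
    · exact key i h hi
  · rw [frequently_atTop]
    intro K
    have hφm : StrictMono φ := fun a b h => (hφ2 a b h).1
    refine ⟨φ K, hφm.id_le K, ?_⟩
    have hmem : φ K ∈ I := ⟨K, rfl⟩
    have h1 := hUge (φ K + m) (φ K) (by omega) (Or.inl hmem)
    rw [show φ K + m - φ K = m by omega, min_self] at h1
    have h2 : U (φ K) ≤ N (φ K) := by
      refine hUle _ _ fun i hi h' => ?_
      rcases hi.lt_or_eq with h | h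
      · rcases h' with h' | h'
        · refine le_trans (mul_le_mul_of_nonneg_right ?_ (hpos i).le) (hI i h' _ hmem h)
          exact pow_le_pow_right₀ hβ.le (by omega)
        · omega
      · subst h; simp
    rw [← sub_div, le_div_iff₀ hβm', ← hφ1 K]
    nlinarith

/-- Every `s < 1 / (1 + β)` is a lower bound for the dimension. The digits are independent and
uniform on `{n_k + 1, …, 2 n_k}`, where `n_k = ⌈exp (T_{k+1} - T_k)⌉` for the profile `T` of
`exists_profile`. -/
lemma lower_inf (m : ℕ) (hm : 1 ≤ m) (Φ : ℕ → ℝ) (hΦ1 : ∀ n, 1 < Φ n)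
    (hlin : ∀ l : ℝ, ∀ᶠ n : ℕ in atTop, Real.exp (l * n) ≤ Φ n) (β : ℝ) (hβ : 1 < β)
    (hfreq : ∀ ε > 0, ∃ᶠ n : ℕ in atTop, Real.log (Φ n) < ε * β ^ n)
    (s : ℝ) (hs0 : 0 < s) (hs : s * (1 + β) < 1) :
    ENNReal.ofReal s ≤ dimH (Fm m Φ) := by
  have hβ0 : 0 < β := by linarith
  have hΦ0 : ∀ n, 0 < Φ n := fun n => lt_trans one_pos (hΦ1 n)
  set L : ℕ → ℝ := fun k => Real.log (Φ (k + 1)) with hL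
  have hL0 : ∀ k, 0 < L k := fun k => Real.log_pos (hΦ1 _)
  have hLlin : ∀ K : ℝ, ∀ᶠ k : ℕ in atTop, K * k ≤ L k := by
    intro K
    filter_upwards [(tendsto_add_atTop_nat 1).eventually (hlin |K|)] with k hk
    rw [← Real.le_log_iff_exp_le (hΦ0 _)] at hk
    refine le_trans ?_ hk
    push_cast
    have : (0 : ℝ) ≤ k := Nat.cast_nonneg k
    nlinarith [le_abs_self K, abs_nonneg K]
  have hLfreq : ∀ ε > 0, ∃ᶠ k : ℕ in atTop, L k < ε * β ^ k := by
    intro ε hε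
    have := frequently_succ (hfreq (ε / β) (by positivity))
    refine this.mono fun k hk => ?_
    rw [pow_succ, div_mul_eq_mul_div, ← mul_assoc, mul_div_assoc, div_self hβ0.ne', mul_one] at hk
    exact hk
  obtain ⟨N, hNm, hN0, hNs, hNL, hNlin, hNf⟩ := exists_minorant L hL0 hLlin β hβ hLfreq
  have hNt : Tendsto N atTop atTop :=
    tendsto_atTop_mono' _ ((hNlin 1).mono fun k hk => by simpa using hk)
      tendsto_natCast_atTop_atTop
  obtain ⟨T, hTm, hTs, hTN, hTw, hTf⟩ := exists_profile m hm L N β hβ hNm hN0 hNs hNt hNf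
  have hβm : 1 < β ^ m := one_lt_pow₀ hβ (by omega)
  have hT0 : ∀ k, 0 < T k := fun k => lt_of_lt_of_le (div_pos (hN0 k) (by linarith)) (hTN k)
  -- the scale of the digits
  set n : ℕ → ℕ := fun k => ⌈Real.exp (T (k + 1) - T k)⌉₊ with hn
  have hexp1 : ∀ k, 1 ≤ Real.exp (T (k + 1) - T k) := fun k =>
    Real.one_le_exp (by linarith [hTm (Nat.le_succ k)])
  have hn_lo : ∀ k, Real.exp (T (k + 1) - T k) ≤ n k := fun k => Nat.le_ceil _
  have hn_hi : ∀ k, (n k : ℝ) ≤ 2 * Real.exp (T (k + 1) - T k) := fun k => by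
    have := Nat.ceil_lt_add_one (R := ℝ) (a := Real.exp (T (k + 1) - T k)) (by positivity)
    have := hexp1 k
    simp only [hn]; linarith
  have hn1 : ∀ k, (1 : ℝ) ≤ n k := fun k => (hexp1 k).trans (hn_lo k)
  have hn1' : ∀ k, 1 ≤ n k := fun k => by exact_mod_cast hn1 k
  have hprod_lo : ∀ k d, Real.exp (T (k + d) - T k) ≤ ∏ i ∈ Finset.range d, (n (k + i) : ℝ) := by
    intro k d
    induction d with
    | zero => simp
    | succ d ih =>
      rw [Finset.prod_range_succ, show T (k + (d + 1)) - T k =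
        (T (k + d) - T k) + (T (k + d + 1) - T (k + d)) by rw [add_assoc]; ring, Real.exp_add]
      exact mul_le_mul ih (hn_lo _) (by positivity) (by positivity)
  have hprod_hi : ∀ k d, ∏ i ∈ Finset.range d, (2 * n (k + i) : ℝ) ≤
      4 ^ d * Real.exp (T (k + d) - T k) := by
    intro k d
    induction d with
    | zero => simp
    | succ d ih =>
      rw [Finset.prod_range_succ, show T (k + (d + 1)) - T k =
        (T (k + d) - T k) + (T (k + d + 1) - T (k + d)) by rw [add_assoc]; ring, Real.exp_add]
      calc _ ≤ (4 ^ d * Real.exp (T (k + d) - T k)) *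
            (2 * (2 * Real.exp (T (k + d + 1) - T (k + d)))) := by
            refine mul_le_mul ih ?_ (by positivity) (by positivity)
            linarith [hn_hi (k + d)]
        _ = _ := by ring
  obtain ⟨P, hP, hPc⟩ := exists_indep n (fun k _ => (n k : ℝ)⁻¹) (fun k _ => by positivity)
    (fun k => by
      rw [Finset.sum_const, Finset.card_range, nsmul_eq_mul]
      exact mul_inv_cancel₀ (by have := hn1 k; positivity))
  let D : ℕ → (∀ k, Fin (n k)) → ℕ := fun k ω => n k + 1 + ω k
  have hD2 : ∀ k ω, 2 ≤ D k ω := fun k ω => by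
    have := hn1' k
    simp only [D]; omega
  have hD1 : ∀ k ω, 1 ≤ D k ω := fun k ω => by have := hD2 k ω; omega
  have hDlo : ∀ k ω, (n k : ℝ) ≤ D k ω := fun k ω => by
    have : n k ≤ D k ω := by simp only [D]; omega
    exact_mod_cast this
  have hDhi : ∀ k ω, (D k ω : ℝ) ≤ 2 * n k := fun k ω => by
    have : D k ω ≤ 2 * n k := by have := (ω k).2; simp only [D]; omega
    exact_mod_cast this
  have hcyl : ∀ k (ω : ∀ k, Fin (n k)), P {ω' | ∀ i < k, D i ω' = D i ω} =
      ENNReal.ofReal (∏ i ∈ Finset.range k, (n i : ℝ)⁻¹) := by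
    intro k ω
    rw [← hPc (Finset.range k) ω]
    congr 1
    ext ω'
    simp only [Set.mem_ofPred_eq, Finset.mem_range, D]
    refine forall₂_congr fun i _ => ?_
    rw [Fin.ext_iff]; omega
  -- the constant in the mass estimate
  have hη : 0 < (1 - s * (1 + β)) / (β ^ m - 1) := div_pos (by linarith) (by linarith)
  obtain ⟨k₀, hk₀⟩ := eventually_atTop.1
    (hNlin (Real.log 64 / ((1 - s * (1 + β)) / (β ^ m - 1))))
  have hl64 : 0 < Real.log 64 := Real.log_pos (by norm_num)
  have hkT : ∀ k : ℕ, k * Real.log 64 ≤ (1 - s * (1 + β)) * T k + k₀ * Real.log 64 := by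
    intro k
    rcases le_total k₀ k with h | h
    · have h1 := hk₀ k h
      rw [div_mul_eq_mul_div, div_le_iff₀ hη] at h1
      have h2 : (1 - s * (1 + β)) * (N k / (β ^ m - 1)) ≤ (1 - s * (1 + β)) * T k :=
        mul_le_mul_of_nonneg_left (hTN k) (by linarith)
      have h3 : N k * ((1 - s * (1 + β)) / (β ^ m - 1)) = (1 - s * (1 + β)) * (N k / (β ^ m - 1)) := by
        ring
      have h4 : 0 ≤ k₀ * Real.log 64 := by positivity
      linarith
    · have h1 : (k : ℝ) * Real.log 64 ≤ k₀ * Real.log 64 := by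
        have : (k : ℝ) ≤ k₀ := by exact_mod_cast h
        gcongr
      have := mul_pos (show 0 < 1 - s * (1 + β) by linarith) (hT0 k)
      linarith
  have hs1 : s ≤ 1 := by nlinarith
  set C := 2 * Real.exp (T 0 + k₀ * Real.log 64) with hC
  have hmass : ∀ k ω, ∏ i ∈ Finset.range k, (n i : ℝ)⁻¹ ≤
      C * ((qq (fun i => D i ω) k : ℝ) ^ 2 * n k) ^ (-s) := by
    intro k ω
    have hq1 : (1 : ℝ) ≤ qq (fun i => D i ω) k := by
      exact_mod_cast qq_pos (fun i => hD1 i ω) k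
    have hnk := hn1 k
    rw [Finset.prod_inv_distrib, Real.rpow_neg (by positivity), ← div_eq_mul_inv, inv_eq_one_div,
      div_le_div_iff₀ (Finset.prod_pos fun i _ => by have := hn1 i; positivity) (by positivity),
      one_mul]
    have hlo := hprod_lo 0 k
    have hhi := hprod_hi 0 k
    simp only [zero_add] at hlo hhi
    have hq : (qq (fun i => D i ω) k : ℝ) ≤ 8 ^ k * Real.exp (T k) := by
      have h1 : (qq (fun i => D i ω) k : ℝ) ≤ 2 ^ k * ∏ i ∈ Finset.range k, (D i ω : ℝ) := by
        exact_mod_cast qq_le_prod (a := fun i => D i ω) (fun i => hD1 i ω) k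
      have h2 : ∏ i ∈ Finset.range k, (D i ω : ℝ) ≤ ∏ i ∈ Finset.range k, (2 * n i : ℝ) :=
        Finset.prod_le_prod (fun i _ => by positivity) fun i _ => hDhi i ω
      have h3 : Real.exp (T k - T 0) ≤ Real.exp (T k) := Real.exp_le_exp.2 (by linarith [hT0 0])
      calc _ ≤ _ := h1
        _ ≤ 2 ^ k * (4 ^ k * Real.exp (T k)) := by
            refine mul_le_mul_of_nonneg_left (h2.trans (hhi.trans ?_)) (by positivity)
            exact mul_le_mul_of_nonneg_left h3 (by positivity)
        _ = _ := by rw [← mul_assoc, ← mul_pow]; norm_num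
    have hA : (n k : ℝ) ≤ 2 * Real.exp ((β - 1) * T k) := by
      refine (hn_hi k).trans ?_
      have := hTs k
      have : Real.exp (T (k + 1) - T k) ≤ Real.exp ((β - 1) * T k) :=
        Real.exp_le_exp.2 (by linarith)
      linarith
    have hqA : (qq (fun i => D i ω) k : ℝ) ^ 2 * n k ≤ 2 * 64 ^ k * Real.exp ((1 + β) * T k) := by
      calc _ ≤ (8 ^ k * Real.exp (T k)) ^ 2 * (2 * Real.exp ((β - 1) * T k)) := by gcongr
        _ = _ := by
          rw [show (1 + β) * T k = T k + T k + (β - 1) * T k by ring, Real.exp_add, Real.exp_add,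
            show (64 : ℝ) = 8 ^ 2 by norm_num, ← pow_mul]
          ring
    have h64 : (1 : ℝ) ≤ 2 * 64 ^ k := by
      have : (1 : ℝ) ≤ 64 ^ k := one_le_pow₀ (by norm_num)
      linarith
    calc ((qq (fun i => D i ω) k : ℝ) ^ 2 * n k) ^ s
        ≤ (2 * 64 ^ k * Real.exp ((1 + β) * T k)) ^ s := by gcongr
      _ = (2 * 64 ^ k : ℝ) ^ s * Real.exp (s * (1 + β) * T k) := by
          rw [Real.mul_rpow (by positivity) (by positivity), ← Real.exp_mul]
          congr 2; ring
      _ ≤ (2 * 64 ^ k : ℝ) * Real.exp (s * (1 + β) * T k) := by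
          refine mul_le_mul_of_nonneg_right ?_ (by positivity)
          conv_rhs => rw [← Real.rpow_one (2 * 64 ^ k : ℝ)]
          exact Real.rpow_le_rpow_of_exponent_le h64 hs1
      _ ≤ C * Real.exp (T k - T 0) := by
          have e1 : (64 : ℝ) ^ k = Real.exp (k * Real.log 64) := by
            rw [← Real.log_pow, Real.exp_log (by positivity)]
          have e2 : Real.exp (k * Real.log 64) * Real.exp (s * (1 + β) * T k) ≤
              Real.exp (T 0 + k₀ * Real.log 64) * Real.exp (T k - T 0) := by
            rw [← Real.exp_add, ← Real.exp_add]
            refine Real.exp_le_exp.2 ?_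
            linarith [hkT k]
          rw [hC, e1]
          linarith
      _ ≤ C * ∏ i ∈ Finset.range k, (n i : ℝ) :=
          mul_le_mul_of_nonneg_left hlo (by positivity)
  have hmain := mass_dist P D (fun k => (measurable_of_countable
      (fun j : Fin (n k) => n k + 1 + (j : ℕ))).comp (measurable_pi_apply k)) hD1 2 (by norm_num)
    (fun k ω h => by have := hD2 k ω; omega) (fun k => n k) hn1 (fun k ω => by
      push_cast; exact hDhi k ω) s hs0 hs1 C (by positivity)
    (fun k ω => by
      rw [hcyl]; exact ENNReal.ofReal_le_ofReal (hmass k ω))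
    (fun k ω => by
      rw [hcyl, Finset.prod_range_succ, ← div_eq_mul_inv]
      refine ENNReal.ofReal_le_ofReal (div_le_div_of_nonneg_right (hmass k ω) (by positivity)))
  refine hmain.trans (dimH_mono ?_)
  rintro _ ⟨ω, rfl⟩
  set x := cfv fun k => D k ω with hx
  have hdg : ∀ k, dg x k = D k ω := fun k => by rw [hx, dg_cfv (fun i => hD1 i ω)]
  have hcf : ∀ k i, cfA (k + 1 + i) x = D (k + i) ω := fun k i => by
    rw [← hdg, dg]; congr 1; omega
  have hxI : x ∈ Irr := cfv_mem fun i => hD1 i ω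
  refine ⟨⟨hxI.1.le, hxI.2.1⟩, hxI.2.2, ?_, ?_⟩
  · have hf : ∃ᶠ k in atTop, Φ (k + 1) ≤ ∏ i ∈ Finset.range m, (cfA (k + 1 + i) x : ℝ) := by
      refine hTf.mono fun k hk => ?_
      calc Φ (k + 1) = Real.exp (L k) := (Real.exp_log (hΦ0 _)).symm
        _ ≤ Real.exp (T (k + m) - T k) := Real.exp_le_exp.2 hk
        _ ≤ _ := hprod_lo k m
        _ ≤ _ := Finset.prod_le_prod (fun i _ => by positivity) fun i _ => by
            rw [hcf]; exact hDlo _ ω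
    exact (tendsto_add_atTop_nat 1).frequently hf
  · have hδ : 0 < (β - 1) / (β ^ m - 1) := div_pos (by linarith) (by linarith)
    have hev : ∀ᶠ k in atTop, ∏ i ∈ Finset.range (m - 1), (cfA (k + 1 + i) x : ℝ) < Φ (k + 1) := by
      filter_upwards [hNt.eventually_gt_atTop (Real.log (4 ^ (m - 1)) / ((β - 1) / (β ^ m - 1)))]
        with k hk
      rw [div_lt_iff₀ hδ] at hk
      calc ∏ i ∈ Finset.range (m - 1), (cfA (k + 1 + i) x : ℝ)
          ≤ ∏ i ∈ Finset.range (m - 1), (2 * n (k + i) : ℝ) :=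
            Finset.prod_le_prod (fun i _ => by positivity) fun i _ => by
              rw [hcf]; exact hDhi _ ω
        _ ≤ 4 ^ (m - 1) * Real.exp (T (k + (m - 1)) - T k) := hprod_hi k (m - 1)
        _ ≤ Real.exp (Real.log (4 ^ (m - 1))) * Real.exp ((β ^ m - β) / (β ^ m - 1) * N k) := by
            rw [Real.exp_log (by positivity)]
            exact mul_le_mul_of_nonneg_left (Real.exp_le_exp.2 (hTw k)) (by positivity)
        _ < Real.exp (N k) := by
            rw [← Real.exp_add]
            refine Real.exp_lt_exp.2 ?_
            have : N k = N k * ((β - 1) / (β ^ m - 1)) + (β ^ m - β) / (β ^ m - 1) * N k := by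
              have : β ^ m - 1 ≠ 0 := by linarith
              field_simp; ring
            linarith
        _ ≤ Φ (k + 1) := by
            rw [← Real.le_log_iff_exp_le (hΦ0 _)]; exact hNL k
    obtain ⟨K, hK⟩ := eventually_atTop.1 hev
    filter_upwards [eventually_ge_atTop (K + 1)] with j hj
    obtain ⟨k, rfl⟩ : ∃ k, j = k + 1 := ⟨j - 1, by omega⟩
    exact hK k (by omega)

/-! ### Block constructions -/

/-- Functions on `ℕ` may be prescribed through the decomposition `k = r + J * N + i`, `i < N`, of
the positions `k ≥ r`. -/
lemma exists_grid {X : Type*} (r N : ℕ) (x₀ : X) (f : ℕ → ℕ → X) :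
    ∃ A : ℕ → X, (∀ k < r, A k = x₀) ∧ ∀ J, ∀ i < N, A (r + J * N + i) = f J i := by
  refine ⟨fun k => if k < r then x₀ else f ((k - r) / N) ((k - r) % N), fun k hk => if_pos hk,
    fun J i hi => ?_⟩
  have h1 : r + J * N + i - r = i + N * J := by rw [mul_comm N J]; omega
  have h2 : ¬ (r + J * N + i < r) := by omega
  have hN : 0 < N := by omega
  simp only [h2, if_false, h1]
  rw [Nat.add_mul_div_left _ _ hN, Nat.add_mul_mod_self_left, Nat.mod_eq_of_lt hi,
    Nat.div_eq_of_lt hi, zero_add]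

lemma grid_cases (r N : ℕ) (hN : 0 < N) (k : ℕ) :
    k < r ∨ ∃ J i, i < N ∧ k = r + J * N + i := by
  rcases Nat.lt_or_ge k r with h | h
  · exact Or.inl h
  · refine Or.inr ⟨(k - r) / N, (k - r) % N, Nat.mod_lt _ hN, ?_⟩
    have := Nat.div_add_mod' (k - r) N
    omega

lemma prod_ite_min (f : ℕ → ℝ) (m i : ℕ) :
    ∏ j ∈ Finset.range i, (if j < m then f j else 1) = ∏ j ∈ Finset.range (min i m), f j := by
  induction i with
  | zero => simp
  | succ i ih =>
    rw [Finset.prod_range_succ, ih]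
    by_cases h : i < m
    · rw [if_pos h, min_eq_left h.le, min_eq_left (Nat.succ_le_of_lt h), Finset.prod_range_succ]
    · rw [if_neg h, min_eq_right (by omega), min_eq_right (by omega), mul_one]

lemma mass_step {μ Q e q c t : ℝ} (hμ : 0 ≤ μ) (hQ : 0 ≤ Q) (hq0 : 0 ≤ q) (hc : 0 ≤ c)
    (ht : 0 ≤ t) (h : μ * Q ^ t ≤ e) (hq : q ≤ c * Q) : μ * q ^ t ≤ e * c ^ t := by
  calc μ * q ^ t ≤ μ * (c * Q) ^ t :=
        mul_le_mul_of_nonneg_left (Real.rpow_le_rpow hq0 hq ht) hμ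
    _ = μ * Q ^ t * c ^ t := by rw [Real.mul_rpow hc hQ]; ring
    _ ≤ e * c ^ t := mul_le_mul_of_nonneg_right h (Real.rpow_nonneg hc _)

/-- The digits are grouped, after a prefix of `r` digits `2`, into blocks of length `N`. In a
special block the first `m` digits are uniform on `{n_i + 1, …, 2 n_i}` and the others are `2`; in
the other blocks a word `wd j` is chosen with probability `wt j`. If `e J` bounds the mass of
cylinders at the start of block `J`, multiplied by `q ^ (2 s)`, then the resulting set has
dimension at least `s`. -/
lemma block_scheme (m N r : ℕ) (hm : 1 ≤ m) (hmN : m ≤ N) (spec : ℕ → Prop) (nn : ℕ → ℕ → ℕ)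
    (hnn : ∀ J i, 1 ≤ nn J i) (Wd : ℕ) (wd : ℕ → ℕ → ℕ)
    (hwd1 : ∀ j i, 1 ≤ wd j i) (hwd2 : ∀ j, wd j (N - 1) = 2)
    (hinj : ∀ j < Wd, ∀ j' < Wd, (∀ i < N, wd j i = wd j' i) → j = j')
    (M : ℕ) (hM2 : 2 ≤ M) (hwM : ∀ j < Wd, ∀ i < N, wd j i ≤ M)
    (wt : ℕ → ℝ) (hwt0 : ∀ j, 0 ≤ wt j) (hwt : ∑ j ∈ Finset.range Wd, wt j = 1)
    (A : ℕ → ℕ) (hA0 : ∀ k < r, A k = 1) (hA1 : ∀ J, spec J → ∀ i < m, A (r + J * N + i) = nn J i)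
    (hA2 : ∀ J, spec J → ∀ i < N, m ≤ i → A (r + J * N + i) = 1)
    (hA3 : ∀ J, ¬ spec J → ∀ i < N, A (r + J * N + i) = 1)
    (s : ℝ) (hs0 : 0 < s) (hs1 : s ≤ 1) (e : ℕ → ℝ) (E C₁ : ℝ) (hE : ∀ J, e J ≤ E) (hC₁ : 0 ≤ C₁)
    (he0 : (qq (fun _ => 2) r : ℝ) ^ (2 * s) ≤ e 0)
    (hreg : ∀ J, ¬ spec J → ∀ j < Wd, e J * (2 * qq (wd j) N : ℝ) ^ (2 * s) * wt j ≤ e (J + 1))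
    (hsp : ∀ J, spec J → ∀ i < N,
      e J * (2 * 4 ^ N * ∏ j ∈ Finset.range (min i m), (nn J j : ℝ)) ^ (2 * s) *
        (∏ j ∈ Finset.range (min i m), (nn J j : ℝ))⁻¹ * (A (r + J * N + i) : ℝ) ^ s ≤ C₁)
    (hsp' : ∀ J, spec J →
      e J * (2 * 4 ^ N * ∏ j ∈ Finset.range m, (nn J j : ℝ)) ^ (2 * s) *
        (∏ j ∈ Finset.range m, (nn J j : ℝ))⁻¹ ≤ e (J + 1)) :
    ENNReal.ofReal s ≤ dimH {x | x ∈ Irr ∧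
      (∀ J, spec J → ∀ i < m, nn J i ≤ dg x (r + J * N + i)) ∧ ∀ k, dg x k ≤ M * A k} := by
  classical
  have hN0 : 0 < N := by omega
  obtain ⟨W, hW0, hW⟩ := exists_grid r N (1 : ℕ)
    (fun J i => if spec J then (if i < m then nn J i else 1) else (if i = 0 then Wd else 1))
  obtain ⟨π, hπ0, hπ⟩ := exists_grid r N (fun _ : ℕ => (1 : ℝ))
    (fun J i => if spec J then (if i < m then fun _ => (nn J i : ℝ)⁻¹ else fun _ => 1)
      else (if i = 0 then wt else fun _ => 1))
  obtain ⟨D, hD0, hD⟩ := exists_grid r N (fun _ : ∀ k, Fin (W k) => 2)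
    (fun J i => if spec J then (if i < m then fun ω => nn J i + 1 + (ω (r + J * N + i) : ℕ)
      else fun _ => 2) else fun ω => wd (ω (r + J * N)) i)
  have hnn0 : ∀ J i, (0 : ℝ) < nn J i := fun J i => by exact_mod_cast hnn J i
  have hπnn : ∀ k j, 0 ≤ π k j := by
    intro k j
    rcases grid_cases r N hN0 k with h | ⟨J, i, hi, rfl⟩
    · rw [hπ0 k h]; norm_num
    · rw [hπ J i hi]
      split_ifs
      · have := hnn0 J i; positivity
      · norm_num
      · exact hwt0 j
      · norm_num
  have hπsum : ∀ k, ∑ j ∈ Finset.range (W k), π k j = 1 := by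
    intro k
    rcases grid_cases r N hN0 k with h | ⟨J, i, hi, rfl⟩
    · rw [hπ0 k h, hW0 k h]; simp
    · rw [hπ J i hi, hW J i hi]
      split_ifs
      · rw [Finset.sum_const, Finset.card_range, nsmul_eq_mul]
        exact mul_inv_cancel₀ (hnn0 J i).ne'
      · simp
      · exact hwt
      · simp
  obtain ⟨P, hP, hPc⟩ := exists_indep W π hπnn hπsum
  have hWlt : ∀ J, ¬ spec J → ∀ ω : (∀ k, Fin (W k)), (ω (r + J * N) : ℕ) < Wd := by
    intro J hJ ω
    have h1 := (ω (r + J * N)).2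
    have h2 := hW J 0 hN0
    rw [if_neg hJ, if_pos rfl, add_zero] at h2
    omega
  have hWone : ∀ k (ω ω' : ∀ k, Fin (W k)), W k = 1 → ω k = ω' k := by
    intro k ω ω' h
    rw [Fin.ext_iff]
    have h1 := (ω k).2
    have h2 := (ω' k).2
    omega
  have hDreg : ∀ J, ¬ spec J → ∀ i < N, ∀ ω, D (r + J * N + i) ω = wd (ω (r + J * N)) i := by
    intro J hJ i hi ω
    rw [hD J i hi, if_neg hJ]
  have hDsp : ∀ J, spec J → ∀ i < m, ∀ ω,
      D (r + J * N + i) ω = nn J i + 1 + (ω (r + J * N + i) : ℕ) := by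
    intro J hJ i hi ω
    rw [hD J i (by omega), if_pos hJ, if_pos hi]
  have hDsp2 : ∀ J, spec J → ∀ i < N, m ≤ i → ∀ ω, D (r + J * N + i) ω = 2 := by
    intro J hJ i hi him ω
    rw [hD J i (by omega), if_pos hJ, if_neg (by omega)]
  have hωlt : ∀ J, spec J → ∀ i < m, ∀ ω : (∀ k, Fin (W k)),
      (ω (r + J * N + i) : ℕ) < nn J i := by
    intro J hJ i hi ω
    have h1 := (ω (r + J * N + i)).2
    have h2 := hW J i (by omega)
    rw [if_pos hJ, if_pos hi] at h2
    omega
  have hD1 : ∀ k ω, 1 ≤ D k ω := by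
    intro k ω
    rcases grid_cases r N hN0 k with h | ⟨J, i, hi, rfl⟩
    · rw [hD0 k h]; norm_num
    · by_cases hJ : spec J
      · rcases Nat.lt_or_ge i m with him | him
        · rw [hDsp J hJ i him]; omega
        · rw [hDsp2 J hJ i hi him]; norm_num
      · rw [hDreg J hJ i hi]; exact hwd1 _ _
  have hDA : ∀ k ω, D k ω ≤ M * A k := by
    intro k ω
    rcases grid_cases r N hN0 k with h | ⟨J, i, hi, rfl⟩
    · rw [hD0 k h, hA0 k h]; dsimp only; omega
    · by_cases hJ : spec J
      · rcases Nat.lt_or_ge i m with him | him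
        · rw [hDsp J hJ i him, hA1 J hJ i him]
          have := hωlt J hJ i him ω
          nlinarith
        · rw [hDsp2 J hJ i hi him, hA2 J hJ i hi him]; omega
      · rw [hDreg J hJ i hi, hA3 J hJ i hi, mul_one]
        exact hwM _ (hWlt J hJ ω) i hi
  have hAone : ∀ k, 1 ≤ A k := by
    intro k
    rcases grid_cases r N hN0 k with h | ⟨J, i, hi, rfl⟩
    · rw [hA0 k h]
    · by_cases hJ : spec J
      · rcases Nat.lt_or_ge i m with him | him
        · rw [hA1 J hJ i him]; exact hnn J i
        · rw [hA2 J hJ i hi him]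
      · rw [hA3 J hJ i hi]
  have hDm : ∀ k, Measurable (D k) := by
    intro k
    rcases grid_cases r N hN0 k with h | ⟨J, i, hi, rfl⟩
    · rw [hD0 k h]; exact measurable_const
    · rw [hD J i hi]
      split_ifs
      · exact (measurable_of_countable (fun j : Fin (W (r + J * N + i)) =>
          nn J i + 1 + (j : ℕ))).comp (measurable_pi_apply _)
      · exact measurable_const
      · exact (measurable_of_countable (fun j : Fin (W (r + J * N)) => wd j i)).comp
          (measurable_pi_apply _)
  have hDM : ∀ k ω, D k ω = 1 → D (k + 1) ω ≤ M := by
    intro k ω hk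
    rcases grid_cases r N hN0 k with h | ⟨J, i, hi, rfl⟩
    · rw [hD0 k h] at hk; dsimp only at hk; omega
    · by_cases hJ : spec J
      · rcases Nat.lt_or_ge i m with him | him
        · rw [hDsp J hJ i him] at hk
          have := hnn J i
          omega
        · rw [hDsp2 J hJ i hi him] at hk; omega
      · rw [hDreg J hJ i hi] at hk
        have hiN : i + 1 < N := by
          by_contra hcon
          have : i = N - 1 := by omega
          rw [this, hwd2] at hk
          omega
        rw [add_assoc, hDreg J hJ (i + 1) hiN]
        exact hwM _ (hWlt J hJ ω) _ hiN
  -- digits before the start of a block determine the choices made there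
  have hdet : ∀ J (ω ω' : ∀ k, Fin (W k)), (∀ i < r + J * N, D i ω' = D i ω) →
      ∀ i ∈ Finset.range (r + J * N), ω' i = ω i := by
    intro J ω ω' h k hk
    rw [Finset.mem_range] at hk
    rcases grid_cases r N hN0 k with hkr | ⟨J', i, hi, rfl⟩
    · exact hWone _ _ _ (hW0 k hkr)
    · have hJJ : J' < J := by
        by_contra hcon
        have : J * N ≤ J' * N := Nat.mul_le_mul_right N (by omega)
        omega
      have hblock : r + J' * N + N ≤ r + J * N := by
        have : (J' + 1) * N ≤ J * N := Nat.mul_le_mul_right N hJJ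
        rw [add_mul, one_mul] at this
        omega
      by_cases hJ : spec J'
      · rcases Nat.lt_or_ge i m with him | him
        · have := h _ hk
          rw [hDsp J' hJ i him, hDsp J' hJ i him] at this
          rw [Fin.ext_iff]; omega
        · exact hWone _ _ _ (by rw [hW J' i hi, if_pos hJ, if_neg (by omega)])
      · rcases Nat.eq_zero_or_pos i with rfl | hi0
        · rw [add_zero, Fin.ext_iff]
          refine hinj _ (hWlt J' hJ ω') _ (hWlt J' hJ ω) fun i hi => ?_
          have := h (r + J' * N + i) (by omega)
          rwa [hDreg J' hJ i hi, hDreg J' hJ i hi] at this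
        · exact hWone _ _ _ (by rw [hW J' i hi, if_neg hJ, if_neg (by omega)])
  have hdet2 : ∀ J, spec J → ∀ i ≤ N, ∀ (ω ω' : ∀ k, Fin (W k)),
      (∀ k < r + J * N + i, D k ω' = D k ω) →
      ∀ k ∈ Finset.range (r + J * N + i), ω' k = ω k := by
    intro J hJ i hi ω ω' h k hk
    rw [Finset.mem_range] at hk
    rcases Nat.lt_or_ge k (r + J * N) with hk' | hk'
    · exact hdet J ω ω' (fun k hk => h k (by omega)) k (Finset.mem_range.2 hk')
    · obtain ⟨i', rfl⟩ : ∃ i', k = r + J * N + i' := ⟨k - (r + J * N), by omega⟩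
      rcases Nat.lt_or_ge i' m with him | him
      · have := h _ hk
        rw [hDsp J hJ i' him, hDsp J hJ i' him] at this
        rw [Fin.ext_iff]; omega
      · exact hWone _ _ _ (by rw [hW J i' (by omega), if_pos hJ, if_neg (by omega)])
  obtain ⟨mass, hmass⟩ : ∃ mass : ℕ → (∀ k, Fin (W k)) → ℝ,
      ∀ k ω, mass k ω = ∏ i ∈ Finset.range k, π i (ω i) := ⟨_, fun _ _ => rfl⟩
  have hmass0 : ∀ k ω, 0 ≤ mass k ω := fun k ω => by
    rw [hmass]; exact Finset.prod_nonneg fun i _ => hπnn _ _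
  have hPJ : ∀ J ω, P {ω' | ∀ i < r + J * N, D i ω' = D i ω} ≤
      ENNReal.ofReal (mass (r + J * N) ω) := by
    intro J ω
    rw [hmass, ← hPc]
    exact measure_mono fun ω' h => hdet J ω ω' h
  have hPJ2 : ∀ J, spec J → ∀ i ≤ N, ∀ ω, P {ω' | ∀ k < r + J * N + i, D k ω' = D k ω} ≤
      ENNReal.ofReal (mass (r + J * N + i) ω) := by
    intro J hJ i hi ω
    rw [hmass, ← hPc]
    exact measure_mono fun ω' h => hdet2 J hJ i hi ω ω' h
  set pr : ℕ → ℕ → ℝ := fun J i => ∏ j ∈ Finset.range (min i m), (nn J j : ℝ) with hpr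
  have hpr0 : ∀ J i, 0 < pr J i := fun J i => Finset.prod_pos fun j _ => hnn0 J j
  have hmsp : ∀ J, spec J → ∀ i ≤ N, ∀ ω,
      mass (r + J * N + i) ω = mass (r + J * N) ω * (pr J i)⁻¹ := by
    intro J hJ i hi ω
    rw [hmass, hmass, Finset.prod_range_add, hpr]
    dsimp only
    rw [← Finset.prod_inv_distrib, ← prod_ite_min]
    congr 1
    refine Finset.prod_congr rfl fun j hj => ?_
    rw [hπ J j (lt_of_lt_of_le (Finset.mem_range.1 hj) hi), if_pos hJ]
    split_ifs <;> rfl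
  have hmreg : ∀ J, ¬ spec J → ∀ ω,
      mass (r + J * N + N) ω = mass (r + J * N) ω * wt (ω (r + J * N)) := by
    intro J hJ ω
    rw [hmass, hmass, Finset.prod_range_add]
    congr 1
    rw [Finset.prod_eq_single_of_mem 0 (Finset.mem_range.2 hN0)]
    · rw [hπ J 0 hN0, if_neg hJ, if_pos rfl, add_zero]
    · intro j hj hj0
      rw [hπ J j (Finset.mem_range.1 hj), if_neg hJ, if_neg hj0]
  set q : ℕ → (∀ k, Fin (W k)) → ℝ := fun k ω => (qq (fun i => D i ω) k : ℝ) with hq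
  have hq0 : ∀ k ω, 0 ≤ q k ω := fun k ω => by simp only [hq]; positivity
  have hqadd : ∀ k i ω, q (k + i) ω ≤ 2 * qq (fun j => D (k + j) ω) i * q k ω := by
    intro k i ω
    have := qq_add_le (a := fun i => D i ω) (fun i => hD1 i ω) k i
    have h2 : ((qq (fun i => D i ω) (k + i) : ℕ) : ℝ) ≤
        2 * (qq (fun i => D i ω) k * qq (fun j => D (k + j) ω) i) := by exact_mod_cast this
    simp only [hq]
    linarith
  have hqsp : ∀ J, spec J → ∀ i ≤ N, ∀ ω,
      q (r + J * N + i) ω ≤ 2 * 4 ^ N * pr J i * q (r + J * N) ω := by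
    intro J hJ i hi ω
    refine (hqadd _ i ω).trans (mul_le_mul_of_nonneg_right ?_ (hq0 _ _))
    rw [mul_assoc]
    refine mul_le_mul_of_nonneg_left ?_ (by norm_num)
    have h1 : (qq (fun j => D (r + J * N + j) ω) i : ℝ) ≤
        2 ^ i * ∏ j ∈ Finset.range i, (D (r + J * N + j) ω : ℝ) := by
      exact_mod_cast qq_le_prod (a := fun j => D (r + J * N + j) ω) (fun j => hD1 _ ω) i
    refine h1.trans ?_
    have h2 : ∏ j ∈ Finset.range i, (D (r + J * N + j) ω : ℝ) ≤
        ∏ j ∈ Finset.range i, (2 * if j < m then (nn J j : ℝ) else 1) := by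
      refine Finset.prod_le_prod (fun _ _ => by positivity) fun j hj => ?_
      have hjN : j < N := lt_of_lt_of_le (Finset.mem_range.1 hj) hi
      split_ifs with hjm
      · rw [hDsp J hJ j hjm]
        have := hωlt J hJ j hjm ω
        have : nn J j + 1 + (ω (r + J * N + j) : ℕ) ≤ 2 * nn J j := by omega
        exact_mod_cast this
      · rw [hDsp2 J hJ j hjN (by omega)]; norm_num
    rw [Finset.prod_mul_distrib, prod_ite_min, Finset.prod_const, Finset.card_range] at h2
    calc (2 : ℝ) ^ i * ∏ j ∈ Finset.range i, (D (r + J * N + j) ω : ℝ)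
        ≤ 2 ^ i * (2 ^ i * pr J i) := mul_le_mul_of_nonneg_left h2 (by positivity)
      _ = 4 ^ i * pr J i := by rw [← mul_assoc, ← mul_pow]; norm_num
      _ ≤ 4 ^ N * pr J i := by
          refine mul_le_mul_of_nonneg_right ?_ (hpr0 J i).le
          exact pow_le_pow_right₀ (by norm_num) hi
  have hqreg : ∀ J, ¬ spec J → ∀ i ≤ N, ∀ ω,
      q (r + J * N + i) ω ≤ 2 * qq (wd (ω (r + J * N))) i * q (r + J * N) ω := by
    intro J hJ i hi ω
    refine (hqadd _ i ω).trans (le_of_eq ?_)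
    rw [qq_congr (a := fun j => D (r + J * N + j) ω) (b := wd (ω (r + J * N)))
      fun j hj => hDreg J hJ j (by omega) ω]
  have hinv : ∀ J ω, mass (r + J * N) ω * q (r + J * N) ω ^ (2 * s) ≤ e J := by
    intro J ω
    induction J with
    | zero =>
      have h1 : mass (r + 0 * N) ω = 1 := by
        rw [hmass]
        refine Finset.prod_eq_one fun i hi => ?_
        rw [zero_mul, add_zero, Finset.mem_range] at hi
        rw [hπ0 i hi]
      have h2 : q (r + 0 * N) ω = (qq (fun _ => 2) r : ℝ) := by
        simp only [hq, zero_mul, add_zero]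
        rw [qq_congr (a := fun i => D i ω) (b := fun _ => 2) fun j hj => by rw [hD0 j hj]]
      rw [h1, h2, one_mul]
      exact he0
    | succ J ih =>
      have hst : r + (J + 1) * N = r + J * N + N := by ring
      rw [hst]
      by_cases hJ : spec J
      · have h1 := mass_step (hmass0 _ _) (hq0 _ _) (hq0 _ _)
          (mul_nonneg (by positivity) (hpr0 J N).le) (by linarith) ih (hqsp J hJ N le_rfl ω)
        rw [hmsp J hJ N le_rfl]
        have h2 : pr J N = ∏ j ∈ Finset.range m, (nn J j : ℝ) := by
          simp only [hpr]; rw [min_eq_right hmN]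
        refine le_trans ?_ (hsp' J hJ)
        rw [← h2]
        have h3 := mul_le_mul_of_nonneg_right h1 (inv_nonneg.2 (hpr0 J N).le)
        linarith
      · have h1 := mass_step (hmass0 _ _) (hq0 _ _) (hq0 _ _)
          (by positivity) (by linarith) ih (hqreg J hJ N le_rfl ω)
        rw [hmreg J hJ]
        refine le_trans ?_ (hreg J hJ _ (hWlt J hJ ω))
        have h3 := mul_le_mul_of_nonneg_right h1 (hwt0 (ω (r + J * N)))
        linarith
  have hQr1 : (1 : ℝ) ≤ (qq (fun _ => 2) r : ℝ) := by
    exact_mod_cast qq_pos (a := fun _ => 2) (fun _ => by norm_num) r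
  have hE1 : 1 ≤ E := (Real.one_le_rpow hQr1 (by linarith)).trans (he0.trans (hE 0))
  set c₁ : ℝ := (2 * (2 ^ N * M ^ N)) ^ (2 * s) with hc₁
  have hc₁0 : 0 ≤ c₁ := by positivity
  set C := E + C₁ + E * c₁ with hC
  have hEc : 0 ≤ E * c₁ := mul_nonneg (by linarith) hc₁0
  have hC0 : 0 < C := by linarith
  have hH : ∀ k ω, ∃ μ : ℝ, 0 ≤ μ ∧ P {ω' | ∀ i < k, D i ω' = D i ω} ≤ ENNReal.ofReal μ ∧
      P {ω' | ∀ i < k + 1, D i ω' = D i ω} ≤ ENNReal.ofReal (μ / A k) ∧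
      μ * (q k ω ^ 2 * A k) ^ s ≤ C := by
    intro k ω
    have hAk0 : (0 : ℝ) ≤ A k := by positivity
    have hsplit : (q k ω ^ 2 * A k) ^ s = q k ω ^ (2 * s) * (A k : ℝ) ^ s := by
      rw [Real.mul_rpow (by positivity) hAk0, ← Real.rpow_natCast (q k ω) 2,
        ← Real.rpow_mul (hq0 _ _)]
      norm_num
    have hmono : ∀ μ, A k = 1 → P {ω' | ∀ i < k, D i ω' = D i ω} ≤ ENNReal.ofReal μ →
        P {ω' | ∀ i < k + 1, D i ω' = D i ω} ≤ ENNReal.ofReal (μ / A k) := by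
      intro μ h1 h2
      rw [h1, Nat.cast_one, div_one]
      exact (measure_mono fun ω' (h : ∀ i < k + 1, _) => fun i hi => h i (by omega)).trans h2
    rw [hsplit]
    rcases grid_cases r N hN0 k with h | ⟨J, i, hi, rfl⟩
    · refine ⟨1, zero_le_one, ?_, hmono 1 (hA0 k h) ?_, ?_⟩
      · rw [ENNReal.ofReal_one]; exact prob_le_one
      · rw [ENNReal.ofReal_one]; exact prob_le_one
      · rw [hA0 k h, Nat.cast_one, Real.one_rpow, mul_one, one_mul]
        have h1 : q k ω ≤ (qq (fun _ => 2) r : ℝ) := by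
          simp only [hq]
          rw [qq_congr (a := fun i => D i ω) (b := fun _ => 2) fun j hj => by
            rw [hD0 j (by omega)]]
          exact_mod_cast qq_mono (a := fun _ => 2) (fun _ => by norm_num) h.le
        have h2 := Real.rpow_le_rpow (hq0 k ω) h1 (show 0 ≤ 2 * s by linarith)
        linarith [hE 0]
    · by_cases hJ : spec J
      · refine ⟨mass (r + J * N + i) ω, hmass0 _ _, hPJ2 J hJ i hi.le ω, ?_, ?_⟩
        · rcases Nat.lt_or_ge i m with him | him
          · refine (hPJ2 J hJ (i + 1) hi ω).trans (le_of_eq ?_)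
            rw [hmsp J hJ i hi.le, hmsp J hJ (i + 1) hi, hA1 J hJ i him]
            congr 1
            simp only [hpr]
            rw [min_eq_left him.le, min_eq_left (Nat.succ_le_of_lt him), Finset.prod_range_succ,
              mul_inv, div_eq_mul_inv, mul_assoc]
          · exact hmono _ (hA2 J hJ i hi him) (hPJ2 J hJ i hi.le ω)
        · have h1 := mass_step (hmass0 _ _) (hq0 _ _) (hq0 _ _)
            (mul_nonneg (by positivity) (hpr0 J i).le) (by linarith) (hinv J ω)
            (hqsp J hJ i hi.le ω)
          rw [hmsp J hJ i hi.le]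
          have h2 := hsp J hJ i hi
          have hx : (0 : ℝ) ≤ (pr J i)⁻¹ * (A (r + J * N + i) : ℝ) ^ s :=
            mul_nonneg (inv_nonneg.2 (hpr0 J i).le) (by positivity)
          have h3 := mul_le_mul_of_nonneg_right h1 hx
          have h4 : e J * (2 * 4 ^ N * pr J i) ^ (2 * s) * (pr J i)⁻¹ *
            (A (r + J * N + i) : ℝ) ^ s ≤ C₁ := h2
          nlinarith
      · have hA := hA3 J hJ i hi
        have hPk : P {ω' | ∀ k < r + J * N + i, D k ω' = D k ω} ≤
            ENNReal.ofReal (mass (r + J * N) ω) :=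
          (measure_mono fun ω' (h : ∀ k < r + J * N + i, _) => fun k hk =>
            h k (by omega)).trans (hPJ J ω)
        refine ⟨mass (r + J * N) ω, hmass0 _ _, hPk, hmono _ hA hPk, ?_⟩
        rw [hA, Nat.cast_one, Real.one_rpow, mul_one]
        have hqw : (qq (wd (ω (r + J * N))) i : ℝ) ≤ 2 ^ N * M ^ N := by
          have h1 : (qq (wd (ω (r + J * N))) i : ℝ) ≤
              2 ^ i * ∏ j ∈ Finset.range i, (wd (ω (r + J * N)) j : ℝ) := by
            exact_mod_cast qq_le_prod (a := wd (ω (r + J * N))) (hwd1 _) i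
          have h2 : ∏ j ∈ Finset.range i, (wd (ω (r + J * N)) j : ℝ) ≤
              ∏ j ∈ Finset.range i, (M : ℝ) :=
            Finset.prod_le_prod (fun _ _ => by positivity) fun j hj => by
              exact_mod_cast hwM _ (hWlt J hJ ω) j (lt_trans (Finset.mem_range.1 hj) hi)
          rw [Finset.prod_const, Finset.card_range] at h2
          have hM1 : (1 : ℝ) ≤ M := by exact_mod_cast (by omega : 1 ≤ M)
          have h3 : (2 : ℝ) ^ i ≤ 2 ^ N := pow_le_pow_right₀ (by norm_num) hi.le
          have h4 : (M : ℝ) ^ i ≤ M ^ N := pow_le_pow_right₀ hM1 hi.le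
          exact h1.trans (mul_le_mul h3 (h2.trans h4) (by positivity) (by positivity))
        have h1 := mass_step (c := 2 * (2 ^ N * M ^ N)) (hmass0 _ _) (hq0 _ _) (hq0 _ _)
          (by positivity) (by linarith) (hinv J ω)
          ((hqreg J hJ i hi.le ω).trans (mul_le_mul_of_nonneg_right
            (mul_le_mul_of_nonneg_left hqw (by norm_num)) (hq0 _ _)))
        rw [← hc₁] at h1
        have h2 := mul_le_mul_of_nonneg_right (hE J) hc₁0
        linarith
  have hpos : ∀ k ω, 0 < q k ω ^ 2 * A k := fun k ω => by
    have h1 : (1 : ℝ) ≤ q k ω := by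
      simp only [hq]; exact_mod_cast qq_pos (fun i => hD1 i ω) k
    have h2 : (1 : ℝ) ≤ A k := by exact_mod_cast hAone k
    positivity
  have hmain := mass_dist P D hDm hD1 M (by omega) hDM (fun k => A k)
    (fun k => by exact_mod_cast hAone k) (fun k ω => by exact_mod_cast hDA k ω) s hs0 hs1 C hC0
    (fun k ω => by
      obtain ⟨μ, hμ0, h1, h2, h3⟩ := hH k ω
      refine h1.trans (ENNReal.ofReal_le_ofReal ?_)
      rw [Real.rpow_neg (hpos k ω).le, ← div_eq_mul_inv,
        le_div_iff₀ (Real.rpow_pos_of_pos (hpos k ω) s)]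
      exact h3)
    (fun k ω => by
      obtain ⟨μ, hμ0, h1, h2, h3⟩ := hH k ω
      refine h2.trans (ENNReal.ofReal_le_ofReal (div_le_div_of_nonneg_right ?_ (by positivity)))
      rw [Real.rpow_neg (hpos k ω).le, ← div_eq_mul_inv,
        le_div_iff₀ (Real.rpow_pos_of_pos (hpos k ω) s)]
      exact h3)
  refine hmain.trans (dimH_mono ?_)
  rintro _ ⟨ω, rfl⟩
  have hdg := dg_cfv (fun i => hD1 i ω)
  refine ⟨cfv_mem fun i => hD1 i ω, fun J hJ i hi => ?_, fun k => ?_⟩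
  · rw [hdg]; show nn J i ≤ D (r + J * N + i) ω
    rw [hDsp J hJ i hi]; omega
  · rw [hdg]; exact hDA k ω

/-! ### The lower bound for finite `B` -/

/-- The exponents `α_k` by which the size `R` of a special block is distributed over its `m` large
digits. The last identity makes all `m` positions of the block equally expensive. -/
lemma exists_exponents (m : ℕ) (hm : 1 ≤ m) (s : ℝ) (h0 : 0 < s) (h1 : s < 1) :
    ∃ α : ℕ → ℝ, (∀ k, 0 < α k) ∧ ∑ k ∈ Finset.range m, α k = 1 ∧
      ∀ k, (2 * s - 1) * ∑ i ∈ Finset.range k, α i + s * α k = gW m s := by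
  have hg := (gW_pos m hm s h0 h1.le).1
  have hρ : 0 < (1 - s) / s := div_pos (by linarith) h0
  refine ⟨fun k => gW m s * ((1 - s) / s) ^ k / s, fun k => by positivity, ?_, fun k => ?_⟩
  · rw [← Finset.sum_div, ← Finset.mul_sum, gW_closed m hm s h0 h1, div_self h0.ne']
  · induction k with
    | zero => simp; field_simp
    | succ k ih =>
      have h2 : (2 * s - 1) * (gW m s * ((1 - s) / s) ^ k / s) +
          s * (gW m s * ((1 - s) / s) ^ (k + 1) / s) = s * (gW m s * ((1 - s) / s) ^ k / s) := by
        rw [pow_succ]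
        generalize ((1 - s) / s) ^ k = y
        field_simp
        ring
      rw [Finset.sum_range_succ, mul_add, add_assoc]
      exact (congrArg _ h2).trans ih

/-- Failure of the pressure condition at `s` provides a finite set of words, of a common length
`N` and ending in `2`, together with a probability vector such that appending one of these words
multiplies mass times `q ^ (2 s)` by at most `θ < B ^ (-N c(s))`. -/
lemma exists_words {B : ℝ} {c : ℝ → ℝ} (hB : 1 < B) {s : ℝ} (hs : 0 < s) (hmem : s ∉ presSet B c)
    (N₀ : ℕ) : ∃ N, N₀ ≤ N ∧ ∃ (Wd : ℕ) (wd : ℕ → ℕ → ℕ) (M : ℕ) (wt : ℕ → ℝ) (θ : ℝ),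
      (∀ j i, 1 ≤ wd j i) ∧ (∀ j, wd j (N - 1) = 2) ∧
      (∀ j < Wd, ∀ j' < Wd, (∀ i < N, wd j i = wd j' i) → j = j') ∧
      2 ≤ M ∧ (∀ j < Wd, ∀ i < N, wd j i ≤ M) ∧
      (∀ j, 0 ≤ wt j) ∧ ∑ j ∈ Finset.range Wd, wt j = 1 ∧ 0 < θ ∧
      θ * B ^ ((N : ℝ) * c s) < 1 ∧
      ∀ j < Wd, (2 * qq (wd j) N : ℝ) ^ (2 * s) * wt j ≤ θ := by
  classical
  have hB0 : 0 < B := by linarith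
  obtain ⟨n, hn, hlt⟩ := pres_not_mem hB0 hs.le hmem ((6 : ℝ) ^ (2 * s) * B ^ (c s)) N₀
  have hlt' : ENNReal.ofReal ((6 : ℝ) ^ (2 * s) * B ^ (((n + 1 : ℕ) : ℝ) * c s)) < Zs s n := by
    rw [presSum_eq _ _ _ hB0] at hlt
    have h1 : (6 : ℝ) ^ (2 * s) * B ^ (((n + 1 : ℕ) : ℝ) * c s) =
        B ^ ((n : ℝ) * c s) * ((6 : ℝ) ^ (2 * s) * B ^ (c s)) := by
      push_cast
      rw [add_mul, one_mul, Real.rpow_add hB0]; ring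
    rw [h1, ENNReal.ofReal_mul (by positivity)]
    have h2 : Zs s n = ENNReal.ofReal (B ^ ((n : ℝ) * c s)) *
        (ENNReal.ofReal (B ^ (-(n : ℝ) * c s)) * Zs s n) := by
      rw [← mul_assoc, ← ENNReal.ofReal_mul (by positivity), ← Real.rpow_add hB0]
      simp
    rw [h2]
    exact (ENNReal.mul_lt_mul_iff_right (ENNReal.ofReal_pos.2 (by positivity)).ne'
      ENNReal.ofReal_ne_top).2 hlt
  rw [Zs, ENNReal.tsum_eq_iSup_sum, lt_iSup_iff] at hlt'
  obtain ⟨S, hS⟩ := hlt'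
  rw [← ENNReal.ofReal_sum_of_nonneg (fun i _ => by positivity),
    ENNReal.ofReal_lt_ofReal_iff_of_nonneg (by positivity)] at hS
  set wz : (Fin n → ℕ+) → ℕ → ℕ := fun w i => if i = n then 2 else ext1 w i with hwz
  set u : ℕ → (Fin n → ℕ+) := fun j => if h : j < S.card then (S.equivFin.symm ⟨j, h⟩ : Fin n → ℕ+)
    else fun _ => 1 with hu
  have huS : ∀ j (h : j < S.card), u j = (S.equivFin.symm ⟨j, h⟩ : Fin n → ℕ+) := fun j h => by
    simp [hu, h]
  have hwz1 : ∀ w i, 1 ≤ wz w i := by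
    intro w i; simp only [hwz]; split_ifs
    · norm_num
    · exact ext1_pos w i
  have hwzlt : ∀ w, ∀ i < n, wz w i = ext1 w i := fun w i hi => by simp [hwz, hi.ne]
  have hsum : ∀ f : (Fin n → ℕ+) → ℝ, ∑ j ∈ Finset.range S.card, f (u j) = ∑ w ∈ S, f w := by
    intro f
    rw [Finset.sum_range, ← Finset.sum_coe_sort S, ← Equiv.sum_comp S.equivFin.symm]
    exact Finset.sum_congr rfl fun j _ => by rw [huS j j.2]
  have hQ : ∀ w, (1 : ℝ) ≤ qq (wz w) (n + 1) := fun w => by exact_mod_cast qq_pos (hwz1 w) _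
  have hQ3 : ∀ w, (qq (wz w) (n + 1) : ℝ) ≤ 3 * contQ (List.ofFn fun i => (w i : ℕ)) := by
    intro w
    rw [contQ_ext1, ← qq_congr (fun i hi => hwzlt w i hi), qq_succ]
    have := qp_le (hwz1 w) n
    have h2 : wz w n = 2 := by simp [hwz]
    rw [h2]
    exact_mod_cast (by omega)
  set Z : ℝ := ∑ w ∈ S, (qq (wz w) (n + 1) : ℝ) ^ (-2 * s) with hZ
  have hZlt : (2 : ℝ) ^ (2 * s) * B ^ (((n + 1 : ℕ) : ℝ) * c s) < Z := by
    have h1 : (3 : ℝ) ^ (-2 * s) * ∑ w ∈ S,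
        (contQ (List.ofFn fun i => (w i : ℕ)) : ℝ) ^ (-2 * s) ≤ Z := by
      rw [Finset.mul_sum]
      refine Finset.sum_le_sum fun w _ => ?_
      have := hQ w
      have := hQ3 w
      rw [← Real.mul_rpow (by norm_num) (by positivity)]
      exact Real.rpow_le_rpow_of_nonpos (by linarith) this (by linarith)
    refine lt_of_lt_of_le ?_ h1
    have h2 : (2 : ℝ) ^ (2 * s) = 3 ^ (-2 * s) * 6 ^ (2 * s) := by
      rw [show (6 : ℝ) = 3 * 2 by norm_num, Real.mul_rpow (by norm_num) (by norm_num), ← mul_assoc,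
        ← Real.rpow_add (by norm_num)]
      simp
    rw [h2, mul_assoc]
    exact mul_lt_mul_of_pos_left hS (by positivity)
  have hZ0 : 0 < Z := lt_trans (by positivity) hZlt
  obtain ⟨M₀, hM₀⟩ : ∃ M₀ : ℕ, ∀ j < S.card, ∀ i < n + 1, wz (u j) i ≤ M₀ := by
    refine ⟨∑ j ∈ Finset.range S.card, ∑ i ∈ Finset.range (n + 1), wz (u j) i, fun j hj i hi => ?_⟩
    calc wz (u j) i ≤ ∑ i ∈ Finset.range (n + 1), wz (u j) i :=
          Finset.single_le_sum (f := fun i => wz (u j) i) (fun _ _ => Nat.zero_le _)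
            (Finset.mem_range.2 hi)
      _ ≤ _ := Finset.single_le_sum (f := fun j => ∑ i ∈ Finset.range (n + 1), wz (u j) i)
            (fun _ _ => Nat.zero_le _) (Finset.mem_range.2 hj)
  refine ⟨n + 1, by omega, S.card, fun j => wz (u j), M₀ + 2,
    fun j => (qq (wz (u j)) (n + 1) : ℝ) ^ (-2 * s) / Z, 2 ^ (2 * s) / Z, fun j i => hwz1 _ _,
    fun j => by simp [hwz], ?_, by omega, fun j hj i hi => (hM₀ j hj i hi).trans (by omega),
    fun j => by positivity, ?_, by positivity, ?_, ?_⟩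
  · intro j hj j' hj' h
    have h1 : u j = u j' := by
      funext i
      have : wz (u j) i = wz (u j') i := h i (by omega)
      rw [hwzlt _ _ i.2, hwzlt _ _ i.2, ext1_apply, ext1_apply] at this
      exact PNat.coe_injective this
    rw [huS j hj, huS j' hj'] at h1
    have := S.equivFin.symm.injective (Subtype.ext h1)
    simpa using this
  · rw [← Finset.sum_div, hsum (fun w => (qq (wz w) (n + 1) : ℝ) ^ (-2 * s))]
    exact div_self hZ0.ne'
  · rw [div_mul_eq_mul_div, div_lt_one hZ0]; exact hZlt
  · intro j _
    have h1 := hQ (u j)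
    apply le_of_eq
    rw [Real.mul_rpow (by norm_num) (by linarith), ← mul_div_assoc, mul_assoc,
      ← Real.rpow_add (by linarith)]
    simp

/-- If a window of length `m - 1` meets a special block, then it misses at least one of the `m`
large digits of that block, and it meets no other special block. -/
lemma window_bound (m N r : ℕ) (hm : 1 ≤ m) (hmN : 2 * m ≤ N) (spec : ℕ → Prop) (nn : ℕ → ℕ → ℕ)
    (hnn : ∀ J i, 1 ≤ nn J i) (A : ℕ → ℕ) (hA0 : ∀ k < r, A k = 1)
    (hA1 : ∀ J, spec J → ∀ i < m, A (r + J * N + i) = nn J i)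
    (hA2 : ∀ J, spec J → ∀ i < N, m ≤ i → A (r + J * N + i) = 1)
    (hA3 : ∀ J, ¬ spec J → ∀ i < N, A (r + J * N + i) = 1) (p : ℕ) :
    ∏ i ∈ Finset.range (m - 1), A (p + i) = 1 ∨
    ∃ J, spec J ∧ r + J * N < p + m ∧ ∃ t < m,
      (∏ i ∈ Finset.range (m - 1), A (p + i)) * nn J t ≤ ∏ i ∈ Finset.range m, nn J i := by
  classical
  have key : ∀ k, A k ≠ 1 → ∃ J i, spec J ∧ i < m ∧ k = r + J * N + i := by
    intro k hk
    rcases grid_cases r N (by omega) k with h | ⟨J, i, hi, rfl⟩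
    · exact absurd (hA0 k h) hk
    · by_cases hJ : spec J
      · rcases Nat.lt_or_ge i m with him | him
        · exact ⟨J, i, hJ, him, rfl⟩
        · exact absurd (hA2 J hJ i hi him) hk
      · exact absurd (hA3 J hJ i hi) hk
  by_cases hall : ∀ i ∈ Finset.range (m - 1), A (p + i) = 1
  · exact Or.inl (Finset.prod_eq_one hall)
  right
  push Not at hall
  obtain ⟨i₀, hi₀, hne⟩ := hall
  obtain ⟨J, i₁, hJ, hi₁, he⟩ := key _ hne
  rw [Finset.mem_range] at hi₀
  refine ⟨J, hJ, by omega, ?_⟩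
  have hin : ∀ i ∈ Finset.range (m - 1), A (p + i) ≠ 1 →
      (r + J * N ≤ p + i ∧ p + i < r + J * N + m) := by
    intro i hi hA
    rw [Finset.mem_range] at hi
    obtain ⟨J', i', hJ', hi', he'⟩ := key _ hA
    rcases lt_trichotomy J J' with h | h | h
    · have := Nat.mul_le_mul_right N (Nat.succ_le_of_lt h)
      rw [Nat.succ_mul] at this
      omega
    · subst h; omega
    · have := Nat.mul_le_mul_right N (Nat.succ_le_of_lt h)
      rw [Nat.succ_mul] at this
      omega
  set F := (Finset.range (m - 1)).filter (fun i => r + J * N ≤ p + i ∧ p + i < r + J * N + m)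
    with hF
  set T := F.image (fun i => p + i - (r + J * N)) with hT
  have hmemF : ∀ i ∈ F, r + J * N ≤ p + i ∧ p + i < r + J * N + m := fun i hi =>
    (Finset.mem_filter.1 hi).2
  have hprod : ∏ i ∈ Finset.range (m - 1), A (p + i) = ∏ t ∈ T, nn J t := by
    rw [← Finset.prod_filter_of_ne hin, hT, Finset.prod_image]
    · refine Finset.prod_congr rfl fun i hi => ?_
      obtain ⟨h1, h2⟩ := hmemF i hi
      rw [← hA1 J hJ _ (by omega)]
      congr 1; omega
    · intro a ha b hb hab
      have h1 := hmemF a ha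
      have h2 := hmemF b hb
      simp only at hab
      omega
  have hcard : T.card < (Finset.range m).card := by
    rw [Finset.card_range]
    have h1 : T.card ≤ F.card := Finset.card_image_le
    have h2 : F.card ≤ m - 1 := (Finset.card_filter_le _ _).trans (Finset.card_range _).le
    omega
  obtain ⟨t, ht, htT⟩ := Finset.exists_mem_notMem_of_card_lt_card hcard
  refine ⟨t, Finset.mem_range.1 ht, ?_⟩
  rw [hprod, mul_comm, ← Finset.prod_insert htT]
  refine Finset.prod_le_prod_of_subset_of_one_le' ?_ fun i _ _ => hnn J i
  intro x hx
  rcases Finset.mem_insert.1 hx with rfl | hx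
  · exact ht
  · obtain ⟨i, hi, rfl⟩ := Finset.mem_image.1 hx
    have := hmemF i hi
    exact Finset.mem_range.2 (by omega)

lemma ceil_rpow_bounds (R a : ℝ) (hR : 1 ≤ R) (ha : 0 ≤ a) :
    R ^ a ≤ (⌈R ^ a⌉₊ : ℝ) ∧ (⌈R ^ a⌉₊ : ℝ) ≤ 2 * R ^ a := by
  have h1 := Real.one_le_rpow hR ha
  refine ⟨Nat.le_ceil _, ?_⟩
  have := Nat.ceil_lt_add_one (zero_le_one.trans h1)
  linarith

lemma prod_ceil_bounds (R : ℝ) (hR : 1 ≤ R) (α : ℕ → ℝ) (hα : ∀ k, 0 < α k) (i : ℕ) :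
    R ^ (∑ j ∈ Finset.range i, α j) ≤ ∏ j ∈ Finset.range i, (⌈R ^ α j⌉₊ : ℝ) ∧
    ∏ j ∈ Finset.range i, (⌈R ^ α j⌉₊ : ℝ) ≤ 2 ^ i * R ^ (∑ j ∈ Finset.range i, α j) := by
  have hR0 : 0 < R := by linarith
  rw [Real.rpow_sum_of_pos hR0]
  refine ⟨Finset.prod_le_prod (fun j _ => by positivity)
    fun j _ => (ceil_rpow_bounds R _ hR (hα j).le).1, ?_⟩
  calc ∏ j ∈ Finset.range i, (⌈R ^ α j⌉₊ : ℝ) ≤ ∏ j ∈ Finset.range i, (2 * R ^ α j) :=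
        Finset.prod_le_prod (fun j _ => by positivity)
          fun j _ => (ceil_rpow_bounds R _ hR (hα j).le).2
    _ = _ := by rw [Finset.prod_mul_distrib]; simp

lemma prod_ceil_rpow (R : ℝ) (hR : 1 ≤ R) (α : ℕ → ℝ) (hα : ∀ k, 0 < α k) (m i : ℕ) (him : i ≤ m)
    (x : ℝ) (hx : x ≤ 1) :
    (∏ j ∈ Finset.range i, (⌈R ^ α j⌉₊ : ℝ)) ^ x ≤
      2 ^ m * R ^ (x * ∑ j ∈ Finset.range i, α j) := by
  have hR0 : 0 < R := by linarith
  obtain ⟨h1, h2⟩ := prod_ceil_bounds R hR α hα i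
  have hpos : 0 < R ^ (∑ j ∈ Finset.range i, α j) := by positivity
  rw [mul_comm x, Real.rpow_mul hR0.le]
  rcases le_or_gt 0 x with h | h
  · calc _ ≤ (2 ^ i * R ^ (∑ j ∈ Finset.range i, α j)) ^ x :=
          Real.rpow_le_rpow (hpos.le.trans h1) h2 h
      _ = ((2 : ℝ) ^ i) ^ x * (R ^ (∑ j ∈ Finset.range i, α j)) ^ x :=
          Real.mul_rpow (by positivity) hpos.le
      _ ≤ 2 ^ m * (R ^ (∑ j ∈ Finset.range i, α j)) ^ x := by
          refine mul_le_mul_of_nonneg_right ?_ (by positivity)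
          calc ((2 : ℝ) ^ i) ^ x ≤ ((2 : ℝ) ^ i) ^ (1 : ℝ) :=
                Real.rpow_le_rpow_of_exponent_le (one_le_pow₀ (by norm_num)) hx
            _ = 2 ^ i := Real.rpow_one _
            _ ≤ 2 ^ m := pow_le_pow_right₀ (by norm_num) him
  · calc _ ≤ (R ^ (∑ j ∈ Finset.range i, α j)) ^ x :=
          Real.rpow_le_rpow_of_nonpos hpos h1 h.le
      _ ≤ _ := le_mul_of_one_le_left (by positivity) (one_le_pow₀ (by norm_num))

/-- Infinitely many integers with a property leave infinitely many in one residue class mod `N`;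
this fixes the offset `r` of the block structure. -/
lemma frequently_residue (N : ℕ) (hN : 0 < N) (p : ℕ → Prop) (h : ∃ᶠ n in atTop, p n) :
    ∃ r < N, ∃ᶠ J in atTop, p (r + J * N) := by
  by_contra hcon
  push Not at hcon
  have h1 : ∀ᶠ J in atTop, ∀ r ∈ Finset.range N, ¬ p (r + J * N) := by
    rw [Filter.eventually_all_finset]
    intro r hr
    exact hcon r (Finset.mem_range.1 hr)
  have h2 : Tendsto (fun n : ℕ => n / N) atTop atTop := Nat.tendsto_div_const_atTop hN.ne'
  refine h ((h2.eventually h1).mono fun n hn => ?_)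
  have := hn (n % N) (Finset.mem_range.2 (Nat.mod_lt _ hN))
  rwa [Nat.mod_add_div'] at this

/-- The bookkeeping of a block construction. The quantity `e J` decays by the factor `θ` over
ordinary blocks; the next admissible block (`G J`) at which it has dropped below `R J ^ (-g)` is
made special. As `θ < β ^ (-N g)` while `R J ≤ β ^ (r + J N + 1)` for admissible `J`, this happens
infinitely often. -/
lemma exists_energy (N r : ℕ) (e₀ θ c g x β : ℝ) (he₀ : 0 < e₀) (hθ : 0 < θ) (hc : 0 < c)
    (hg : 0 < g) (hxg : x ≤ g) (hβ : 1 < β) (hθβ : θ * β ^ ((N : ℝ) * g) < 1)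
    (R : ℕ → ℝ) (hR : ∀ J, 1 ≤ R J) (G : ℕ → Prop) (hG : ∃ᶠ J in atTop, G J)
    (hRG : ∀ J, G J → R J ≤ β ^ (r + J * N + 1)) :
    ∃ (e : ℕ → ℝ) (spec : ℕ → Prop), e 0 = e₀ ∧ (∀ J, 0 < e J) ∧ (∀ J, e J ≤ max e₀ c) ∧
      (∀ J, spec J → G J ∧ e J ≤ R J ^ (-g)) ∧
      (∀ J, spec J → e (J + 1) = e J * (c * R J ^ x)) ∧
      (∀ J, ¬ spec J → e (J + 1) = e J * θ) ∧ ∃ᶠ J in atTop, spec J := by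
  classical
  have hβ0 : 0 < β := by linarith
  have hR0 : ∀ J, 0 < R J := fun J => by linarith [hR J]
  obtain ⟨e, he0, heS⟩ : ∃ e : ℕ → ℝ, e 0 = e₀ ∧ ∀ J, e (J + 1) =
      if G J ∧ e J ≤ R J ^ (-g) then e J * (c * R J ^ x) else e J * θ :=
    ⟨fun J => Nat.rec e₀ (fun J y => if G J ∧ y ≤ R J ^ (-g) then y * (c * R J ^ x) else y * θ) J,
      rfl, fun J => rfl⟩
  have hθ1 : θ ≤ 1 := by
    have h1 : 1 ≤ β ^ ((N : ℝ) * g) := Real.one_le_rpow hβ.le (by positivity)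
    nlinarith
  have hpos : ∀ J, 0 < e J := by
    intro J
    induction J with
    | zero => rw [he0]; exact he₀
    | succ J ih =>
      rw [heS]
      have := hR0 J
      split_ifs <;> positivity
  refine ⟨e, fun J => G J ∧ e J ≤ R J ^ (-g), he0, hpos, ?_, fun J h => h,
    fun J h => by rw [heS, if_pos h], fun J h => by rw [heS, if_neg h], ?_⟩
  · intro J
    induction J with
    | zero => rw [he0]; exact le_max_left _ _
    | succ J ih =>
      rw [heS]
      have := hR0 J
      split_ifs with h
      · refine le_max_of_le_right ?_
        calc e J * (c * R J ^ x) ≤ R J ^ (-g) * (c * R J ^ x) :=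
              mul_le_mul_of_nonneg_right h.2 (by positivity)
          _ = c * R J ^ (x - g) := by
              rw [mul_left_comm, ← Real.rpow_add this]; congr 2; ring
          _ ≤ c * 1 := mul_le_mul_of_nonneg_left
              (Real.rpow_le_one_of_one_le_of_nonpos (hR J) (by linarith)) hc.le
          _ = c := mul_one c
      · exact le_trans (mul_le_of_le_one_right (hpos J).le hθ1) ih
  · by_contra hcon
    rw [not_frequently] at hcon
    obtain ⟨J₀, hJ₀⟩ := eventually_atTop.1 hcon
    have hgeo : ∀ k, e (J₀ + k) = e J₀ * θ ^ k := by
      intro k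
      induction k with
      | zero => simp
      | succ k ih =>
        rw [← add_assoc, heS, if_neg (hJ₀ _ (by omega)), ih, pow_succ]; ring
    set y := θ * β ^ ((N : ℝ) * g) with hy
    have hy0 : 0 < y := by positivity
    have hlim : Tendsto (fun k : ℕ => e J₀ * β ^ (((r + J₀ * N + 1 : ℕ) : ℝ) * g) * y ^ k) atTop
        (𝓝 (e J₀ * β ^ (((r + J₀ * N + 1 : ℕ) : ℝ) * g) * 0)) :=
      (tendsto_pow_atTop_nhds_zero_of_lt_one hy0.le hθβ).const_mul _
    rw [mul_zero] at hlim
    obtain ⟨K, hK⟩ := eventually_atTop.1 (hlim.eventually_lt_const zero_lt_one)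
    obtain ⟨J, hJ, hGJ⟩ := frequently_atTop.1 hG (J₀ + K)
    obtain ⟨k, rfl⟩ := Nat.exists_eq_add_of_le (show J₀ ≤ J by omega)
    have h1 := hK k (by omega)
    have h2 : R (J₀ + k) ^ (-g) < e (J₀ + k) := by
      by_contra h
      exact hJ₀ (J₀ + k) (by omega) ⟨hGJ, not_lt.1 h⟩
    have h3 : (β ^ (r + (J₀ + k) * N + 1)) ^ (-g) ≤ R (J₀ + k) ^ (-g) :=
      Real.rpow_le_rpow_of_nonpos (hR0 _) (hRG _ hGJ) (by linarith)
    have h4 : β ^ (((r + J₀ * N + 1 : ℕ) : ℝ) * g) * (β ^ ((N : ℝ) * g)) ^ k =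
        (β ^ (r + (J₀ + k) * N + 1)) ^ g := by
      rw [← Real.rpow_natCast, ← Real.rpow_natCast, ← Real.rpow_mul hβ0.le,
        ← Real.rpow_mul hβ0.le, ← Real.rpow_add hβ0]
      congr 1; push_cast; ring
    have h5 := h3.trans_lt h2
    rw [hgeo, Real.rpow_neg (by positivity), ← h4, inv_lt_iff_one_lt_mul₀ (by positivity)] at h5
    rw [hy, mul_pow] at h1
    nlinarith

/-- Every `s` violating the pressure condition is a lower bound for the dimension. Blocks of length
`N` are filled by `exists_words`; in the special blocks chosen by `exists_energy` the `m` large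
digits have size `R J ^ α i` with `R J = Φ (r + J N + 1)`. -/
lemma lower_B_core (m : ℕ) (hm : 2 ≤ m) (Φ : ℕ → ℝ) (hΦ1 : ∀ n, 1 < Φ n) (B : ℝ) (hB : 1 < B)
    (lo : ∀ l < Real.log B, ∀ᶠ n : ℕ in atTop, Real.exp (l * n) ≤ Φ n)
    (hi : ∀ l > Real.log B, ∃ᶠ n : ℕ in atTop, Φ n ≤ Real.exp (l * n))
    (s : ℝ) (hs0 : 0 < s) (hs1 : s < 1) (hmem : s ∉ presSet B (gW m)) :
    ENNReal.ofReal s ≤ dimH (Fm m Φ) := by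
  classical
  have hm1 : 1 ≤ m := by omega
  have hB0 : 0 < B := by linarith
  obtain ⟨α, hα0, hα1, hαg⟩ := exists_exponents m hm1 s hs0 hs1
  have hg0 := (gW_pos m hm1 s hs0 hs1.le).1
  have hgl := gW_lower m hm1 s hs0 hs1
  set g := gW m s with hgdef
  obtain ⟨N, hN, Wd, wd, M, wt, θ, hwd1, hwd2, hinj, hM2, hwM, hwt0, hwt, hθ0, hθB, hθ⟩ :=
    exists_words hB hs0 hmem (2 * m)
  -- a uniform lower bound for the exponents
  obtain ⟨κ, hκ0, hκ1, hκ⟩ : ∃ κ : ℝ, 0 < κ ∧ κ ≤ 1 ∧ ∀ t < m, κ ≤ α t := by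
    obtain ⟨t₀, ht₀, hmin⟩ := Finset.exists_min_image (Finset.range m) α ⟨0, by simp; omega⟩
    refine ⟨α t₀, hα0 _, ?_, fun t ht => hmin t (Finset.mem_range.2 ht)⟩
    rw [← hα1]
    exact Finset.single_le_sum (fun i _ => (hα0 i).le) ht₀
  obtain ⟨B₂, hB₂, hθB₂, hκB₂⟩ : ∃ B₂ > B, θ * B₂ ^ ((N : ℝ) * g) < 1 ∧ B₂ ^ (1 - κ) < B := by
    have c1 : ContinuousAt (fun x : ℝ => θ * x ^ ((N : ℝ) * g)) B :=
      continuousAt_const.mul (Real.continuousAt_rpow_const _ _ (Or.inl hB0.ne'))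
    have c2 : ContinuousAt (fun x : ℝ => x ^ (1 - κ)) B :=
      Real.continuousAt_rpow_const _ _ (Or.inl hB0.ne')
    have h2 : B ^ (1 - κ) < B := by
      conv_rhs => rw [← Real.rpow_one B]
      exact Real.rpow_lt_rpow_of_exponent_lt hB (by linarith)
    have e1 := (c1.eventually_lt_const hθB).filter_mono (nhdsWithin_le_nhds (s := Set.Ioi B))
    have e2 := (c2.eventually_lt_const h2).filter_mono (nhdsWithin_le_nhds (s := Set.Ioi B))
    obtain ⟨x, ⟨hx1, hx2⟩, hx⟩ := ((e1.and e2).and self_mem_nhdsWithin).exists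
    exact ⟨x, hx, hx1, hx2⟩
  have hB₂0 : 0 < B₂ := by linarith
  have hB₂1 : 1 < B₂ := by linarith
  obtain ⟨B₁, hB₁, hB₁B⟩ := exists_between hκB₂
  have hβ1 : 1 ≤ B₂ ^ (1 - κ) := Real.one_le_rpow hB₂1.le (by linarith)
  have hB₁0 : 0 < B₁ := by linarith
  have hexp : ∀ b : ℝ, 0 < b → ∀ n : ℕ, Real.exp (Real.log b * n) = b ^ n := by
    intro b hb n
    rw [← Real.rpow_natCast, Real.rpow_def_of_pos hb]
  -- positions are counted from `0`, whence the shift `Φ (n + 1)`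
  have hfreq : ∃ᶠ n : ℕ in atTop, Φ (n + 1) ≤ B₂ ^ (n + 1) :=
    (frequently_succ (hi _ (Real.log_lt_log hB0 hB₂))).mono fun n h => by
      rwa [hexp B₂ hB₂0] at h
  obtain ⟨r, -, hG⟩ := frequently_residue N (by omega) _ hfreq
  set R : ℕ → ℝ := fun J => Φ (r + J * N + 1) with hRdef
  have hR1 : ∀ J, 1 ≤ R J := fun J => (hΦ1 _).le
  have hR0 : ∀ J, 0 < R J := fun J => by linarith [hR1 J]
  set nn : ℕ → ℕ → ℕ := fun J i => ⌈R J ^ α i⌉₊ with hnndef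
  have hnn : ∀ J i, 1 ≤ nn J i := fun J i => Nat.one_le_ceil_iff.2 (Real.rpow_pos_of_pos (hR0 J) _)
  have hnnlo : ∀ J i, R J ^ α i ≤ nn J i := fun J i => (ceil_rpow_bounds _ _ (hR1 J) (hα0 i).le).1
  have hnnhi : ∀ J i, (nn J i : ℝ) ≤ 2 * R J ^ α i :=
    fun J i => (ceil_rpow_bounds _ _ (hR1 J) (hα0 i).le).2
  have hprodx : ∀ J i, i ≤ m → (∏ j ∈ Finset.range i, (nn J j : ℝ)) ^ (2 * s - 1) ≤
      2 ^ m * R J ^ ((2 * s - 1) * ∑ j ∈ Finset.range i, α j) :=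
    fun J i hi => prod_ceil_rpow (R J) (hR1 J) α hα0 m i hi _ (by linarith)
  have hprodpos : ∀ J i, 0 < ∏ j ∈ Finset.range i, (nn J j : ℝ) :=
    fun J i => Finset.prod_pos fun j _ => by exact_mod_cast hnn J j
  set c₀ : ℝ := 2 * 4 ^ N with hc₀
  have hc₀1 : 1 ≤ c₀ := by
    have : (1 : ℝ) ≤ 4 ^ N := one_le_pow₀ (by norm_num)
    linarith
  have hc₀s : c₀ ^ (2 * s) ≤ c₀ ^ 2 := by
    rw [← Real.rpow_two]; exact Real.rpow_le_rpow_of_exponent_le hc₀1 (by linarith)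
  have hq0 : (0 : ℝ) < (qq (fun _ => 2) r : ℝ) := by
    exact_mod_cast qq_pos (fun _ => by norm_num) r
  obtain ⟨e, spec, he0, hepos, heE, hspec, hesp, hereg, hfs⟩ := exists_energy N r
    ((qq (fun _ => 2) r : ℝ) ^ (2 * s)) θ (c₀ ^ 2 * 2 ^ m) g (2 * s - 1) B₂ (by positivity) hθ0
    (by positivity) hg0 hgl.le hB₂1 hθB₂ R hR1 _ hG (fun J h => h)
  obtain ⟨A, hA0, hA⟩ := exists_grid r N 1 (fun J i => if spec J ∧ i < m then nn J i else 1)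
  have hA1 : ∀ J, spec J → ∀ i < m, A (r + J * N + i) = nn J i := fun J hJ i him => by
    rw [hA J i (by omega), if_pos ⟨hJ, him⟩]
  have hA2 : ∀ J, spec J → ∀ i < N, m ≤ i → A (r + J * N + i) = 1 := fun J hJ i hi him => by
    rw [hA J i hi, if_neg (by omega)]
  have hA3 : ∀ J, ¬ spec J → ∀ i < N, A (r + J * N + i) = 1 := fun J hJ i hi => by
    rw [hA J i hi, if_neg (by tauto)]
  -- the common part of the mass estimates inside a special block
  have hcore : ∀ J i, i ≤ m → e J * (c₀ * ∏ j ∈ Finset.range i, (nn J j : ℝ)) ^ (2 * s) *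
      (∏ j ∈ Finset.range i, (nn J j : ℝ))⁻¹ ≤
      e J * (c₀ ^ 2 * (2 ^ m * R J ^ ((2 * s - 1) * ∑ j ∈ Finset.range i, α j))) := by
    intro J i him
    have hP := hprodpos J i
    have h1 := hprodx J i him
    rw [Real.rpow_sub hP, Real.rpow_one] at h1
    rw [Real.mul_rpow (by positivity) hP.le, mul_assoc, mul_assoc, ← div_eq_mul_inv]
    exact mul_le_mul_of_nonneg_left (mul_le_mul hc₀s h1 (by positivity) (by positivity))
      (hepos J).le
  have hblock := block_scheme m N r hm1 (by omega) spec nn hnn Wd wd hwd1 hwd2 hinj M hM2 hwM wt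
    hwt0 hwt A hA0 hA1 hA2 hA3 s hs0 hs1.le e _ (c₀ ^ 2 * 2 ^ m * 2) heE (by positivity) he0.ge
    (fun J hJ j hj => by
      rw [hereg J hJ, mul_assoc]
      exact mul_le_mul_of_nonneg_left (hθ j hj) (hepos J).le)
    (fun J hJ i hi => by
      have hegJ := (hspec J hJ).2
      have hRg : R J ^ (-g) * R J ^ g = 1 := by rw [← Real.rpow_add (hR0 J)]; simp
      rcases Nat.lt_or_ge i m with him | him
      · rw [hA1 J hJ i him, min_eq_left him.le]
        have h1 : (nn J i : ℝ) ^ s ≤ 2 * R J ^ (s * α i) := by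
          have hRp := Real.rpow_pos_of_pos (hR0 J) (α i)
          calc (nn J i : ℝ) ^ s ≤ (2 * R J ^ α i) ^ s :=
                Real.rpow_le_rpow (by positivity) (hnnhi J i) hs0.le
            _ = 2 ^ s * R J ^ (s * α i) := by
                rw [Real.mul_rpow (by norm_num) hRp.le, ← Real.rpow_mul (hR0 J).le, mul_comm s]
            _ ≤ 2 * R J ^ (s * α i) := by
                refine mul_le_mul_of_nonneg_right ?_ (Real.rpow_nonneg (hR0 J).le _)
                calc (2 : ℝ) ^ s ≤ 2 ^ (1 : ℝ) :=
                      Real.rpow_le_rpow_of_exponent_le (by norm_num) hs1.le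
                  _ = 2 := Real.rpow_one 2
        have h2 := hcore J i him.le
        have hR' := hR0 J
        have he' := hepos J
        calc _ ≤ e J * (c₀ ^ 2 * (2 ^ m * R J ^ ((2 * s - 1) * ∑ j ∈ Finset.range i, α j))) *
              (2 * R J ^ (s * α i)) := mul_le_mul h2 h1 (by positivity) (by positivity)
          _ = c₀ ^ 2 * 2 ^ m * 2 * (e J * (R J ^ ((2 * s - 1) * ∑ j ∈ Finset.range i, α j) *
              R J ^ (s * α i))) := by ring
          _ = c₀ ^ 2 * 2 ^ m * 2 * (e J * R J ^ g) := by rw [← Real.rpow_add hR', hαg i]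
          _ ≤ c₀ ^ 2 * 2 ^ m * 2 * (R J ^ (-g) * R J ^ g) := by
              refine mul_le_mul_of_nonneg_left ?_ (by positivity)
              exact mul_le_mul_of_nonneg_right hegJ (by positivity)
          _ = _ := by rw [hRg, mul_one]
      · rw [hA2 J hJ i hi him, min_eq_right him, Nat.cast_one, Real.one_rpow, mul_one]
        have h2 := hcore J m le_rfl
        rw [hα1, mul_one] at h2
        have hR' := hR0 J
        calc _ ≤ e J * (c₀ ^ 2 * (2 ^ m * R J ^ (2 * s - 1))) := h2
          _ ≤ R J ^ (-g) * (c₀ ^ 2 * (2 ^ m * R J ^ g)) := by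
              refine mul_le_mul hegJ ?_ (by positivity) (by positivity)
              refine mul_le_mul_of_nonneg_left (mul_le_mul_of_nonneg_left ?_ (by positivity))
                (by positivity)
              exact Real.rpow_le_rpow_of_exponent_le (hR1 J) hgl.le
          _ = c₀ ^ 2 * 2 ^ m * (R J ^ (-g) * R J ^ g) := by ring
          _ ≤ _ := by
              rw [hRg, mul_one]
              exact le_mul_of_one_le_right (by positivity) (by norm_num))
    (fun J hJ => by
      have h2 := hcore J m le_rfl
      rw [hα1, mul_one] at h2
      rw [hesp J hJ]
      exact h2.trans (le_of_eq (by ring)))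
  refine hblock.trans (dimH_mono ?_)
  rintro x ⟨hxI, hxlo, hxhi⟩
  refine ⟨⟨hxI.1.le, hxI.2.1⟩, hxI.2.2, ?_, ?_⟩
  · rw [frequently_atTop]
    intro a
    obtain ⟨J, hJ, hsJ⟩ := frequently_atTop.1 hfs a
    have hJN : J ≤ J * N := Nat.le_mul_of_pos_right _ (by omega)
    refine ⟨r + J * N + 1, by omega, ?_⟩
    have h1 := (prod_ceil_bounds (R J) (hR1 J) α hα0 m).1
    rw [hα1, Real.rpow_one] at h1
    refine h1.trans (Finset.prod_le_prod (fun _ _ => by positivity) fun i hi => ?_)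
    have h2 := hxlo J hsJ i (Finset.mem_range.1 hi)
    have h3 : cfA (r + J * N + 1 + i) x = dg x (r + J * N + i) := by
      rw [dg]; congr 1; omega
    rw [h3]; exact_mod_cast h2
  · have hwin : ∀ p, ((∏ i ∈ Finset.range (m - 1), A (p + i) : ℕ) : ℝ) ≤
        2 ^ m * (B₂ ^ (1 - κ)) ^ (p + m) := by
      intro p
      rcases window_bound m N r hm1 hN spec nn hnn A hA0 hA1 hA2 hA3 p with h |
        ⟨J, hJ, hJp, t, ht, h⟩
      · rw [h, Nat.cast_one]
        exact one_le_mul_of_one_le_of_one_le (one_le_pow₀ (by norm_num)) (one_le_pow₀ hβ1)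
      · have h1 := (prod_ceil_bounds (R J) (hR1 J) α hα0 m).2
        rw [hα1, Real.rpow_one] at h1
        have h2 : ((∏ i ∈ Finset.range (m - 1), A (p + i) : ℕ) : ℝ) * nn J t ≤ 2 ^ m * R J := by
          refine le_trans ?_ h1
          exact_mod_cast h
        have hRt : R J ^ κ ≤ nn J t :=
          (Real.rpow_le_rpow_of_exponent_le (hR1 J) (hκ t ht)).trans (hnnlo J t)
        have hR' := hR0 J
        have hRκ : 0 < R J ^ κ := by positivity
        have h3 : ((∏ i ∈ Finset.range (m - 1), A (p + i) : ℕ) : ℝ) ≤ 2 ^ m * R J ^ (1 - κ) := by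
          rw [Real.rpow_sub hR', Real.rpow_one, ← mul_div_assoc, le_div_iff₀ hRκ]
          exact (mul_le_mul_of_nonneg_left hRt (by positivity)).trans h2
        refine h3.trans (mul_le_mul_of_nonneg_left ?_ (by positivity))
        have h4 : R J ≤ B₂ ^ (p + m) :=
          (hspec J hJ).1.trans (pow_le_pow_right₀ hB₂1.le (by omega))
        calc R J ^ (1 - κ) ≤ (B₂ ^ (p + m)) ^ (1 - κ) :=
              Real.rpow_le_rpow hR'.le h4 (by linarith)
          _ = (B₂ ^ (1 - κ)) ^ (p + m) := by
              rw [← Real.rpow_natCast, ← Real.rpow_natCast, ← Real.rpow_mul hB₂0.le,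
                ← Real.rpow_mul hB₂0.le, mul_comm]
    have hev : ∀ᶠ p : ℕ in atTop,
        (M : ℝ) ^ (m - 1) * (2 ^ m * (B₂ ^ (1 - κ)) ^ (p + m)) < B₁ ^ (p + 1) := by
      have hlt : B₂ ^ (1 - κ) / B₁ < 1 := (div_lt_one hB₁0).2 hB₁
      have hlim := (tendsto_pow_atTop_nhds_zero_of_lt_one (by positivity) hlt).const_mul
        ((M : ℝ) ^ (m - 1) * (2 ^ m * (B₂ ^ (1 - κ)) ^ m))
      rw [mul_zero] at hlim
      refine (hlim.eventually_lt_const hB₁0).mono fun p hp => ?_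
      rw [div_pow, ← mul_div_assoc, div_lt_iff₀ (by positivity)] at hp
      calc _ = (M : ℝ) ^ (m - 1) * (2 ^ m * (B₂ ^ (1 - κ)) ^ m) * (B₂ ^ (1 - κ)) ^ p := by
            rw [pow_add]; ring
        _ < B₁ * B₁ ^ p := hp
        _ = _ := by rw [pow_succ]; ring
    have hΦlo : ∀ᶠ p : ℕ in atTop, B₁ ^ (p + 1) ≤ Φ (p + 1) :=
      (tendsto_add_atTop_nat 1).eventually ((lo _ (Real.log_lt_log hB₁0 hB₁B)).mono fun n h => by
        rwa [hexp B₁ hB₁0] at h)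
    have hfin : ∀ᶠ p : ℕ in atTop,
        ∏ k ∈ Finset.range (m - 1), (cfA (p + 1 + k) x : ℝ) < Φ (p + 1) := by
      filter_upwards [hev, hΦlo] with p h1 h2
      refine lt_of_le_of_lt ?_ (h1.trans_le h2)
      calc ∏ k ∈ Finset.range (m - 1), (cfA (p + 1 + k) x : ℝ)
          ≤ ∏ k ∈ Finset.range (m - 1), ((M : ℝ) * (A (p + k) : ℝ)) := by
            refine Finset.prod_le_prod (fun _ _ => by positivity) fun k _ => ?_
            have h3 : cfA (p + 1 + k) x = dg x (p + k) := by
              rw [dg]; congr 1; omega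
            rw [h3]; exact_mod_cast hxhi (p + k)
        _ = (M : ℝ) ^ (m - 1) * ((∏ i ∈ Finset.range (m - 1), A (p + i) : ℕ) : ℝ) := by
            rw [Finset.prod_mul_distrib]; simp
        _ ≤ _ := mul_le_mul_of_nonneg_left (hwin p) (by positivity)
    rw [← Filter.map_add_atTop_eq_nat 1]
    exact hfin

lemma lower_B (m : ℕ) (hm : 2 ≤ m) (Φ : ℕ → ℝ) (hΦ1 : ∀ n, 1 < Φ n) (B : ℝ) (hB : 1 < B)
    (lo : ∀ l < Real.log B, ∀ᶠ n : ℕ in atTop, Real.exp (l * n) ≤ Φ n)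
    (hi : ∀ l > Real.log B, ∃ᶠ n : ℕ in atTop, Φ n ≤ Real.exp (l * n)) :
    ENNReal.ofReal (presInf B (gW m)) ≤ dimH (Fm m Φ) := by
  refine le_of_forall_lt fun c hc => ?_
  obtain ⟨s, hcs, hs⟩ := ENNReal.lt_iff_exists_nnreal_btwn.1 hc
  have hs0 : 0 < (s : ℝ) := by exact_mod_cast (zero_le.trans_lt hcs)
  have hsP : (s : ℝ) < presInf B (gW m) := by
    rwa [← ENNReal.ofReal_coe_nnreal, ENNReal.ofReal_lt_ofReal_iff_of_nonneg hs0.le] at hs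
  have hP1 : presInf B (gW m) ≤ 1 :=
    csInf_le (presSet_bdd B _) (one_mem_presSet hB (gW_one m (by omega)))
  have h := lower_B_core m hm Φ hΦ1 B hB lo hi s hs0 (hsP.trans_le hP1)
    (notMem_of_lt_csInf hsP (presSet_bdd B _))
  rw [ENNReal.ofReal_coe_nnreal] at h
  exact hcs.trans_le h

/-! ### Conclusion -/

lemma eventually_of_lt_liminf_div {v : ℕ → ℝ} {l : ℝ}
    (h : (l : EReal) < liminf (fun n : ℕ => ((v n / n : ℝ) : EReal)) atTop) :
    ∀ᶠ n : ℕ in atTop, l * n ≤ v n := by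
  filter_upwards [eventually_lt_of_lt_liminf h, eventually_gt_atTop 0] with n h1 h2
  have h3 : l < v n / n := by exact_mod_cast h1
  have hn : (0 : ℝ) < n := by exact_mod_cast h2
  exact ((lt_div_iff₀ hn).1 h3).le

lemma frequently_of_liminf_div_lt {v : ℕ → ℝ} {l : ℝ}
    (h : liminf (fun n : ℕ => ((v n / n : ℝ) : EReal)) atTop < (l : EReal)) :
    ∃ᶠ n : ℕ in atTop, v n ≤ l * n := by
  refine ((frequently_lt_of_liminf_lt (by isBoundedDefault) h).and_eventually
    (eventually_gt_atTop 0)).mono ?_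
  rintro n ⟨h1, h2⟩
  have h3 : v n / n < l := by exact_mod_cast h1
  have hn : (0 : ℝ) < n := by exact_mod_cast h2
  exact ((div_lt_iff₀ hn).1 h3).le

lemma exp_log_mul {β : ℝ} (hβ : 0 < β) (n : ℕ) : Real.exp (Real.log β * n) = β ^ n := by
  rw [← Real.rpow_natCast, Real.rpow_def_of_pos hβ]

lemma eventually_of_lt_b (Φ : ℕ → ℝ) (b : ℝ≥0∞) (hΦ1 : ∀ n, 1 < Φ n)
    (hb : ENNReal.log b =
    liminf (fun n : ℕ => ((Real.log (Real.log (Φ n)) / n : ℝ) : EReal)) atTop)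
    {β : ℝ} (hβ : 0 < β) (h : ENNReal.ofReal β < b) :
    ∀ᶠ n : ℕ in atTop, Real.exp (β ^ n) ≤ Φ n := by
  have h1 := ENNReal.log_lt_log h
  rw [hb, ENNReal.log_ofReal_of_pos hβ] at h1
  refine (eventually_of_lt_liminf_div h1).mono fun n hn => ?_
  have h2 : 0 < Real.log (Φ n) := Real.log_pos (hΦ1 n)
  rw [Real.le_log_iff_exp_le h2, exp_log_mul hβ,
    Real.le_log_iff_exp_le (by linarith [hΦ1 n])] at hn
  exact hn

lemma frequently_of_b_lt (Φ : ℕ → ℝ) (b : ℝ≥0∞) (hΦ1 : ∀ n, 1 < Φ n)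
    (hb : ENNReal.log b =
    liminf (fun n : ℕ => ((Real.log (Real.log (Φ n)) / n : ℝ) : EReal)) atTop)
    {β : ℝ} (hβ : 0 < β) (h : b < ENNReal.ofReal β) :
    ∃ᶠ n : ℕ in atTop, Real.log (Φ n) ≤ β ^ n := by
  have h1 := ENNReal.log_lt_log h
  rw [hb, ENNReal.log_ofReal_of_pos hβ] at h1
  refine (frequently_of_liminf_div_lt h1).mono fun n hn => ?_
  have h2 : 0 < Real.log (Φ n) := Real.log_pos (hΦ1 n)
  rwa [Real.log_le_iff_le_exp h2, exp_log_mul hβ] at hn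

lemma one_le_b (Φ : ℕ → ℝ) (b : ℝ≥0∞) (hΦ1 : ∀ n, 1 < Φ n)
    (hb : ENNReal.log b =
    liminf (fun n : ℕ => ((Real.log (Real.log (Φ n)) / n : ℝ) : EReal)) atTop)
    (hlin : ∀ l : ℝ, ∀ᶠ n : ℕ in atTop, Real.exp (l * n) ≤ Φ n) : 1 ≤ b := by
  by_contra hcon
  rw [not_le] at hcon
  obtain ⟨β, h1, h2⟩ := ENNReal.lt_iff_exists_nnreal_btwn.1 hcon
  have hβ0 : 0 < (β : ℝ) := by exact_mod_cast (zero_le.trans_lt h1)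
  have hβ1 : (β : ℝ) < 1 := by exact_mod_cast h2
  rw [← ENNReal.ofReal_coe_nnreal] at h1
  obtain ⟨n, hn, h3, h4⟩ := ((frequently_of_b_lt Φ b hΦ1 hb hβ0 h1).and_eventually
    ((hlin 1).and (eventually_gt_atTop 1))).exists
  have h5 : (n : ℝ) ≤ Real.log (Φ n) := by
    rw [Real.le_log_iff_exp_le (by linarith [hΦ1 n])]; simpa using h3
  have h6 : (β : ℝ) ^ n ≤ 1 := pow_le_one₀ hβ0.le hβ1.le
  have h7 : (1 : ℝ) < n := by exact_mod_cast h4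
  linarith

lemma upper_inf (Φ : ℕ → ℝ) (b : ℝ≥0∞) (m : ℕ) (hΦ1 : ∀ n, 1 < Φ n)
    (hb : ENNReal.log b =
    liminf (fun n : ℕ => ((Real.log (Real.log (Φ n)) / n : ℝ) : EReal)) atTop)
    (hlin : ∀ l : ℝ, ∀ᶠ n : ℕ in atTop, Real.exp (l * n) ≤ Φ n) :
    dimH (Fm m Φ) ≤ (1 + b)⁻¹ := by
  refine le_of_forall_gt_imp_ge_of_dense fun c hc => ?_
  obtain ⟨t, ht, htc⟩ := ENNReal.lt_iff_exists_nnreal_btwn.1 hc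
  refine le_trans ?_ htc.le
  have ht0 : 0 < (t : ℝ) := by exact_mod_cast (zero_le.trans_lt ht)
  rw [← ENNReal.ofReal_coe_nnreal]
  rcases lt_or_ge (1 / 2 : ℝ) t with h | h
  · exact upper_inf_one m Φ hlin t h
  rw [ENNReal.inv_lt_iff_inv_lt] at ht
  obtain ⟨y, hy1, hy2⟩ := ENNReal.lt_iff_exists_nnreal_btwn.1 ht
  have hty : 1 / (t : ℝ) < y := by
    have h0 : t ≠ 0 := by rintro rfl; simp at ht0
    rw [← ENNReal.coe_inv h0] at hy1
    rw [one_div]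
    exact_mod_cast hy1
  have ht2 : 2 ≤ 1 / (t : ℝ) := by
    rw [le_div_iff₀ ht0]; linarith
  have hyb : ENNReal.ofReal ((y : ℝ) - 1) < b := by
    rw [← ENNReal.add_lt_add_iff_left (a := 1) ENNReal.one_ne_top]
    refine lt_of_eq_of_lt ?_ hy2
    rw [← ENNReal.ofReal_one, ← ENNReal.ofReal_add (by norm_num) (by linarith),
      add_sub_cancel, ENNReal.ofReal_coe_nnreal]
  obtain ⟨γ, hγ1, hγ2⟩ := exists_between (show 1 / (t : ℝ) - 2 < y - 1 - 1 by linarith)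
  refine upper_inf_two m Φ γ (y - 1) (by linarith) (by linarith)
    (eventually_of_lt_b Φ b hΦ1 hb (by linarith) hyb) t ?_
  rw [div_lt_comm₀ (by linarith) ht0]
  linarith

lemma lower_inf' (Φ : ℕ → ℝ) (b : ℝ≥0∞) (m : ℕ) (hm : 1 ≤ m)
    (hΦ1 : ∀ n, 1 < Φ n) (hb : ENNReal.log b =
    liminf (fun n : ℕ => ((Real.log (Real.log (Φ n)) / n : ℝ) : EReal)) atTop)
    (hlin : ∀ l : ℝ, ∀ᶠ n : ℕ in atTop, Real.exp (l * n) ≤ Φ n) :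
    (1 + b)⁻¹ ≤ dimH (Fm m Φ) := by
  refine le_of_forall_lt fun c hc => ?_
  obtain ⟨s, hcs, hs⟩ := ENNReal.lt_iff_exists_nnreal_btwn.1 hc
  have hs0 : 0 < (s : ℝ) := by exact_mod_cast (zero_le.trans_lt hcs)
  refine hcs.trans_le ?_
  rw [← ENNReal.ofReal_coe_nnreal]
  have hs0' : s ≠ 0 := by rintro rfl; simp at hs0
  rw [ENNReal.lt_inv_iff_lt_inv, ← ENNReal.coe_inv hs0'] at hs
  obtain ⟨y, hy1, hy2⟩ := ENNReal.lt_iff_exists_nnreal_btwn.1 hs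
  have hys : (y : ℝ) < (s : ℝ)⁻¹ := by exact_mod_cast hy2
  have hb1 := one_le_b Φ b hΦ1 hb hlin
  have hy : (2 : ℝ) < y := by
    have h1 : (2 : ℝ≥0∞) < y := by
      refine lt_of_le_of_lt ?_ hy1
      rw [← one_add_one_eq_two]
      gcongr
    exact_mod_cast h1
  obtain ⟨z, hz1, hz2⟩ := exists_between hys
  have hyb : b < ENNReal.ofReal ((y : ℝ) - 1) := by
    rw [← ENNReal.add_lt_add_iff_left (a := 1) ENNReal.one_ne_top]
    refine hy1.trans_eq ?_
    rw [← ENNReal.ofReal_one, ← ENNReal.ofReal_add (by norm_num) (by linarith),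
      add_sub_cancel, ENNReal.ofReal_coe_nnreal]
  refine lower_inf m hm Φ hΦ1 hlin (z - 1) (by linarith) (fun ε hε => ?_) s hs0 ?_
  · have hlim := tendsto_pow_atTop_nhds_zero_of_lt_one (r := ((y : ℝ) - 1) / (z - 1))
      (div_nonneg (by linarith) (by linarith)) ((div_lt_one (by linarith)).2 (by linarith))
    refine ((frequently_of_b_lt Φ b hΦ1 hb (by linarith) hyb).and_eventually
      (hlim.eventually_lt_const hε)).mono ?_
    rintro n ⟨h1, h2⟩
    rw [div_pow, div_lt_iff₀ (pow_pos (by linarith) n)] at h2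
    exact h1.trans_lt h2
  · rw [add_sub_cancel]
    calc (s : ℝ) * z < s * (s : ℝ)⁻¹ := mul_lt_mul_of_pos_left hz2 hs0
      _ = 1 := mul_inv_cancel₀ hs0.ne'

theorem dimH_Fm (m : ℕ) (hm : 2 ≤ m) (Φ : ℕ → ℝ) (hΦ1 : ∀ n, 1 < Φ n)
    (hΦ : Tendsto Φ atTop atTop) :
    (∀ B : ℝ, 1 < B →
      (Real.log B : EReal) = liminf (fun n : ℕ => ((Real.log (Φ n) / n : ℝ) : EReal)) atTop →
      dimH (Fm m Φ) = ENNReal.ofReal (presInf B (gW m))) ∧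
    (liminf (fun n : ℕ => ((Real.log (Φ n) / n : ℝ) : EReal)) atTop = ⊤ →
      ∀ b : ℝ≥0∞,
        ENNReal.log b =
          liminf (fun n : ℕ => ((Real.log (Real.log (Φ n)) / n : ℝ) : EReal)) atTop →
        dimH (Fm m Φ) = (1 + b)⁻¹) := by
  have hexp : ∀ (l : ℝ) (n : ℕ), l * n ≤ Real.log (Φ n) ↔ Real.exp (l * n) ≤ Φ n := fun l n =>
    Real.le_log_iff_exp_le (by linarith [hΦ1 n])
  have hexp' : ∀ (l : ℝ) (n : ℕ), Real.log (Φ n) ≤ l * n ↔ Φ n ≤ Real.exp (l * n) := fun l n =>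
    Real.log_le_iff_le_exp (by linarith [hΦ1 n])
  constructor
  · intro B hB h
    have lo : ∀ l < Real.log B, ∀ᶠ n : ℕ in atTop, Real.exp (l * n) ≤ Φ n := fun l hl =>
      (eventually_of_lt_liminf_div (h ▸ EReal.coe_lt_coe_iff.2 hl)).mono fun n => (hexp l n).1
    have hi : ∀ l > Real.log B, ∃ᶠ n : ℕ in atTop, Φ n ≤ Real.exp (l * n) := fun l hl =>
      (frequently_of_liminf_div_lt (h ▸ EReal.coe_lt_coe_iff.2 hl)).mono fun n => (hexp' l n).1
    exact le_antisymm (upper_B m (by omega) Φ B hB lo) (lower_B m hm Φ hΦ1 B hB lo hi)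
  · intro h b hb
    have hlin : ∀ l : ℝ, ∀ᶠ n : ℕ in atTop, Real.exp (l * n) ≤ Φ n := fun l =>
      (eventually_of_lt_liminf_div (h ▸ EReal.coe_lt_top l)).mono fun n => (hexp l n).1
    exact le_antisymm (upper_inf Φ b m hΦ1 hb hlin) (lower_inf' Φ b m (by omega) hΦ1 hb hlin)
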